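/- Fix k ≥ 4, 0 < μ < 1/10 and 0 < (8k+7)ν < μ. There exist ε₀ > 0 and a constant C > 0, independent of ε, such that for every ε ∈ (0,ε₀) and every global C^∞ solution u of the Cauchy problem: |u(t,x)|_{k+1} ≤ Cε⟨t+|x|⟩^{−1/2+μ}, |∂u(t,x)| ≤ Cε⟨t+|x|⟩^{−1/2}⟨t−|x|⟩^{μ−1}, and |∂u(t,x)|_k ≤ Cε⟨t+|x|⟩^{−1/2+ν}⟨t−|x|⟩^{μ−1} for all (t,x) ∈ [0,∞)×ℝ², and ‖∂u(t)‖_k ≤ Cε(1+t)^{μ−ν} for all t ≥ 0. -/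

import Mathlib

/-!
The proof is a bootstrap on the decay bound
`|∂Γ^w u| ≤ M ε (1 + t)^(-1/2) J^(μ-1) (1 + t)^(η|w|)`, where `w` runs over words of at most `P.k`
vector fields, `J` is comparable to the distance to the light cone, and the loss `η` per vector field
is so small that all losses together, `δ = (P.k + 7) η`, satisfy `4 δ ≤ μ`. By finite propagation
speed (`fsp`) everything is supported in `|x| < t + R`, and `exists_data` shows that all
`Γ^w u` are `O(ε)` at time `0`.

*Energy.* Under the bootstrap hypotheses the nonlinearity is bounded by `(M ε)² (1 + t)⁻¹` times
first derivatives of words. Weighting the energy of `Γ^w u` by `(1 + t)^(-2η(|w| + 1))` produces the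
damping `-2η (1 + t)⁻¹`, which absorbs it for small `ε`; the weighted energy is therefore bounded by
its initial value (`step1`).

*Decay with loss.* The multiplier `2S + 1` controls the growth of the `L²` norm of `Γ^w u`; the
factor `(2S + 1)Γ^w u` it puts in front of the nonlinearity is handled by the Hardy inequality `hardy`
(`step2a`, `step2`). Differentiating the energy with weight `q`, the distance to the cone, leaves only
tangential derivatives, which the `L²` norm of `Γ Γ^w u` controls with a gain of `(1 + t)⁻¹`
(`good_e2`, `step3`). A Klainerman–Sobolev inequality adapted to `q` (`KS_ineq`) yields
`q |∂Γ^w u| ≲ ε (1 + t)^(δ - 1/2)`, and integrating inwards from the cone bounds `Γ^w u` itself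
(`step4a`, `step4b`). Where `q` is comparable to `1 + t` this already improves the bootstrap
hypothesis.

*Sharp decay near the cone.* Along an outgoing ray, `√r` times the incoming null derivative, with a
lower order correction (`Ph`), satisfies an ordinary differential equation (`ray_deriv`) whose linear
error is integrable. For `w = []` the cubic term is, up to an integrable error,
`-½ (∂ₜ u_b)²` times the unknown, where `u_b` is the other component: a damping of favourable sign, so
no loss occurs. For `|w| = j ≥ 1` the term is only estimated; it is at most `(M ε)³ (1 + t)^(jη - 1)`,
which integrates to the admissible growth `(1 + t)^(jη)`, at the price of a constant `1 / η`
(`phi_bound`, `step5`). The resulting constant multiplies `ε + (M ε)³ ≤ 2 ε`, so it beats `M ε` once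
`M` is large and `ε` small, and a continuity argument closes the bootstrap (`cont_arg`,
`boot_global`).

The estimates of the theorem are recovered in `estimates`, with `P.k = k + 1` and `η = ν / (k + 8)`, so that
`δ = ν`; `GamMulti_eq` and `W_D` pass between multi-indices and words, with `∂` moved to the left.
-/

open Real MeasureTheory Filter Topology

noncomputable section

/-- Partial derivative in `t`. -/
def pt (u : ℝ → ℝ → ℝ → ℝ) : ℝ → ℝ → ℝ → ℝ :=
  fun t x1 x2 => deriv (fun s => u s x1 x2) t

/-- Partial derivative in `x₁`. -/
def p1 (u : ℝ → ℝ → ℝ → ℝ) : ℝ → ℝ → ℝ → ℝ :=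
  fun t x1 x2 => deriv (fun y => u t y x2) x1

/-- Partial derivative in `x₂`. -/
def p2 (u : ℝ → ℝ → ℝ → ℝ) : ℝ → ℝ → ℝ → ℝ :=
  fun t x1 x2 => deriv (fun y => u t x1 y) x2

/-- The d'Alembertian `□ = ∂ₜ² − ∂₁² − ∂₂²`. -/
def dAlembert (u : ℝ → ℝ → ℝ → ℝ) : ℝ → ℝ → ℝ → ℝ :=
  fun t x1 x2 => pt (pt u) t x1 x2 - p1 (p1 u) t x1 x2 - p2 (p2 u) t x1 x2

/-- `u : ℝ×ℝ² → ℝ` (curried) is C^∞. -/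
def Smooth3 (u : ℝ → ℝ → ℝ → ℝ) : Prop :=
  ContDiff ℝ (⊤ : ℕ∞) (fun p : ℝ × ℝ × ℝ => u p.1 p.2.1 p.2.2)

/-- Compactly supported C^∞ function on ℝ². -/
def SmoothCompact2 (f : ℝ → ℝ → ℝ) : Prop :=
  ContDiff ℝ (⊤ : ℕ∞) (fun p : ℝ × ℝ => f p.1 p.2) ∧
    HasCompactSupport (fun p : ℝ × ℝ => f p.1 p.2)

/-- Global C^∞ solution of the Cauchy problem
`□u₁ = −(∂ₜu₂)²∂ₜu₁`, `□u₂ = −(∂ₜu₁)²∂ₜu₂` with data `(εf_j, εg_j)`. -/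
structure IsSolution (ε : ℝ) (f1 f2 g1 g2 : ℝ → ℝ → ℝ)
    (u1 u2 : ℝ → ℝ → ℝ → ℝ) : Prop where
  smooth1 : Smooth3 u1
  smooth2 : Smooth3 u2
  pde1 : ∀ t x1 x2 : ℝ, 0 < t →
    dAlembert u1 t x1 x2 = -(pt u2 t x1 x2) ^ 2 * pt u1 t x1 x2
  pde2 : ∀ t x1 x2 : ℝ, 0 < t →
    dAlembert u2 t x1 x2 = -(pt u1 t x1 x2) ^ 2 * pt u2 t x1 x2
  init1 : ∀ x1 x2 : ℝ, u1 0 x1 x2 = ε * f1 x1 x2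
  init2 : ∀ x1 x2 : ℝ, u2 0 x1 x2 = ε * f2 x1 x2
  initd1 : ∀ x1 x2 : ℝ, pt u1 0 x1 x2 = ε * g1 x1 x2
  initd2 : ∀ x1 x2 : ℝ, pt u2 0 x1 x2 = ε * g2 x1 x2

/-- `‖u(t)‖_E²  = ½∫ ((∂ₜu)² + (∂₁u)² + (∂₂u)²) dx`. -/
def energySq (u : ℝ → ℝ → ℝ → ℝ) (t : ℝ) : ℝ :=
  (1 / 2) * ∫ x : ℝ × ℝ,
    ((pt u t x.1 x.2) ^ 2 + (p1 u t x.1 x.2) ^ 2 + (p2 u t x.1 x.2) ^ 2)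

/-- The energy norm `‖u(t)‖_E`. -/
def energyNorm (u : ℝ → ℝ → ℝ → ℝ) (t : ℝ) : ℝ :=
  Real.sqrt (energySq u t)

/-- `|x|` in coordinates. -/
def radius (x1 x2 : ℝ) : ℝ := Real.sqrt (x1 ^ 2 + x2 ^ 2)

/-- The Japanese bracket `⟨z⟩ = (1+z²)^{1/2}`. -/
def jb (z : ℝ) : ℝ := Real.sqrt (1 + z ^ 2)

/-- `U(t,x) = D(|x|^{1/2}u(t,x))` where `D = ½(∂_r − ∂ₜ)`. -/
def Uop (u : ℝ → ℝ → ℝ → ℝ) : ℝ → ℝ → ℝ → ℝ :=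
  fun t x1 x2 =>
    (1 / 2) * ((x1 / radius x1 x2) *
        p1 (fun s y1 y2 => radius y1 y2 ^ ((1 : ℝ) / 2) * u s y1 y2) t x1 x2
      + (x2 / radius x1 x2) *
        p2 (fun s y1 y2 => radius y1 y2 ^ ((1 : ℝ) / 2) * u s y1 y2) t x1 x2
      - pt (fun s y1 y2 => radius y1 y2 ^ ((1 : ℝ) / 2) * u s y1 y2) t x1 x2)

/-- `V(t;σ,ω) = U(t,(t+σ)ω)`. -/
def Vop (u : ℝ → ℝ → ℝ → ℝ) (t σ ω1 ω2 : ℝ) : ℝ :=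
  Uop u t ((t + σ) * ω1) ((t + σ) * ω2)

/-- The rotation vector field `Ω = x₁∂₂ − x₂∂₁`. -/
def rot (u : ℝ → ℝ → ℝ → ℝ) : ℝ → ℝ → ℝ → ℝ :=
  fun t x1 x2 => x1 * p2 u t x1 x2 - x2 * p1 u t x1 x2

/-- `H` for component `a` (the other component being `b`):
`H_a = ½(|x|^{1/2}(∂ₜu_b)²(∂ₜu_a) + t⁻¹U_b²U_a) − (8|x|^{3/2})⁻¹(4Ω²+1)u_a`. -/
def Hfun (ua ub : ℝ → ℝ → ℝ → ℝ) (t x1 x2 : ℝ) : ℝ :=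
  (1 / 2) * (radius x1 x2 ^ ((1 : ℝ) / 2) * (pt ub t x1 x2) ^ 2 * pt ua t x1 x2
      + (1 / t) * (Uop ub t x1 x2) ^ 2 * Uop ua t x1 x2)
    - (1 / (8 * radius x1 x2 ^ ((3 : ℝ) / 2))) *
        (4 * rot (rot ua) t x1 x2 + ua t x1 x2)

/-- `K_a(t;σ,ω) = H_a(t,(t+σ)ω)`. -/
def Kfun (ua ub : ℝ → ℝ → ℝ → ℝ) (t σ ω1 ω2 : ℝ) : ℝ :=
  Hfun ua ub t ((t + σ) * ω1) ((t + σ) * ω2)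

/-- `ρ = V₁K₁ − V₂K₂`. -/
def rhoFun (u1 u2 : ℝ → ℝ → ℝ → ℝ) (t σ ω1 ω2 : ℝ) : ℝ :=
  Vop u1 t σ ω1 ω2 * Kfun u1 u2 t σ ω1 ω2 -
    Vop u2 t σ ω1 ω2 * Kfun u2 u1 t σ ω1 ω2

/-- The Radon transform: line integral of `φ` over `{y : y·ω = s}`. -/
def Rline (φ : ℝ → ℝ → ℝ) (s ω1 ω2 : ℝ) : ℝ :=
  ∫ τ : ℝ, φ (s * ω1 - τ * ω2) (s * ω2 + τ * ω1)

/-- `R₂[φ](σ,ω) = (2√2π)⁻¹ ∫_σ^∞ R[φ](s,ω)(s−σ)^{−1/2} ds`. -/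
def R2 (φ : ℝ → ℝ → ℝ) (σ ω1 ω2 : ℝ) : ℝ :=
  (1 / (2 * Real.sqrt 2 * Real.pi)) *
    ∫ s in Set.Ioi σ, Rline φ s ω1 ω2 / Real.sqrt (s - σ)

/-- The Friedlander radiation field `F₀[φ,ψ] = −∂_σR₂[φ] + R₂[ψ]`. -/
def F0 (φ ψ : ℝ → ℝ → ℝ) (σ ω1 ω2 : ℝ) : ℝ :=
  -deriv (fun σ' => R2 φ σ' ω1 ω2) σ + R2 ψ σ ω1 ω2

/-- `∂_σF₀[φ,ψ]`. -/
def dF0 (φ ψ : ℝ → ℝ → ℝ) (σ ω1 ω2 : ℝ) : ℝ :=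
  deriv (fun σ' => F0 φ ψ σ' ω1 ω2) σ

/-- The vector fields `Γ = (S, L₁, L₂, Ω, ∂ₜ, ∂₁, ∂₂)`. -/
def Gam (i : Fin 7) (u : ℝ → ℝ → ℝ → ℝ) : ℝ → ℝ → ℝ → ℝ :=
  match i with
  | 0 => fun t x1 x2 => t * pt u t x1 x2 + x1 * p1 u t x1 x2 + x2 * p2 u t x1 x2
  | 1 => fun t x1 x2 => t * p1 u t x1 x2 + x1 * pt u t x1 x2
  | 2 => fun t x1 x2 => t * p2 u t x1 x2 + x2 * pt u t x1 x2
  | 3 => rot u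
  | 4 => pt u
  | 5 => p1 u
  | 6 => p2 u

/-- `Γ^α = Γ₀^{α₀}⋯Γ₆^{α₆}`. -/
def GamMulti (α : Fin 7 → ℕ) (u : ℝ → ℝ → ℝ → ℝ) : ℝ → ℝ → ℝ → ℝ :=
  (Gam 0)^[α 0] ((Gam 1)^[α 1] ((Gam 2)^[α 2] ((Gam 3)^[α 3]
    ((Gam 4)^[α 4] ((Gam 5)^[α 5] ((Gam 6)^[α 6] u))))))

/-- Pointwise norm `|φ(t,x)|_s = Σ_{|α|≤s}|Γ^αφ(t,x)|`, for a (finite) family of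
components, `|Γ^αφ|` being the Euclidean norm of the vector of components. -/
def ptwiseNorm (s : ℕ) (us : List (ℝ → ℝ → ℝ → ℝ)) (t x1 x2 : ℝ) : ℝ :=
  ∑ α : Fin 7 → Fin (s + 1),
    if (∑ i, (α i : ℕ)) ≤ s then
      Real.sqrt ((us.map fun u => (GamMulti (fun i => (α i : ℕ)) u t x1 x2) ^ 2).sum)
    else 0

/-- `‖φ(t)‖_s = Σ_{|α|≤s}‖Γ^αφ(t,·)‖_{L²(ℝ²)}`. -/
def sobNorm (s : ℕ) (us : List (ℝ → ℝ → ℝ → ℝ)) (t : ℝ) : ℝ :=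
  ∑ α : Fin 7 → Fin (s + 1),
    if (∑ i, (α i : ℕ)) ≤ s then
      Real.sqrt (∫ x : ℝ × ℝ,
        (us.map fun u => (GamMulti (fun i => (α i : ℕ)) u t x.1 x.2) ^ 2).sum)
    else 0

/-- The components of `∂u = (∂ₜu₁,∂₁u₁,∂₂u₁,∂ₜu₂,∂₁u₂,∂₂u₂)`. -/
def dList (u1 u2 : ℝ → ℝ → ℝ → ℝ) : List (ℝ → ℝ → ℝ → ℝ) :=
  [pt u1, p1 u1, p2 u1, pt u2, p1 u2, p2 u2]

/-- Smooth solution of the free wave equation with data `(φ0,φ1)`. -/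
def IsFreeSolution (φ0 φ1 : ℝ → ℝ → ℝ) (φ : ℝ → ℝ → ℝ → ℝ) : Prop :=
  Smooth3 φ ∧ (∀ t x1 x2 : ℝ, 0 < t → dAlembert φ t x1 x2 = 0) ∧
    (∀ x1 x2 : ℝ, φ 0 x1 x2 = φ0 x1 x2) ∧
    (∀ x1 x2 : ℝ, pt φ 0 x1 x2 = φ1 x1 x2)

/-- Mixed space-time partial `∂^α = ∂ₜ^{α₀}∂₁^{α₁}∂₂^{α₂}`. -/
def dmix (α : Fin 3 → ℕ) (u : ℝ → ℝ → ℝ → ℝ) : ℝ → ℝ → ℝ → ℝ :=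
  pt^[α 0] (p1^[α 1] (p2^[α 2] u))

namespace Ap
set_option linter.unusedVariables false

/-! ### The algebra of smooth functions and its derivations -/

/-- The `ℝ`-algebra of smooth functions on `ℝ × ℝ²`, in the curried form used for solutions.
Bundling smoothness makes `∂ₜ, ∂₁, ∂₂` and the vector fields honest derivations. -/
def SmoothAlg : Subalgebra ℝ (ℝ → ℝ → ℝ → ℝ) where
  carrier := {u | Smooth3 u}
  mul_mem' := fun {a b} ha hb => by
    have ha' : ContDiff ℝ (⊤ : ℕ∞) (fun p : ℝ × ℝ × ℝ => a p.1 p.2.1 p.2.2) := ha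
    have hb' : ContDiff ℝ (⊤ : ℕ∞) (fun p : ℝ × ℝ × ℝ => b p.1 p.2.1 p.2.2) := hb
    exact ha'.mul hb'
  add_mem' := fun {a b} ha hb => by
    have ha' : ContDiff ℝ (⊤ : ℕ∞) (fun p : ℝ × ℝ × ℝ => a p.1 p.2.1 p.2.2) := ha
    have hb' : ContDiff ℝ (⊤ : ℕ∞) (fun p : ℝ × ℝ × ℝ => b p.1 p.2.1 p.2.2) := hb
    exact ha'.add hb'
  algebraMap_mem' := fun r => by
    change ContDiff ℝ (⊤ : ℕ∞) (fun _ : ℝ × ℝ × ℝ => r)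
    exact contDiff_const

/-- A smooth function on `ℝ × ℝ²`. -/
abbrev Sm := ↥SmoothAlg

-- Shortcut instances, which keep instance search on the subalgebra cheap.
instance : CommRing Sm := inferInstance
instance : CommSemiring Sm := inferInstance
instance : Ring Sm := inferInstance
instance : AddCommGroup Sm := inferInstance
instance : AddCommMonoid Sm := inferInstance
instance : AddMonoid Sm := inferInstance
instance : Monoid Sm := inferInstance
instance : Semiring Sm := inferInstance
instance : NonUnitalNonAssocSemiring Sm := inferInstance
instance : Add Sm := inferInstance
instance : Mul Sm := inferInstance
instance : Sub Sm := inferInstance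
instance : Neg Sm := inferInstance
instance : Zero Sm := inferInstance
instance : One Sm := inferInstance
instance : Algebra ℝ Sm := inferInstance
instance : Module ℝ Sm := inferInstance
instance : SMul ℝ Sm := inferInstance
instance : Module Sm Sm := inferInstance
instance : SMul Sm Sm := inferInstance
instance : Pow Sm ℕ := inferInstance

instance : CoeFun Sm (fun _ => ℝ → ℝ → ℝ → ℝ) := ⟨fun φ => φ.1⟩

theorem Sm.cd (φ : Sm) : ContDiff ℝ (⊤ : ℕ∞) (fun p : ℝ × ℝ × ℝ => φ p.1 p.2.1 p.2.2) := φ.2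

theorem Sm.cont (φ : Sm) : Continuous (fun p : ℝ × ℝ × ℝ => φ p.1 p.2.1 p.2.2) :=
  φ.cd.continuous

@[simp] theorem Sm.add_ap (φ ψ : Sm) (t x y : ℝ) : (φ + ψ) t x y = φ t x y + ψ t x y := rfl
@[simp] theorem Sm.sub_ap (φ ψ : Sm) (t x y : ℝ) : (φ - ψ) t x y = φ t x y - ψ t x y := rfl
@[simp] theorem Sm.mul_ap (φ ψ : Sm) (t x y : ℝ) : (φ * ψ) t x y = φ t x y * ψ t x y := rfl
@[simp] theorem Sm.neg_ap (φ : Sm) (t x y : ℝ) : (-φ) t x y = -φ t x y := rfl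
@[simp] theorem Sm.pow_ap (φ : Sm) (n : ℕ) (t x y : ℝ) : (φ ^ n) t x y = φ t x y ^ n := rfl
@[simp] theorem Sm.smul_ap (c : ℝ) (φ : Sm) (t x y : ℝ) : (c • φ) t x y = c * φ t x y := rfl
@[simp] theorem Sm.zero_ap (t x y : ℝ) : (0 : Sm) t x y = 0 := rfl
@[simp] theorem Sm.one_ap (t x y : ℝ) : (1 : Sm) t x y = 1 := rfl
@[simp] theorem Sm.natCast_ap (n : ℕ) (t x y : ℝ) : ((n : ℕ) : Sm) t x y = n := rfl
@[simp] theorem Sm.ofNat_ap (n : ℕ) [n.AtLeastTwo] (t x y : ℝ) :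
    ((OfNat.ofNat n : Sm)) t x y = (OfNat.ofNat n : ℝ) := rfl
@[simp] theorem Sm.sum_ap {ι : Type*} (s : Finset ι) (f : ι → Sm) (t x y : ℝ) :
    (∑ i ∈ s, f i) t x y = ∑ i ∈ s, f i t x y := by
  classical
  induction s using Finset.induction_on with
  | empty => simp
  | insert a s ha ih => rw [Finset.sum_insert ha, Finset.sum_insert ha, Sm.add_ap, ih]

instance : CharZero Sm := ⟨fun m n h => by
  have h1 : ((m : ℕ) : Sm) 0 0 0 = ((n : ℕ) : Sm) 0 0 0 := by rw [h]
  simpa using h1⟩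

theorem Sm.ext' {φ ψ : Sm} (h : ∀ t x y, φ t x y = ψ t x y) : φ = ψ :=
  Subtype.ext (by funext t x y; exact h t x y)

theorem Sm.hasF (φ : Sm) (p : ℝ × ℝ × ℝ) :
    HasFDerivAt (fun p : ℝ × ℝ × ℝ => φ p.1 p.2.1 p.2.2)
      (fderiv ℝ (fun p : ℝ × ℝ × ℝ => φ p.1 p.2.1 p.2.2) p) p :=
  (φ.cd.differentiable (by simp) p).hasFDerivAt

theorem Sm.has_t (φ : Sm) (t x y : ℝ) : HasDerivAt (fun s => φ s x y)
    (fderiv ℝ (fun p : ℝ × ℝ × ℝ => φ p.1 p.2.1 p.2.2) (t, x, y) (1, 0, 0)) t := by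
  have h : HasDerivAt (fun s => ((s, x, y) : ℝ × ℝ × ℝ)) (1, 0, 0) t :=
    (hasDerivAt_id t).prodMk ((hasDerivAt_const t x).prodMk (hasDerivAt_const t y))
  exact HasFDerivAt.comp_hasDerivAt (f := fun s => ((s, x, y) : ℝ × ℝ × ℝ)) t
    (φ.hasF (t, x, y)) h

theorem Sm.has_1 (φ : Sm) (t x y : ℝ) : HasDerivAt (fun s => φ t s y)
    (fderiv ℝ (fun p : ℝ × ℝ × ℝ => φ p.1 p.2.1 p.2.2) (t, x, y) (0, 1, 0)) x := by
  have h : HasDerivAt (fun s => ((t, s, y) : ℝ × ℝ × ℝ)) (0, 1, 0) x :=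
    (hasDerivAt_const x t).prodMk ((hasDerivAt_id x).prodMk (hasDerivAt_const x y))
  exact HasFDerivAt.comp_hasDerivAt (f := fun s => ((t, s, y) : ℝ × ℝ × ℝ)) x
    (φ.hasF (t, x, y)) h

theorem Sm.has_2 (φ : Sm) (t x y : ℝ) : HasDerivAt (fun s => φ t x s)
    (fderiv ℝ (fun p : ℝ × ℝ × ℝ => φ p.1 p.2.1 p.2.2) (t, x, y) (0, 0, 1)) y := by
  have h : HasDerivAt (fun s => ((t, x, s) : ℝ × ℝ × ℝ)) (0, 0, 1) y :=
    (hasDerivAt_const y t).prodMk ((hasDerivAt_const y x).prodMk (hasDerivAt_id y))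
  exact HasFDerivAt.comp_hasDerivAt (f := fun s => ((t, x, s) : ℝ × ℝ × ℝ)) y
    (φ.hasF (t, x, y)) h

theorem Sm.cd_fderiv (φ : Sm) (v : ℝ × ℝ × ℝ) : ContDiff ℝ (⊤ : ℕ∞)
    (fun p => fderiv ℝ (fun p : ℝ × ℝ × ℝ => φ p.1 p.2.1 p.2.2) p v) :=
  (φ.cd.fderiv_right (m := (⊤ : ℕ∞)) (by simp)).clm_apply contDiff_const

theorem smooth_pt (φ : Sm) : Smooth3 (pt φ.1) := by
  have : (fun p : ℝ × ℝ × ℝ => pt φ.1 p.1 p.2.1 p.2.2) = _ :=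
    funext fun p => (φ.has_t p.1 p.2.1 p.2.2).deriv
  rw [Smooth3, this]
  exact φ.cd_fderiv _

theorem smooth_p1 (φ : Sm) : Smooth3 (p1 φ.1) := by
  have : (fun p : ℝ × ℝ × ℝ => p1 φ.1 p.1 p.2.1 p.2.2) = _ :=
    funext fun p => (φ.has_1 p.1 p.2.1 p.2.2).deriv
  rw [Smooth3, this]
  exact φ.cd_fderiv _

theorem smooth_p2 (φ : Sm) : Smooth3 (p2 φ.1) := by
  have : (fun p : ℝ × ℝ × ℝ => p2 φ.1 p.1 p.2.1 p.2.2) = _ :=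
    funext fun p => (φ.has_2 p.1 p.2.1 p.2.2).deriv
  rw [Smooth3, this]
  exact φ.cd_fderiv _

/-- `∂ₜ` as a derivation. -/
def dt : Derivation ℝ Sm Sm := Derivation.mk'
  { toFun := fun φ => ⟨pt φ.1, smooth_pt φ⟩
    map_add' := fun φ ψ => Sm.ext' fun t x y =>
      ((φ.has_t t x y).differentiableAt.hasDerivAt.add
        (ψ.has_t t x y).differentiableAt.hasDerivAt).deriv
    map_smul' := fun c φ => Sm.ext' fun t x y =>
      ((φ.has_t t x y).differentiableAt.hasDerivAt.const_mul c).deriv }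
  (fun φ ψ => Sm.ext' fun t x y => by
    have := ((φ.has_t t x y).differentiableAt.hasDerivAt.mul
        (ψ.has_t t x y).differentiableAt.hasDerivAt).deriv
    refine this.trans ?_
    simp only [smul_eq_mul, Sm.add_ap, Sm.mul_ap]
    change _ = φ t x y * deriv (fun s => ψ s x y) t + ψ t x y * deriv (fun s => φ s x y) t
    ring)

/-- `∂₁` as a derivation. -/
def d1 : Derivation ℝ Sm Sm := Derivation.mk'
  { toFun := fun φ => ⟨p1 φ.1, smooth_p1 φ⟩
    map_add' := fun φ ψ => Sm.ext' fun t x y =>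
      ((φ.has_1 t x y).differentiableAt.hasDerivAt.add
        (ψ.has_1 t x y).differentiableAt.hasDerivAt).deriv
    map_smul' := fun c φ => Sm.ext' fun t x y =>
      ((φ.has_1 t x y).differentiableAt.hasDerivAt.const_mul c).deriv }
  (fun φ ψ => Sm.ext' fun t x y => by
    have := ((φ.has_1 t x y).differentiableAt.hasDerivAt.mul
        (ψ.has_1 t x y).differentiableAt.hasDerivAt).deriv
    refine this.trans ?_
    simp only [smul_eq_mul, Sm.add_ap, Sm.mul_ap]
    change _ = φ t x y * deriv (fun s => ψ t s y) x + ψ t x y * deriv (fun s => φ t s y) x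
    ring)

/-- `∂₂` as a derivation. -/
def d2 : Derivation ℝ Sm Sm := Derivation.mk'
  { toFun := fun φ => ⟨p2 φ.1, smooth_p2 φ⟩
    map_add' := fun φ ψ => Sm.ext' fun t x y =>
      ((φ.has_2 t x y).differentiableAt.hasDerivAt.add
        (ψ.has_2 t x y).differentiableAt.hasDerivAt).deriv
    map_smul' := fun c φ => Sm.ext' fun t x y =>
      ((φ.has_2 t x y).differentiableAt.hasDerivAt.const_mul c).deriv }
  (fun φ ψ => Sm.ext' fun t x y => by
    have := ((φ.has_2 t x y).differentiableAt.hasDerivAt.mul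
        (ψ.has_2 t x y).differentiableAt.hasDerivAt).deriv
    refine this.trans ?_
    simp only [smul_eq_mul, Sm.add_ap, Sm.mul_ap]
    change _ = φ t x y * deriv (fun s => ψ t x s) y + ψ t x y * deriv (fun s => φ t x s) y
    ring)

theorem dt_coe (φ : Sm) : (dt φ).1 = pt φ.1 := rfl
theorem d1_coe (φ : Sm) : (d1 φ).1 = p1 φ.1 := rfl
theorem d2_coe (φ : Sm) : (d2 φ).1 = p2 φ.1 := rfl

theorem dt_ap (φ : Sm) (t x y : ℝ) : (dt φ) t x y =
    fderiv ℝ (fun p : ℝ × ℝ × ℝ => φ p.1 p.2.1 p.2.2) (t, x, y) (1, 0, 0) :=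
  (φ.has_t t x y).deriv
theorem d1_ap (φ : Sm) (t x y : ℝ) : (d1 φ) t x y =
    fderiv ℝ (fun p : ℝ × ℝ × ℝ => φ p.1 p.2.1 p.2.2) (t, x, y) (0, 1, 0) :=
  (φ.has_1 t x y).deriv
theorem d2_ap (φ : Sm) (t x y : ℝ) : (d2 φ) t x y =
    fderiv ℝ (fun p : ℝ × ℝ × ℝ => φ p.1 p.2.1 p.2.2) (t, x, y) (0, 0, 1) :=
  (φ.has_2 t x y).deriv

theorem hasDerivAt_t (φ : Sm) (t x y : ℝ) : HasDerivAt (fun s => φ s x y) (dt φ t x y) t := by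
  rw [dt_ap]; exact φ.has_t t x y
theorem hasDerivAt_1 (φ : Sm) (t x y : ℝ) : HasDerivAt (fun s => φ t s y) (d1 φ t x y) x := by
  rw [d1_ap]; exact φ.has_1 t x y
theorem hasDerivAt_2 (φ : Sm) (t x y : ℝ) : HasDerivAt (fun s => φ t x s) (d2 φ t x y) y := by
  rw [d2_ap]; exact φ.has_2 t x y

/-- Chain rule along a curve in space-time. -/
theorem Sm.hasDerivAt_curve (φ : Sm) {a b c : ℝ → ℝ} {a' b' c' s : ℝ}
    (ha : HasDerivAt a a' s) (hb : HasDerivAt b b' s) (hc : HasDerivAt c c' s) :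
    HasDerivAt (fun s => φ (a s) (b s) (c s))
      (a' * dt φ (a s) (b s) (c s) + b' * d1 φ (a s) (b s) (c s)
        + c' * d2 φ (a s) (b s) (c s)) s := by
  have h0 : HasDerivAt (fun s => ((a s, b s, c s) : ℝ × ℝ × ℝ)) (a', b', c') s :=
    ha.prodMk (hb.prodMk hc)
  have h := HasFDerivAt.comp_hasDerivAt (f := fun s => ((a s, b s, c s) : ℝ × ℝ × ℝ)) s
    (φ.hasF (a s, b s, c s)) h0
  refine h.congr_deriv ?_
  rw [dt_ap, d1_ap, d2_ap]
  have e : ((a', b', c') : ℝ × ℝ × ℝ) = a' • ((1, 0, 0) : ℝ × ℝ × ℝ) + b' • ((0, 1, 0) : ℝ × ℝ × ℝ)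
    + c' • ((0, 0, 1) : ℝ × ℝ × ℝ) := by simp
  rw [e, map_add, map_add, map_smul, map_smul, map_smul]
  simp only [smul_eq_mul]

theorem fderiv_comm (φ : Sm) (p v w : ℝ × ℝ × ℝ) :
    fderiv ℝ (fun q => fderiv ℝ (fun p : ℝ × ℝ × ℝ => φ p.1 p.2.1 p.2.2) q v) p w =
    fderiv ℝ (fun q => fderiv ℝ (fun p : ℝ × ℝ × ℝ => φ p.1 p.2.1 p.2.2) q w) p v := by
  have hd : DifferentiableAt ℝ (fderiv ℝ (fun p : ℝ × ℝ × ℝ => φ p.1 p.2.1 p.2.2)) p :=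
    (φ.cd.fderiv_right (m := (⊤ : ℕ∞)) (by simp)).differentiable (by simp) p
  have h : ∀ a b, fderiv ℝ (fun q => fderiv ℝ (fun p : ℝ × ℝ × ℝ => φ p.1 p.2.1 p.2.2) q a) p b =
      fderiv ℝ (fderiv ℝ (fun p : ℝ × ℝ × ℝ => φ p.1 p.2.1 p.2.2)) p b a := by
    intro a b
    rw [fderiv_clm_apply hd (differentiableAt_const a)]
    simp
  rw [h, h]
  have hs : IsSymmSndFDerivAt ℝ (fun p : ℝ × ℝ × ℝ => φ p.1 p.2.1 p.2.2) p :=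
    (φ.cd.contDiffAt).isSymmSndFDerivAt
      (by rw [minSmoothness_of_isRCLikeNormedField]; exact WithTop.coe_le_coe.2 (le_top (a := (2 : ℕ∞))))
  exact hs w v

theorem d1_dt (φ : Sm) : d1 (dt φ) = dt (d1 φ) := Sm.ext' fun t x y => by
  rw [d1_ap, dt_ap]
  simp only [dt_ap, d1_ap]
  exact fderiv_comm φ (t, x, y) _ _
theorem d2_dt (φ : Sm) : d2 (dt φ) = dt (d2 φ) := Sm.ext' fun t x y => by
  rw [d2_ap, dt_ap]
  simp only [dt_ap, d2_ap]
  exact fderiv_comm φ (t, x, y) _ _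
theorem d2_d1 (φ : Sm) : d2 (d1 φ) = d1 (d2 φ) := Sm.ext' fun t x y => by
  rw [d2_ap, d1_ap]
  simp only [d1_ap, d2_ap]
  exact fderiv_comm φ (t, x, y) _ _

/-- The coordinate `t`. -/
def cT : Sm := ⟨fun t _ _ => t, by
  change ContDiff ℝ (⊤ : ℕ∞) fun p : ℝ × ℝ × ℝ => p.1
  exact contDiff_fst⟩
/-- The coordinate `x₁`. -/
def cX : Sm := ⟨fun _ x _ => x, by
  change ContDiff ℝ (⊤ : ℕ∞) fun p : ℝ × ℝ × ℝ => p.2.1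
  exact contDiff_fst.comp contDiff_snd⟩
/-- The coordinate `x₂`. -/
def cY : Sm := ⟨fun _ _ y => y, by
  change ContDiff ℝ (⊤ : ℕ∞) fun p : ℝ × ℝ × ℝ => p.2.2
  exact contDiff_snd.comp contDiff_snd⟩

@[simp] theorem cT_ap (t x y : ℝ) : cT t x y = t := rfl
@[simp] theorem cX_ap (t x y : ℝ) : cX t x y = x := rfl
@[simp] theorem cY_ap (t x y : ℝ) : cY t x y = y := rfl

@[simp] theorem dt_cT : dt cT = 1 := Sm.ext' fun t _ _ => (hasDerivAt_id t).deriv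
@[simp] theorem dt_cX : dt cX = 0 := Sm.ext' fun t x _ => (hasDerivAt_const t x).deriv
@[simp] theorem dt_cY : dt cY = 0 := Sm.ext' fun t _ y => (hasDerivAt_const t y).deriv
@[simp] theorem d1_cT : d1 cT = 0 := Sm.ext' fun t x _ => (hasDerivAt_const x t).deriv
@[simp] theorem d1_cX : d1 cX = 1 := Sm.ext' fun _ x _ => (hasDerivAt_id x).deriv
@[simp] theorem d1_cY : d1 cY = 0 := Sm.ext' fun _ x y => (hasDerivAt_const x y).deriv
@[simp] theorem d2_cT : d2 cT = 0 := Sm.ext' fun t _ y => (hasDerivAt_const y t).deriv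
@[simp] theorem d2_cX : d2 cX = 0 := Sm.ext' fun _ x y => (hasDerivAt_const y x).deriv
@[simp] theorem d2_cY : d2 cY = 1 := Sm.ext' fun _ _ y => (hasDerivAt_id y).deriv

/-- The vector fields `S, L₁, L₂, Ω, ∂ₜ, ∂₁, ∂₂` as derivations. -/
def G (i : Fin 7) : Derivation ℝ Sm Sm :=
  match i with
  | 0 => cT • dt + cX • d1 + cY • d2
  | 1 => cT • d1 + cX • dt
  | 2 => cT • d2 + cY • dt
  | 3 => cX • d2 - cY • d1
  | 4 => dt
  | 5 => d1
  | 6 => d2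

theorem G0 (φ : Sm) : G 0 φ = cT * dt φ + cX * d1 φ + cY * d2 φ := rfl
theorem G1 (φ : Sm) : G 1 φ = cT * d1 φ + cX * dt φ := rfl
theorem G2 (φ : Sm) : G 2 φ = cT * d2 φ + cY * dt φ := rfl
theorem G3 (φ : Sm) : G 3 φ = cX * d2 φ - cY * d1 φ := rfl
theorem G4 (φ : Sm) : G 4 φ = dt φ := rfl
theorem G5 (φ : Sm) : G 5 φ = d1 φ := rfl
theorem G6 (φ : Sm) : G 6 φ = d2 φ := rfl

theorem G_coe (i : Fin 7) (φ : Sm) : (G i φ).1 = Gam i φ.1 := by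
  fin_cases i <;> rfl

/-- `D 0, D 1, D 2` are `∂ₜ, ∂₁, ∂₂`. -/
def D (b : Fin 3) : Derivation ℝ Sm Sm :=
  match b with
  | 0 => dt
  | 1 => d1
  | 2 => d2

theorem D0 (φ : Sm) : D 0 φ = dt φ := rfl
theorem D1 (φ : Sm) : D 1 φ = d1 φ := rfl
theorem D2 (φ : Sm) : D 2 φ = d2 φ := rfl

/-- The letter of `D b` among the vector fields. -/
def letter (b : Fin 3) : Fin 7 := ⟨4 + b.1, by omega⟩

theorem D_eq_G (b : Fin 3) : D b = G (letter b) := by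
  fin_cases b <;> rfl

/-- `□` acting on smooth functions. -/
def box (φ : Sm) : Sm := dt (dt φ) - d1 (d1 φ) - d2 (d2 φ)

theorem box_coe (φ : Sm) : (box φ).1 = dAlembert φ.1 := rfl

theorem box_add (φ ψ : Sm) : box (φ + ψ) = box φ + box ψ := by
  simp only [box, map_add]; ring
theorem box_smul (c : ℝ) (φ : Sm) : box (c • φ) = c • box φ := by
  simp only [box, Derivation.map_smul, smul_sub]

/-! ### Words in the vector fields -/

/-- The composition of vector fields along a word; the head of the list acts first. -/
def W : List (Fin 7) → Sm → Sm
  | [], φ => φ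
  | i :: w, φ => W w (G i φ)

@[simp] theorem W_nil (φ : Sm) : W [] φ = φ := rfl
@[simp] theorem W_cons (i : Fin 7) (w : List (Fin 7)) (φ : Sm) : W (i :: w) φ = W w (G i φ) := rfl

theorem W_append (v w : List (Fin 7)) (φ : Sm) : W (v ++ w) φ = W w (W v φ) := by
  induction v generalizing φ with
  | nil => rfl
  | cons i v ih => exact ih _

theorem W_add (w : List (Fin 7)) (φ ψ : Sm) : W w (φ + ψ) = W w φ + W w ψ := by
  induction w generalizing φ ψ with
  | nil => rfl
  | cons i w ih => rw [W_cons, map_add, ih]; rfl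

theorem W_smul (w : List (Fin 7)) (c : ℝ) (φ : Sm) : W w (c • φ) = c • W w φ := by
  induction w generalizing φ with
  | nil => rfl
  | cons i w ih => rw [W_cons, Derivation.map_smul, ih]; rfl

/-- The words of length at most `m`. -/
def words (m : ℕ) : Finset (List (Fin 7)) :=
  (Finset.range (m + 1)).biUnion fun j => (Finset.univ : Finset (Fin j → Fin 7)).image List.ofFn

@[simp] theorem mem_words {m : ℕ} {w : List (Fin 7)} : w ∈ words m ↔ w.length ≤ m := by
  simp only [words, Finset.mem_biUnion, Finset.mem_range, Finset.mem_image, Finset.mem_univ,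
    true_and]
  constructor
  · rintro ⟨j, hj, f, rfl⟩; simp; omega
  · intro h; exact ⟨w.length, by omega, w.get, List.ofFn_get w⟩

/-- `[Γ_i, ∂_b]` is `0` or plus or minus some `∂_c`. -/
theorem G_D (i : Fin 7) (b : Fin 3) : ∃ (c : Fin 3) (r : ℝ), |r| ≤ 1 ∧
    ∀ φ, G i (D b φ) = D b (G i φ) + r • D c φ := by
  have key : ∀ (c : Fin 3) (r : ℝ), |r| ≤ 1 →
      (∀ φ, D b (G i φ) + r • D c φ = G i (D b φ)) →
    ∃ (c : Fin 3) (r : ℝ), |r| ≤ 1 ∧ ∀ φ, G i (D b φ) = D b (G i φ) + r • D c φ :=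
    fun c r hr h => ⟨c, r, hr, fun φ => (h φ).symm⟩
  fin_cases i <;> fin_cases b
  on_goal 1 => refine key 0 (-1) (by simp) fun φ => ?_
  on_goal 2 => refine key 1 (-1) (by simp) fun φ => ?_
  on_goal 3 => refine key 2 (-1) (by simp) fun φ => ?_
  on_goal 4 => refine key 1 (-1) (by simp) fun φ => ?_
  on_goal 5 => refine key 0 (-1) (by simp) fun φ => ?_
  on_goal 7 => refine key 2 (-1) (by simp) fun φ => ?_
  on_goal 9 => refine key 0 (-1) (by simp) fun φ => ?_
  on_goal 11 => refine key 2 (-1) (by simp) fun φ => ?_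
  on_goal 12 => refine key 1 1 (by simp) fun φ => ?_
  on_goal 6 => refine key 0 0 (by simp) fun φ => ?_
  on_goal 8 => refine key 0 0 (by simp) fun φ => ?_
  on_goal 10 => refine key 0 0 (by simp) fun φ => ?_
  on_goal 13 => refine key 0 0 (by simp) fun φ => ?_
  on_goal 14 => refine key 0 0 (by simp) fun φ => ?_
  on_goal 15 => refine key 0 0 (by simp) fun φ => ?_
  on_goal 16 => refine key 0 0 (by simp) fun φ => ?_
  on_goal 17 => refine key 0 0 (by simp) fun φ => ?_
  on_goal 18 => refine key 0 0 (by simp) fun φ => ?_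
  on_goal 19 => refine key 0 0 (by simp) fun φ => ?_
  on_goal 20 => refine key 0 0 (by simp) fun φ => ?_
  on_goal 21 => refine key 0 0 (by simp) fun φ => ?_
  all_goals
    simp only [Fin.mk_zero, Fin.mk_one, Fin.reduceFinMk, Fin.isValue, Fin.zero_eta, D0, D1, D2,
      G0, G1, G2, G3, G4, G5, G6, map_add, map_sub, Derivation.leibniz,
      smul_eq_mul, dt_cT, dt_cX, dt_cY, d1_cT, d1_cX, d1_cY, d2_cT, d2_cX, d2_cY,
      d1_dt, d2_dt, d2_d1, zero_smul, neg_smul, one_smul]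
  all_goals ring

/-- `□` commutes with the vector fields, except that `[□, S] = 2□`. -/
theorem box_G (i : Fin 7) : ∃ r : ℝ, |r| ≤ 2 ∧ ∀ φ, box (G i φ) = G i (box φ) + r • box φ := by
  by_cases h : i = 0
  · subst h
    refine ⟨2, by norm_num, fun φ => ?_⟩
    rw [two_smul]
    simp only [box, G0, map_add, map_sub, Derivation.leibniz, smul_eq_mul, dt_cT, dt_cX, dt_cY,
      d1_cT, d1_cX, d1_cY, d2_cT, d2_cX, d2_cY, d1_dt, d2_dt, d2_d1, map_zero,
      Derivation.map_one_eq_zero]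
    ring
  · refine ⟨0, by norm_num, fun φ => ?_⟩
    fin_cases i <;> first | exact absurd rfl h | skip
    all_goals
      simp only [Fin.mk_zero, Fin.mk_one, Fin.reduceFinMk, Fin.isValue, Fin.zero_eta, zero_smul]
      simp only [box, G1, G2, G3, G4, G5, G6, map_add, map_sub, Derivation.leibniz, smul_eq_mul,
        dt_cT, dt_cX, dt_cY, d1_cT, d1_cX, d1_cY, d2_cT, d2_cX, d2_cY, d1_dt, d2_dt, d2_d1,
        map_zero, Derivation.map_one_eq_zero]
      ring

/-- Leibniz rule for triple products, in supremum form. -/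
theorem W_mul3 (m : ℕ) : ∀ (w : List (Fin 7)), w.length ≤ m → ∀ (f g h : Sm) (t x y B : ℝ),
    (∀ w1 w2 w3 : List (Fin 7), w1.length + w2.length + w3.length ≤ m →
      |W w1 f t x y| * |W w2 g t x y| * |W w3 h t x y| ≤ B) →
    |W w (f * g * h) t x y| ≤ 3 ^ m * B := by
  induction m with
  | zero =>
    intro w hw f g h t x y B H
    have : w = [] := List.length_eq_zero_iff.1 (by omega)
    subst this
    simpa [abs_mul] using H [] [] [] (by simp)
  | succ m ih =>
    intro w hw f g h t x y B H
    have hB : 0 ≤ B := le_trans (by positivity) (H [] [] [] (by simp))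
    cases w with
    | nil =>
      have h1 := H [] [] [] (by simp)
      simp only [W_nil, Sm.mul_ap, abs_mul] at h1 ⊢
      calc _ ≤ 1 * B := by linarith
        _ ≤ _ := by gcongr; exact one_le_pow₀ (by norm_num)
    | cons i w =>
      have hw' : w.length ≤ m := by simpa using hw
      have e : W (i :: w) (f * g * h) = W w (G i f * g * h) + W w (f * G i g * h)
          + W w (f * g * G i h) := by
        rw [W_cons, ← W_add, ← W_add]
        congr 1
        simp only [Derivation.leibniz, smul_eq_mul]; ring
      have a1 := ih w hw' (G i f) g h t x y B (fun w1 w2 w3 hl =>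
        H (i :: w1) w2 w3 (by simp only [List.length_cons]; omega))
      have a2 := ih w hw' f (G i g) h t x y B (fun w1 w2 w3 hl =>
        H w1 (i :: w2) w3 (by simp only [List.length_cons]; omega))
      have a3 := ih w hw' f g (G i h) t x y B (fun w1 w2 w3 hl =>
        H w1 w2 (i :: w3) (by simp only [List.length_cons]; omega))
      rw [e, Sm.add_ap, Sm.add_ap, pow_succ]
      refine (abs_add_le _ _).trans ?_
      have := abs_add_le (W w (G i f * g * h) t x y) (W w (f * G i g * h) t x y)
      linarith

/-- Moving a partial derivative to the left of a word, in supremum form. -/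
theorem W_D (m : ℕ) : ∀ (w : List (Fin 7)), w.length ≤ m → ∀ (b : Fin 3) (φ : Sm) (t x y B : ℝ),
    (∀ (c : List (Fin 7)) (a : Fin 3), c.length ≤ m → |D a (W c φ) t x y| ≤ B) →
    |W w (D b φ) t x y| ≤ 2 ^ m * B := by
  induction m with
  | zero =>
    intro w hw b φ t x y B H
    have : w = [] := List.length_eq_zero_iff.1 (by omega)
    subst this
    simpa using H [] b (by simp)
  | succ m ih =>
    intro w hw b φ t x y B H
    have hB : 0 ≤ B := le_trans (abs_nonneg _) (H [] b (by simp))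
    cases w with
    | nil =>
      have h1 := H [] b (by simp)
      simp only [W_nil] at h1 ⊢
      calc _ ≤ 1 * B := by linarith
        _ ≤ _ := by gcongr; exact one_le_pow₀ (by norm_num)
    | cons i w =>
      have hw' : w.length ≤ m := by simpa using hw
      obtain ⟨c, r, hr, hc⟩ := G_D i b
      rw [W_cons, hc, W_add, W_smul]
      have a1 := ih w hw' b (G i φ) t x y B (fun v a hv =>
        H (i :: v) a (by simp only [List.length_cons]; omega))
      have a2 := ih w hw' c φ t x y B (fun v a hv => H v a (by omega))
      rw [Sm.add_ap, Sm.smul_ap, pow_succ]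
      refine (abs_add_le _ _).trans ?_
      rw [abs_mul]
      have : |r| * |W w (D c φ) t x y| ≤ 1 * |W w (D c φ) t x y| := by gcongr
      linarith

/-- Commuting `□` through a word, in supremum form. -/
theorem box_W (m : ℕ) : ∀ (w : List (Fin 7)), w.length ≤ m → ∀ (φ : Sm) (t x y B : ℝ),
    (∀ c : List (Fin 7), c.length ≤ m → |W c (box φ) t x y| ≤ B) →
    |box (W w φ) t x y| ≤ 3 ^ m * B := by
  induction m with
  | zero =>
    intro w hw φ t x y B H
    have : w = [] := List.length_eq_zero_iff.1 (by omega)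
    subst this
    simpa using H [] (by simp)
  | succ m ih =>
    intro w hw φ t x y B H
    have hB : 0 ≤ B := le_trans (abs_nonneg _) (H [] (by simp))
    cases w with
    | nil =>
      have h1 := H [] (by simp)
      simp only [W_nil] at h1 ⊢
      calc _ ≤ 1 * B := by linarith
        _ ≤ _ := by gcongr; exact one_le_pow₀ (by norm_num)
    | cons i w =>
      have hw' : w.length ≤ m := by simpa using hw
      obtain ⟨r, hr, hc⟩ := box_G i
      rw [W_cons]
      have a1 := ih w hw' (G i φ) t x y (3 * B) (fun v hv => by
        rw [hc, W_add, W_smul, Sm.add_ap, Sm.smul_ap]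
        have b1 := H (i :: v) (by simp only [List.length_cons]; omega)
        have b2 := H v (by omega)
        rw [W_cons] at b1
        refine (abs_add_le _ _).trans ?_
        rw [abs_mul]
        have : |r| * |W v (box φ) t x y| ≤ 2 * |W v (box φ) t x y| := by gcongr
        linarith)
      rw [pow_succ]; linarith

/-- `Γ^α` is a word of length `|α|`. -/
theorem GamMulti_eq (α : Fin 7 → ℕ) : ∃ w : List (Fin 7), w.length = ∑ i, α i ∧
    ∀ φ : Sm, GamMulti α φ.1 = (W w φ).1 := by
  have it : ∀ (i : Fin 7) (n : ℕ) (φ : Sm), (Gam i)^[n] φ.1 = (W (List.replicate n i) φ).1 := by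
    intro i n
    induction n with
    | zero => intro φ; rfl
    | succ n ih => intro φ; rw [Function.iterate_succ_apply, ← G_coe, ih]; rfl
  refine ⟨List.replicate (α 6) 6 ++ (List.replicate (α 5) 5 ++ (List.replicate (α 4) 4 ++
    (List.replicate (α 3) 3 ++ (List.replicate (α 2) 2 ++ (List.replicate (α 1) 1 ++
    List.replicate (α 0) 0))))), ?_, ?_⟩
  · simp [Fin.sum_univ_succ]; ring_nf
  · intro φ
    simp only [GamMulti, it, W_append]

end Ap

namespace Ap

/-! ### Support in a light cone and integrals over time slices -/

/-- `f` vanishes outside the forward domain of influence `|x| < t + R`, for `t ≥ 0`. -/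
def Cs (R : ℝ) (f : Sm) : Prop := ∀ t x y : ℝ, 0 ≤ t → (t + R) ^ 2 ≤ x ^ 2 + y ^ 2 → f t x y = 0

/-- `f` vanishes for `t ≥ 0`. -/
def Zp (f : Sm) : Prop := ∀ t x y : ℝ, 0 ≤ t → f t x y = 0

theorem D_ap (b : Fin 3) (φ : Sm) (t x y : ℝ) : ∃ v : ℝ × ℝ × ℝ, D b φ t x y =
    fderiv ℝ (fun p : ℝ × ℝ × ℝ => φ p.1 p.2.1 p.2.2) (t, x, y) v := by
  fin_cases b
  · exact ⟨_, dt_ap φ t x y⟩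
  · exact ⟨_, d1_ap φ t x y⟩
  · exact ⟨_, d2_ap φ t x y⟩

theorem D_zero_of_eventually (b : Fin 3) (φ : Sm) (t x y : ℝ)
    (h : ∀ᶠ q : ℝ × ℝ × ℝ in 𝓝 (t, x, y), φ q.1 q.2.1 q.2.2 = 0) : D b φ t x y = 0 := by
  obtain ⟨v, hv⟩ := D_ap b φ t x y
  have h' : (fun p : ℝ × ℝ × ℝ => φ p.1 p.2.1 p.2.2) =ᶠ[𝓝 (t, x, y)] fun _ => (0 : ℝ) := h
  rw [hv, h'.fderiv_eq]; simp

/-- Values on the closed set `t ≥ 0` are limits of values at later times on dilated slices. -/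
theorem lim_zero (f : Sm) (t x y : ℝ)
    (H : ∀ h : ℝ, 0 < h → f (t + h) ((1 + 2 * h) * x) ((1 + 2 * h) * y) = 0) : f t x y = 0 := by
  have c : Continuous fun h : ℝ => f (t + h) ((1 + 2 * h) * x) ((1 + 2 * h) * y) :=
    f.cont.comp (f := fun h : ℝ => ((t + h, (1 + 2 * h) * x, (1 + 2 * h) * y) : ℝ × ℝ × ℝ))
      (by fun_prop)
  have h1 : Tendsto (fun h : ℝ => f (t + h) ((1 + 2 * h) * x) ((1 + 2 * h) * y)) (𝓝[>] 0)
      (𝓝 (f t x y)) := by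
    have := (c.tendsto 0).mono_left (nhdsWithin_le_nhds (s := Set.Ioi (0 : ℝ)))
    simpa using this
  have h2 : Tendsto (fun h : ℝ => f (t + h) ((1 + 2 * h) * x) ((1 + 2 * h) * y)) (𝓝[>] 0)
      (𝓝 0) := by
    refine tendsto_const_nhds.congr' ?_
    filter_upwards [self_mem_nhdsWithin] with h hh
    exact (H h hh).symm
  exact tendsto_nhds_unique h1 h2

variable {R : ℝ}

theorem Cs.D (hR : 1 ≤ R) {f : Sm} (hf : Cs R f) (b : Fin 3) : Cs R (D b f) := by
  intro t x y ht hr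
  refine lim_zero _ t x y fun h hh => D_zero_of_eventually b f _ _ _ ?_
  have e1 : ∀ᶠ q : ℝ × ℝ × ℝ in 𝓝 (t + h, (1 + 2 * h) * x, (1 + 2 * h) * y), 0 < q.1 :=
    (continuous_fst.tendsto _).eventually (lt_mem_nhds (show 0 < t + h by linarith))
  have e2 : ∀ᶠ q : ℝ × ℝ × ℝ in 𝓝 (t + h, (1 + 2 * h) * x, (1 + 2 * h) * y),
      (q.1 + R) ^ 2 < q.2.1 ^ 2 + q.2.2 ^ 2 := by
    refine ((by fun_prop : Continuous fun q : ℝ × ℝ × ℝ => (q.1 + R) ^ 2).continuousAt).eventually_lt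
      ((by fun_prop : Continuous fun q : ℝ × ℝ × ℝ => q.2.1 ^ 2 + q.2.2 ^ 2).continuousAt) ?_
    simp only
    have a1 : t + h + R < (1 + 2 * h) * (t + R) := by nlinarith
    have a2 : (t + h + R) ^ 2 < ((1 + 2 * h) * (t + R)) ^ 2 := by
      apply pow_lt_pow_left₀ a1 (by linarith) (by norm_num)
    nlinarith [mul_nonneg (sq_nonneg (1 + 2 * h)) (sub_nonneg.2 hr)]
  filter_upwards [e1, e2] with q h1 h2
  exact hf _ _ _ h1.le h2.le

theorem Zp.D {f : Sm} (hf : Zp f) (b : Fin 3) : Zp (D b f) := by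
  intro t x y ht
  refine lim_zero _ t x y fun h hh => D_zero_of_eventually b f _ _ _ ?_
  have e1 : ∀ᶠ q : ℝ × ℝ × ℝ in 𝓝 (t + h, (1 + 2 * h) * x, (1 + 2 * h) * y), 0 < q.1 :=
    (continuous_fst.tendsto _).eventually (lt_mem_nhds (show 0 < t + h by linarith))
  filter_upwards [e1] with q h1
  exact hf _ _ _ h1.le

/-- An equation holding for `t > 0` persists at `t = 0`. -/
theorem Zp.of_pos {f : Sm} (hf : ∀ t x y : ℝ, 0 < t → f t x y = 0) : Zp f :=
  fun t x y ht => lim_zero f t x y fun h hh => hf _ _ _ (by linarith)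

theorem Cs.mul_left {f : Sm} (hf : Cs R f) (c : Sm) : Cs R (c * f) := fun t x y ht hr => by
  rw [Sm.mul_ap, hf t x y ht hr, mul_zero]
theorem Cs.mul_right {f : Sm} (hf : Cs R f) (c : Sm) : Cs R (f * c) := fun t x y ht hr => by
  rw [Sm.mul_ap, hf t x y ht hr, zero_mul]
theorem Cs.add {f g : Sm} (hf : Cs R f) (hg : Cs R g) : Cs R (f + g) := fun t x y ht hr => by
  rw [Sm.add_ap, hf t x y ht hr, hg t x y ht hr, zero_add]
theorem Cs.sub {f g : Sm} (hf : Cs R f) (hg : Cs R g) : Cs R (f - g) := fun t x y ht hr => by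
  rw [Sm.sub_ap, hf t x y ht hr, hg t x y ht hr, sub_zero]
theorem Cs.smul {f : Sm} (hf : Cs R f) (c : ℝ) : Cs R (c • f) := fun t x y ht hr => by
  rw [Sm.smul_ap, hf t x y ht hr, mul_zero]
theorem Cs.neg {f : Sm} (hf : Cs R f) : Cs R (-f) := fun t x y ht hr => by
  rw [Sm.neg_ap, hf t x y ht hr, neg_zero]
theorem Cs.sq {f : Sm} (hf : Cs R f) : Cs R (f ^ 2) := fun t x y ht hr => by
  rw [Sm.pow_ap, hf t x y ht hr]; norm_num
theorem Cs.sum {ι : Type*} {s : Finset ι} {f : ι → Sm} (hf : ∀ i ∈ s, Cs R (f i)) :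
    Cs R (∑ i ∈ s, f i) := fun t x y ht hr => by
  rw [Sm.sum_ap]; exact Finset.sum_eq_zero fun i hi => hf i hi t x y ht hr
theorem Cs.mono {R' : ℝ} (h0 : 0 ≤ R) (h : R ≤ R') {f : Sm} (hf : Cs R f) : Cs R' f :=
  fun t x y ht hr => hf t x y ht (le_trans (by gcongr) hr)

theorem Cs.dt (hR : 1 ≤ R) {f : Sm} (hf : Cs R f) : Cs R (dt f) := hf.D hR 0
theorem Cs.d1 (hR : 1 ≤ R) {f : Sm} (hf : Cs R f) : Cs R (d1 f) := hf.D hR 1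
theorem Cs.d2 (hR : 1 ≤ R) {f : Sm} (hf : Cs R f) : Cs R (d2 f) := hf.D hR 2

theorem Zp.mul_left {f : Sm} (hf : Zp f) (c : Sm) : Zp (c * f) := fun t x y ht => by
  rw [Sm.mul_ap, hf t x y ht, mul_zero]
theorem Zp.add {f g : Sm} (hf : Zp f) (hg : Zp g) : Zp (f + g) := fun t x y ht => by
  rw [Sm.add_ap, hf t x y ht, hg t x y ht, zero_add]
theorem Zp.sub {f g : Sm} (hf : Zp f) (hg : Zp g) : Zp (f - g) := fun t x y ht => by
  rw [Sm.sub_ap, hf t x y ht, hg t x y ht, sub_zero]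

theorem Cs.G (hR : 1 ≤ R) {f : Sm} (hf : Cs R f) (i : Fin 7) : Cs R (G i f) := by
  have a := hf.dt hR
  have b := hf.d1 hR
  have c := hf.d2 hR
  fin_cases i
  · exact ((a.mul_left _).add (b.mul_left _)).add (c.mul_left _)
  · exact (b.mul_left _).add (a.mul_left _)
  · exact (c.mul_left _).add (a.mul_left _)
  · exact (c.mul_left _).sub (b.mul_left _)
  · exact a
  · exact b
  · exact c

theorem Zp.G {f : Sm} (hf : Zp f) (i : Fin 7) : Zp (G i f) := by
  have a : Zp (Ap.dt f) := hf.D 0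
  have b : Zp (Ap.d1 f) := hf.D 1
  have c : Zp (Ap.d2 f) := hf.D 2
  fin_cases i
  · exact ((a.mul_left _).add (b.mul_left _)).add (c.mul_left _)
  · exact (b.mul_left _).add (a.mul_left _)
  · exact (c.mul_left _).add (a.mul_left _)
  · exact (c.mul_left _).sub (b.mul_left _)
  · exact a
  · exact b
  · exact c

theorem Cs.W (hR : 1 ≤ R) {f : Sm} (hf : Cs R f) (w : List (Fin 7)) : Cs R (W w f) := by
  induction w generalizing f with
  | nil => exact hf
  | cons i w ih => exact ih (hf.G hR i)

theorem Zp.W {f : Sm} (hf : Zp f) (w : List (Fin 7)) : Zp (W w f) := by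
  induction w generalizing f with
  | nil => exact hf
  | cons i w ih => exact ih (hf.G i)

theorem Cs.box (hR : 1 ≤ R) {f : Sm} (hf : Cs R f) : Cs R (box f) :=
  (((hf.dt hR).dt hR).sub ((hf.d1 hR).d1 hR)).sub ((hf.d2 hR).d2 hR)

/-- The integral over a time slice. -/
def I (f : Sm) (t : ℝ) : ℝ := ∫ x : ℝ × ℝ, f t x.1 x.2

/-- A box containing the support on a time slice. -/
def Bx (A : ℝ) : Set (ℝ × ℝ) := Set.Icc (-A) A ×ˢ Set.Icc (-A) A

theorem Bx_compact (A : ℝ) : IsCompact (Bx A) := isCompact_Icc.prod isCompact_Icc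

theorem Cs.zero_off {f : Sm} (hf : Cs R f) (hR : 0 ≤ R) {t A : ℝ} (ht : 0 ≤ t) (hA : t + R ≤ A)
    {x : ℝ × ℝ} (hx : x ∉ Bx A) : f t x.1 x.2 = 0 := by
  refine hf t _ _ ht ?_
  have : A ^ 2 ≤ x.1 ^ 2 + x.2 ^ 2 := by
    by_contra hc
    push Not at hc
    refine hx ⟨abs_le.1 (abs_le_of_sq_le_sq (by nlinarith [sq_nonneg x.2]) (by linarith)),
      abs_le.1 (abs_le_of_sq_le_sq (by nlinarith [sq_nonneg x.1]) (by linarith))⟩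
  exact le_trans (by gcongr) this

theorem Sm.cont_slice (f : Sm) (t : ℝ) : Continuous fun x : ℝ × ℝ => f t x.1 x.2 :=
  f.cont.comp (f := fun x : ℝ × ℝ => ((t, x.1, x.2) : ℝ × ℝ × ℝ)) (by fun_prop)

theorem Cs.hcs {f : Sm} (hf : Cs R f) (hR : 0 ≤ R) {t : ℝ} (ht : 0 ≤ t) :
    HasCompactSupport fun x : ℝ × ℝ => f t x.1 x.2 :=
  HasCompactSupport.intro (Bx_compact (t + R)) fun _ hx => hf.zero_off hR ht le_rfl hx

theorem Cs.integrable {f : Sm} (hf : Cs R f) (hR : 0 ≤ R) {t : ℝ} (ht : 0 ≤ t) :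
    Integrable fun x : ℝ × ℝ => f t x.1 x.2 :=
  (f.cont_slice t).integrable_of_hasCompactSupport (hf.hcs hR ht)

theorem I_add {f g : Sm} (hf : Cs R f) (hg : Cs R g) (hR : 0 ≤ R) {t : ℝ} (ht : 0 ≤ t) :
    I (f + g) t = I f t + I g t := integral_add (hf.integrable hR ht) (hg.integrable hR ht)

theorem I_sub {f g : Sm} (hf : Cs R f) (hg : Cs R g) (hR : 0 ≤ R) {t : ℝ} (ht : 0 ≤ t) :
    I (f - g) t = I f t - I g t := integral_sub (hf.integrable hR ht) (hg.integrable hR ht)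

theorem I_smul (c : ℝ) (f : Sm) (t : ℝ) : I (c • f) t = c * I f t := integral_const_mul _ _

theorem I_sum {ι : Type*} {s : Finset ι} {f : ι → Sm} (hf : ∀ i ∈ s, Cs R (f i)) (hR : 0 ≤ R)
    {t : ℝ} (ht : 0 ≤ t) : I (∑ i ∈ s, f i) t = ∑ i ∈ s, I (f i) t := by
  simp only [I, Sm.sum_ap]
  exact integral_finsetSum _ fun i hi => (hf i hi).integrable hR ht

theorem I_mono {f g : Sm} (hf : Cs R f) (hg : Cs R g) (hR : 0 ≤ R) {t : ℝ} (ht : 0 ≤ t)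
    (h : ∀ x y, f t x y ≤ g t x y) : I f t ≤ I g t :=
  integral_mono (hf.integrable hR ht) (hg.integrable hR ht) fun x => h x.1 x.2

/-- Monotonicity of the integral, only tested inside the domain of influence. -/
theorem I_mono_on {f g : Sm} (hf : Cs R f) (hg : Cs R g) (hR : 0 ≤ R) {t : ℝ} (ht : 0 ≤ t)
    (h : ∀ x y, x ^ 2 + y ^ 2 < (t + R) ^ 2 → f t x y ≤ g t x y) : I f t ≤ I g t := by
  refine I_mono hf hg hR ht fun x y => ?_
  rcases lt_or_ge (x ^ 2 + y ^ 2) ((t + R) ^ 2) with h1 | h1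
  · exact h x y h1
  · rw [hf t x y ht h1, hg t x y ht h1]

theorem I_nonneg {f : Sm} {t : ℝ} (h : ∀ x y, 0 ≤ f t x y) : 0 ≤ I f t :=
  integral_nonneg fun x => h x.1 x.2

theorem hcs_slice1 {f : Sm} (hf : Cs R f) (hR : 0 ≤ R) {t : ℝ} (ht : 0 ≤ t) (y : ℝ) :
    HasCompactSupport fun x => f t x y :=
  HasCompactSupport.intro (isCompact_Icc (a := -(t + R)) (b := t + R)) fun x hx =>
    hf.zero_off hR ht le_rfl (x := (x, y)) fun h => hx h.1

theorem hcs_slice2 {f : Sm} (hf : Cs R f) (hR : 0 ≤ R) {t : ℝ} (ht : 0 ≤ t) (x : ℝ) :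
    HasCompactSupport fun y => f t x y :=
  HasCompactSupport.intro (isCompact_Icc (a := -(t + R)) (b := t + R)) fun y hy =>
    hf.zero_off hR ht le_rfl (x := (x, y)) fun h => hy h.2

theorem Sm.cont_1 (f : Sm) (t y : ℝ) : Continuous fun x => f t x y :=
  f.cont.comp (f := fun x : ℝ => ((t, x, y) : ℝ × ℝ × ℝ)) (by fun_prop)
theorem Sm.cont_2 (f : Sm) (t x : ℝ) : Continuous fun y => f t x y :=
  f.cont.comp (f := fun y : ℝ => ((t, x, y) : ℝ × ℝ × ℝ)) (by fun_prop)

/-- A spatial derivative of a function with compact slices has zero integral. -/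
theorem I_d1 {f : Sm} (hf : Cs R f) (hR : 1 ≤ R) {t : ℝ} (ht : 0 ≤ t) : I (d1 f) t = 0 := by
  have hR0 : 0 ≤ R := by linarith
  have hd := hf.d1 hR
  have h := integral_prod_symm (μ := (volume : Measure ℝ)) (ν := (volume : Measure ℝ)) _
    (hd.integrable hR0 ht)
  refine h.trans ?_
  refine integral_eq_zero_of_ae (Eventually.of_forall fun y => ?_)
  exact integral_eq_zero_of_hasDerivAt_of_integrable (fun x => hasDerivAt_1 f t x y)
    (((d1 f).cont_1 t y).integrable_of_hasCompactSupport (hcs_slice1 hd hR0 ht y))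
    ((f.cont_1 t y).integrable_of_hasCompactSupport (hcs_slice1 hf hR0 ht y))

theorem I_d2 {f : Sm} (hf : Cs R f) (hR : 1 ≤ R) {t : ℝ} (ht : 0 ≤ t) : I (d2 f) t = 0 := by
  have hR0 : 0 ≤ R := by linarith
  have hd := hf.d2 hR
  have h := integral_prod (μ := (volume : Measure ℝ)) (ν := (volume : Measure ℝ)) _
    (hd.integrable hR0 ht)
  refine h.trans ?_
  refine integral_eq_zero_of_ae (Eventually.of_forall fun x => ?_)
  exact integral_eq_zero_of_hasDerivAt_of_integrable (fun y => hasDerivAt_2 f t x y)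
    (((d2 f).cont_2 t x).integrable_of_hasCompactSupport (hcs_slice2 hd hR0 ht x))
    ((f.cont_2 t x).integrable_of_hasCompactSupport (hcs_slice2 hf hR0 ht x))

theorem I_eq_Bx {f : Sm} (hf : Cs R f) (hR : 0 ≤ R) {t A : ℝ} (ht : 0 ≤ t) (hA : t + R ≤ A) :
    I f t = ∫ x in Bx A, f t x.1 x.2 :=
  (setIntegral_eq_integral_of_forall_compl_eq_zero fun _ hx => hf.zero_off hR ht hA hx).symm

/-- Differentiation under the integral. The support is only controlled for `t ≥ 0`, hence the
one-sided derivative. -/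
theorem I_deriv {f : Sm} (hf : Cs R f) (hR : 1 ≤ R) {t : ℝ} (ht : 0 ≤ t) :
    HasDerivWithinAt (I f) (I (dt f) t) (Set.Ici 0) t := by
  have hR0 : 0 ≤ R := by linarith
  set A := t + 1 + R
  have hc : IsCompact (Set.Icc (t - 1) (t + 1) ×ˢ Bx A) := isCompact_Icc.prod (Bx_compact A)
  have c1 : Continuous fun p : ℝ × ℝ × ℝ => dt f p.1 p.2.1 p.2.2 := (dt f).cont
  obtain ⟨C, hC⟩ := hc.exists_bound_of_continuousOn c1.continuousOn
  have fin : IsFiniteMeasure (volume.restrict (Bx A)) :=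
    ⟨by simpa using (Bx_compact A).measure_lt_top⟩
  have key := hasDerivAt_integral_of_dominated_loc_of_deriv_le (𝕜 := ℝ)
    (μ := volume.restrict (Bx A)) (F := fun s (x : ℝ × ℝ) => f s x.1 x.2)
    (F' := fun s (x : ℝ × ℝ) => dt f s x.1 x.2) (x₀ := t) (s := Set.Icc (t - 1) (t + 1))
    (bound := fun _ => C) (Icc_mem_nhds (by linarith) (by linarith))
    (Eventually.of_forall fun s => (f.cont_slice s).aestronglyMeasurable)
    ((f.cont_slice t).continuousOn.integrableOn_compact (Bx_compact A))
    ((dt f).cont_slice t).aestronglyMeasurable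
    ((ae_restrict_iff' (Bx_compact A).measurableSet).2 (Eventually.of_forall fun x hx s hs =>
      hC (s, x) ⟨hs, hx⟩))
    (integrable_const C)
    (Eventually.of_forall fun x s _ => hasDerivAt_t f s x.1 x.2)
  have h2 := key.2.hasDerivWithinAt (s := Set.Ici 0)
  rw [← I_eq_Bx (hf.dt hR) hR0 ht (show t + R ≤ A by simp [A])] at h2
  refine h2.congr_of_eventuallyEq ?_ (I_eq_Bx hf hR0 ht (by simp [A]))
  have : ∀ᶠ s in 𝓝[Set.Ici 0] t, s < t + 1 := nhdsWithin_le_nhds (gt_mem_nhds (by linarith))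
  filter_upwards [this, self_mem_nhdsWithin] with s h1 h3
  exact I_eq_Bx hf hR0 h3 (by simp only [A]; linarith)

theorem I_cont {f : Sm} (hf : Cs R f) (hR : 1 ≤ R) : ContinuousOn (I f) (Set.Ici 0) :=
  fun _ ht => (I_deriv hf hR ht).continuousWithinAt

theorem I_deriv' {f : Sm} (hf : Cs R f) (hR : 1 ≤ R) {t : ℝ} (ht : 0 ≤ t) :
    HasDerivWithinAt (I f) (I (dt f) t) (Set.Ici t) t :=
  (I_deriv hf hR ht).mono (Set.Ici_subset_Ici.2 ht)

/-- Integrating a differential inequality forward in time. -/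
theorem le_of_deriv_le {f f' B B' : ℝ → ℝ} {a b : ℝ} (hab : a ≤ b)
    (hf : ∀ t ∈ Set.Icc a b, HasDerivWithinAt f (f' t) (Set.Ici a) t)
    (hB : ∀ t ∈ Set.Icc a b, HasDerivWithinAt B (B' t) (Set.Ici a) t)
    (h0 : f a ≤ B a) (h : ∀ t ∈ Set.Icc a b, f' t ≤ B' t) : f b ≤ B b :=
  image_le_of_deriv_right_le_deriv_boundary
    (fun t ht => ((hf t ht).continuousWithinAt).mono fun _ h => h.1)
    (fun t ht => (hf t ⟨ht.1, ht.2.le⟩).mono (Set.Ici_subset_Ici.2 ht.1)) h0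
    (fun t ht => ((hB t ht).continuousWithinAt).mono fun _ h => h.1)
    (fun t ht => (hB t ⟨ht.1, ht.2.le⟩).mono (Set.Ici_subset_Ici.2 ht.1))
    (fun t ht => h t ⟨ht.1, ht.2.le⟩) ⟨hab, le_rfl⟩

/-- Powers of `1 + t` are the comparison functions. -/
theorem hasDeriv_pow (p : ℝ) {t : ℝ} (ht : 0 ≤ t) :
    HasDerivAt (fun t : ℝ => (1 + t) ^ p) (p * (1 + t) ^ (p - 1)) t := by
  have h := ((hasDerivAt_id t).const_add 1).rpow_const (p := p) (Or.inl (by simp; linarith))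
  simpa using h

end Ap

namespace Ap
set_option linter.unusedVariables false

/-! ### Weights -/

/-- The square root of a positive smooth function. -/
def sqrtS (φ : Sm) (h : ∀ t x y, 0 < φ t x y) : Sm :=
  ⟨fun t x y => √(φ t x y), by
    change ContDiff ℝ (⊤ : ℕ∞) fun p : ℝ × ℝ × ℝ => √(φ p.1 p.2.1 p.2.2)
    exact φ.cd.sqrt fun p => (h _ _ _).ne'⟩

/-- The inverse of a positive smooth function. -/
def invS (φ : Sm) (h : ∀ t x y, 0 < φ t x y) : Sm :=
  ⟨fun t x y => (φ t x y)⁻¹, by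
    change ContDiff ℝ (⊤ : ℕ∞) fun p : ℝ × ℝ × ℝ => (φ p.1 p.2.1 p.2.2)⁻¹
    exact φ.cd.inv fun p => (h _ _ _).ne'⟩

/-- Composition of a smooth function of one variable with a smooth function. -/
def compS (g : ℝ → ℝ) (hg : ContDiff ℝ (⊤ : ℕ∞) g) (φ : Sm) : Sm :=
  ⟨fun t x y => g (φ t x y), by
    change ContDiff ℝ (⊤ : ℕ∞) fun p : ℝ × ℝ × ℝ => g (φ p.1 p.2.1 p.2.2)
    exact hg.comp φ.cd⟩

/-- `⟨x⟩ = (1 + |x|²)^{1/2}`, a smooth substitute for `|x|`. -/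
def cs : Sm := sqrtS (1 + cX ^ 2 + cY ^ 2) fun t x y => by
  simp only [Sm.add_ap, Sm.one_ap, Sm.pow_ap, cX_ap, cY_ap]; positivity

theorem cs_ap (t x y : ℝ) : cs t x y = √(1 + x ^ 2 + y ^ 2) := rfl
theorem cs_pos (t x y : ℝ) : 0 < cs t x y := by rw [cs_ap]; positivity

/-- `⟨x⟩⁻¹`. -/
def csI : Sm := invS cs cs_pos

theorem csI_ap (t x y : ℝ) : csI t x y = (cs t x y)⁻¹ := rfl

theorem cs_sq : cs * cs = 1 + cX ^ 2 + cY ^ 2 := Sm.ext' fun t x y => by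
  rw [Sm.mul_ap, cs_ap, Real.mul_self_sqrt (by positivity)]; rfl

theorem cs_csI : cs * csI = 1 := Sm.ext' fun t x y => mul_inv_cancel₀ (cs_pos t x y).ne'

theorem D_sq_eq (d : Derivation ℝ Sm Sm) {a aI b : Sm} (h : a * a = b) (hI : a * aI = 1) :
    d a = (1 / 2 : ℝ) • (aI * d b) := by
  rw [← h, Derivation.leibniz, smul_eq_mul]
  have : aI * (a * d a + a * d a) = (2 : ℝ) • (a * aI * d a) := by
    rw [two_smul]; ring
  rw [this, hI, smul_smul]; simp

theorem D_inv_eq (d : Derivation ℝ Sm Sm) {a aI : Sm} (hI : a * aI = 1) :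
    d aI = -(aI * aI * d a) := by
  have h := congrArg d hI
  rw [Derivation.leibniz, smul_eq_mul, smul_eq_mul, Derivation.map_one_eq_zero] at h
  have h2 : aI * (a * d aI + aI * d a) = 0 := by rw [h, mul_zero]
  have h3 : aI * (a * d aI + aI * d a) = (a * aI) * d aI + aI * aI * d a := by ring
  rw [h3, hI, one_mul] at h2
  exact eq_neg_of_add_eq_zero_left h2

theorem half_two (a : Sm) : (1 / 2 : ℝ) • (2 * a) = a := Sm.ext' fun t x y => by
  rw [Sm.smul_ap, Sm.mul_ap, Sm.ofNat_ap]; ring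

@[simp] theorem dt_cs : dt cs = 0 := by
  rw [D_sq_eq dt cs_sq cs_csI]; simp [pow_two]
@[simp] theorem d1_cs : d1 cs = cX * csI := by
  rw [D_sq_eq d1 cs_sq cs_csI]
  simp only [pow_two, map_add, Derivation.map_one_eq_zero, Derivation.leibniz, smul_eq_mul, d1_cX,
    d1_cY]
  rw [← half_two (cX * csI)]; ring_nf
@[simp] theorem d2_cs : d2 cs = cY * csI := by
  rw [D_sq_eq d2 cs_sq cs_csI]
  simp only [pow_two, map_add, Derivation.map_one_eq_zero, Derivation.leibniz, smul_eq_mul, d2_cX,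
    d2_cY]
  rw [← half_two (cY * csI)]; ring_nf

@[simp] theorem dt_csI : dt csI = 0 := by rw [D_inv_eq dt cs_csI]; simp
@[simp] theorem d1_csI : d1 csI = -(cX * csI ^ 3) := by rw [D_inv_eq d1 cs_csI, d1_cs]; ring
@[simp] theorem d2_csI : d2 csI = -(cY * csI ^ 3) := by rw [D_inv_eq d2 cs_csI, d2_cs]; ring

/-- A constant function. -/
def cst (c : ℝ) : Sm := algebraMap ℝ Sm c

@[simp] theorem cst_ap (c t x y : ℝ) : cst c t x y = c := rfl
@[simp] theorem D_cst (d : Derivation ℝ Sm Sm) (c : ℝ) : d (cst c) = 0 := d.map_algebraMap c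

/-- The weight `q = t + R + 2 - ⟨x⟩`, comparable to the distance to the light cone. -/
def qS (R : ℝ) : Sm := cT + cst (R + 2) - cs

theorem qS_ap (R t x y : ℝ) : qS R t x y = t + (R + 2) - √(1 + x ^ 2 + y ^ 2) := rfl

@[simp] theorem dt_qS (R : ℝ) : dt (qS R) = 1 := by simp [qS]
@[simp] theorem d1_qS (R : ℝ) : d1 (qS R) = -(cX * csI) := by simp [qS]
@[simp] theorem d2_qS (R : ℝ) : d2 (qS R) = -(cY * csI) := by simp [qS]

/-- The globally positive version `J = (1 + q²)^{1/2}` of the weight `q`. -/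
def JS (R : ℝ) : Sm := sqrtS (1 + qS R ^ 2) fun t x y => by
  simp only [Sm.add_ap, Sm.one_ap, Sm.pow_ap]; positivity

theorem JS_ap (R t x y : ℝ) : JS R t x y = √(1 + qS R t x y ^ 2) := rfl
theorem JS_pos (R t x y : ℝ) : 0 < JS R t x y := by rw [JS_ap]; positivity
theorem JS_ge_one (R t x y : ℝ) : 1 ≤ JS R t x y := by
  rw [JS_ap]; exact Real.one_le_sqrt.2 (by nlinarith [sq_nonneg (qS R t x y)])

/-- `J⁻¹`. -/
def JI (R : ℝ) : Sm := invS (JS R) (JS_pos R)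

theorem JI_ap (R t x y : ℝ) : JI R t x y = (JS R t x y)⁻¹ := rfl
theorem JS_sq (R : ℝ) : JS R * JS R = 1 + qS R ^ 2 := Sm.ext' fun t x y => by
  rw [Sm.mul_ap, JS_ap, Real.mul_self_sqrt (by positivity)]; rfl
theorem JS_JI (R : ℝ) : JS R * JI R = 1 := Sm.ext' fun t x y => mul_inv_cancel₀ (JS_pos R t x y).ne'

theorem D_JS (R : ℝ) (d : Derivation ℝ Sm Sm) : d (JS R) = JI R * qS R * d (qS R) := by
  rw [D_sq_eq d (JS_sq R) (JS_JI R)]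
  simp only [pow_two, map_add, Derivation.map_one_eq_zero, Derivation.leibniz, smul_eq_mul]
  rw [← half_two (JI R * qS R * d (qS R))]; ring_nf

theorem D_JI (R : ℝ) (d : Derivation ℝ Sm Sm) : d (JI R) = -(JI R ^ 3 * qS R * d (qS R)) := by
  rw [D_inv_eq d (JS_JI R), D_JS]; ring

/-! ### Divergence identities -/

/-- The energy density `(∂ₜφ)² + |∇φ|²`. -/
def e2 (φ : Sm) : Sm := dt φ ^ 2 + d1 φ ^ 2 + d2 φ ^ 2

theorem e2_ap (φ : Sm) (t x y : ℝ) :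
    e2 φ t x y = dt φ t x y ^ 2 + d1 φ t x y ^ 2 + d2 φ t x y ^ 2 := rfl

theorem e2_nonneg (φ : Sm) (t x y : ℝ) : 0 ≤ e2 φ t x y := by rw [e2_ap]; positivity

theorem Cs.e2 {R : ℝ} (hR : 1 ≤ R) {f : Sm} (hf : Cs R f) : Cs R (e2 f) :=
  (((hf.dt hR).sq).add ((hf.d1 hR).sq)).add ((hf.d2 hR).sq)

/-- The weighted energy identity. -/
theorem energy_ident (ψ φ : Sm) : dt (ψ * e2 φ) =
    d1 (2 * ψ * dt φ * d1 φ) + d2 (2 * ψ * dt φ * d2 φ)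
    + (dt ψ * e2 φ - 2 * dt φ * (d1 ψ * d1 φ + d2 ψ * d2 φ) + 2 * ψ * dt φ * box φ) := by
  have h2 : ∀ d : Derivation ℝ Sm Sm, d (2 : Sm) = 0 := fun d => d.map_natCast 2
  simp only [e2, box, pow_two, map_add, Derivation.leibniz, smul_eq_mul, d1_dt, d2_dt, d2_d1, h2]
  ring

/-- The scaling (Morawetz-type) identity with multiplier `2S + 1`. -/
theorem S_ident (φ : Sm) :
    dt (cT * e2 φ + 2 * dt φ * (cX * d1 φ + cY * d2 φ) + φ * dt φ) =
    d1 (2 * cT * dt φ * d1 φ + cX * dt φ ^ 2 + 2 * d1 φ * (cX * d1 φ + cY * d2 φ)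
      - cX * (d1 φ ^ 2 + d2 φ ^ 2) + φ * d1 φ)
    + d2 (2 * cT * dt φ * d2 φ + cY * dt φ ^ 2 + 2 * d2 φ * (cX * d1 φ + cY * d2 φ)
      - cY * (d1 φ ^ 2 + d2 φ ^ 2) + φ * d2 φ)
    + box φ * (2 * G 0 φ + φ) := by
  have h2 : ∀ d : Derivation ℝ Sm Sm, d (2 : Sm) = 0 := fun d => d.map_natCast 2
  simp only [e2, box, G0, pow_two, map_add, map_sub, Derivation.leibniz, smul_eq_mul, d1_dt, d2_dt,
    d2_d1, h2, dt_cT, dt_cX, dt_cY, d1_cT, d1_cX, d1_cY, d2_cT, d2_cX, d2_cY]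
  ring

/-! ### Pointwise inequalities for the vector fields -/

/-- `Σ_i |Γ_i φ|²`. -/
def GS (φ : Sm) : Sm := ∑ i, G i φ ^ 2

theorem GS_nonneg (φ : Sm) (t x y : ℝ) : 0 ≤ GS φ t x y := by
  rw [GS, Sm.sum_ap]; exact Finset.sum_nonneg fun i _ => sq_nonneg _

theorem G_le_GS (φ : Sm) (i : Fin 7) (t x y : ℝ) : |G i φ t x y| ≤ √(GS φ t x y) := by
  refine Real.le_sqrt_of_sq_le ?_
  rw [sq_abs, GS, Sm.sum_ap]
  exact Finset.single_le_sum (f := fun i => (G i φ ^ 2) t x y) (fun i _ => sq_nonneg _)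
    (Finset.mem_univ i)

theorem Cs.GS {R : ℝ} (hR : 1 ≤ R) {f : Sm} (hf : Cs R f) : Cs R (GS f) :=
  Cs.sum fun i _ => (hf.G hR i).sq

theorem radius_sq (x y : ℝ) : radius x y ^ 2 = x ^ 2 + y ^ 2 := Real.sq_sqrt (by positivity)
theorem radius_nonneg (x y : ℝ) : 0 ≤ radius x y := Real.sqrt_nonneg _
theorem abs_le_radius (x y : ℝ) : |x| ≤ radius x y := Real.abs_le_sqrt (by nlinarith [sq_nonneg y])
theorem abs_le_radius' (x y : ℝ) : |y| ≤ radius x y := Real.abs_le_sqrt (by nlinarith [sq_nonneg x])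

theorem radius_le_cs (t x y : ℝ) : radius x y ≤ cs t x y := by
  rw [cs_ap]; exact Real.sqrt_le_sqrt (by linarith)
theorem cs_le (t x y : ℝ) : cs t x y ≤ 1 + radius x y := by
  rw [cs_ap]
  refine Real.sqrt_le_iff.2 ⟨by linarith [radius_nonneg x y], ?_⟩
  nlinarith [radius_nonneg x y, radius_sq x y]
theorem one_le_cs (t x y : ℝ) : 1 ≤ cs t x y := by
  rw [cs_ap]; exact Real.one_le_sqrt.2 (by nlinarith [sq_nonneg x, sq_nonneg y])

theorem D_le_GS (φ : Sm) (b : Fin 3) (t x y : ℝ) : |D b φ t x y| ≤ √(GS φ t x y) := by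
  rw [D_eq_G]; exact G_le_GS φ _ t x y

/-- `|t - |x|| |∂φ| ≤ 2 |Γφ|`. -/
theorem tr_D (φ : Sm) (b : Fin 3) {t : ℝ} (ht : 0 ≤ t) (x y : ℝ) :
    |t - radius x y| * |D b φ t x y| ≤ 2 * √(GS φ t x y) := by
  set r := radius x y with hr
  set A := √(GS φ t x y) with hA
  have hr0 : 0 ≤ r := radius_nonneg x y
  have hA0 : 0 ≤ A := Real.sqrt_nonneg _
  have hx : |x| ≤ r := abs_le_radius x y
  have hy : |y| ≤ r := abs_le_radius' x y
  have hrr : r ^ 2 = x ^ 2 + y ^ 2 := radius_sq x y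
  rcases eq_or_lt_of_le (add_nonneg ht hr0) with h0 | h0
  · have : t - r = 0 := by linarith
    rw [this]; simp; positivity
  have g0 := G_le_GS φ 0 t x y
  have g1 := G_le_GS φ 1 t x y
  have g2 := G_le_GS φ 2 t x y
  have g3 := G_le_GS φ 3 t x y
  rw [← hA] at g0 g1 g2 g3
  have comb : ∀ (a b c d : ℝ) (p0 p1 p2 : ℝ), |a| ≤ r → |b| ≤ r → |p0| ≤ A → |p1| ≤ A → |p2| ≤ A →
      |t * p0 + a * p1 + b * p2| ≤ (t + r) * (2 * A) := by
    intro a b c d p0 p1 p2 ha hb h0 h1 h2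
    have e1 : |t * p0| ≤ t * A := by rw [abs_mul, abs_of_nonneg ht]; gcongr
    have e2 : |a * p1| ≤ r * A := by rw [abs_mul]; gcongr
    have e3 : |b * p2| ≤ r * A := by rw [abs_mul]; gcongr
    have := abs_add_three (t * p0) (a * p1) (b * p2)
    nlinarith [mul_nonneg ht hA0]
  have fin : ∀ v : ℝ, |(t ^ 2 - r ^ 2) * v| ≤ (t + r) * (2 * A) → |t - r| * |v| ≤ 2 * A := by
    intro v hv
    have e : (t ^ 2 - r ^ 2) * v = (t + r) * ((t - r) * v) := by ring
    rw [e, abs_mul, abs_of_pos h0, abs_mul] at hv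
    exact le_of_mul_le_mul_left hv h0
  apply fin
  fin_cases b
  · have := comb (-x) (-y) 0 0 _ _ _ (by rwa [abs_neg]) (by rwa [abs_neg]) g0 g1 g2
    convert this using 2
    rw [hrr]
    simp only [Fin.mk_zero, Fin.zero_eta, Fin.isValue, D0, G0, G1, G2, Sm.add_ap, Sm.mul_ap, cT_ap, cX_ap, cY_ap]
    ring
  · have := comb (-x) y 0 0 _ _ _ (by rwa [abs_neg]) hy g1 g0 g3
    convert this using 2
    rw [hrr]
    simp only [Fin.mk_one, Fin.isValue, D1, G0, G1, G3, Sm.add_ap, Sm.sub_ap, Sm.mul_ap, cT_ap, cX_ap, cY_ap]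
    ring
  · have := comb (-y) (-x) 0 0 _ _ _ (by rwa [abs_neg]) (by rwa [abs_neg]) g2 g0 g3
    convert this using 2
    rw [hrr]
    simp only [Fin.reduceFinMk, Fin.isValue, D2, G0, G2, G3, Sm.add_ap, Sm.sub_ap, Sm.mul_ap, cT_ap, cX_ap, cY_ap]
    ring

/-- Facts about the weight inside the domain of influence. -/
theorem q_facts {R t x y : ℝ} (hR : 1 ≤ R) (ht : 0 ≤ t) (hr : x ^ 2 + y ^ 2 < (t + R) ^ 2) :
    1 ≤ qS R t x y ∧ radius x y < t + R ∧ qS R t x y ≤ t + R + 2 - radius x y ∧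
    t + R + 1 - radius x y ≤ qS R t x y ∧ qS R t x y ≤ JS R t x y ∧ JS R t x y ≤ 2 * qS R t x y ∧
    qS R t x y ≤ (R + 1) * (1 + t) := by
  have h1 : radius x y < t + R := by
    rw [radius]; exact (Real.sqrt_lt' (by linarith)).2 hr
  have e : qS R t x y = t + (R + 2) - cs t x y := rfl
  have c1 := radius_le_cs t x y
  have c2 := cs_le t x y
  have c3 := one_le_cs t x y
  have hq : 1 ≤ qS R t x y := by rw [e]; linarith
  refine ⟨hq, h1, by rw [e]; linarith, by rw [e]; linarith, ?_, ?_, ?_⟩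
  · rw [JS_ap]; exact Real.le_sqrt_of_sq_le (by linarith)
  · rw [JS_ap]; exact Real.sqrt_le_iff.2 ⟨by linarith, by nlinarith⟩
  · rw [e]; nlinarith

/-- `q |∂φ| ≤ C |Γφ|` inside the domain of influence. -/
theorem q_D {R : ℝ} (hR : 1 ≤ R) (φ : Sm) (b : Fin 3) {t x y : ℝ} (ht : 0 ≤ t)
    (hr : x ^ 2 + y ^ 2 < (t + R) ^ 2) :
    qS R t x y * |D b φ t x y| ≤ (R + 4) * √(GS φ t x y) := by
  obtain ⟨h1, h2, h3, h4, -⟩ := q_facts hR ht hr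
  have a := tr_D φ b ht x y
  have b' := D_le_GS φ b t x y
  have : qS R t x y ≤ |t - radius x y| + (R + 2) := by
    have := le_abs_self (t - radius x y); linarith
  have c : qS R t x y * |D b φ t x y| ≤ (|t - radius x y| + (R + 2)) * |D b φ t x y| := by gcongr
  nlinarith

/-- Differentiating the energy with weight `q` in time produces the quadratic form on the left. It
involves only tangential derivatives, each of which gains `(1 + t)⁻¹` over the vector fields. -/
theorem good_e2 (φ : Sm) {t : ℝ} (ht : 0 ≤ t) (x y : ℝ) :
    (1 + t) ^ 2 * (e2 φ t x y + 2 * dt φ t x y * (x * d1 φ t x y + y * d2 φ t x y) * csI t x y)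
      ≤ 108 * GS φ t x y := by
  set A := √(GS φ t x y) with hA
  have hA0 : 0 ≤ A := Real.sqrt_nonneg _
  have hAA : A ^ 2 = GS φ t x y := Real.sq_sqrt (GS_nonneg φ t x y)
  set s := cs t x y with hs
  have s1 : 1 ≤ s := one_le_cs t x y
  have ss : s ^ 2 = 1 + x ^ 2 + y ^ 2 := by
    rw [hs, cs_ap]; exact Real.sq_sqrt (by positivity)
  have s0 : 0 < s := by linarith
  have rs := radius_le_cs t x y
  have sr := cs_le t x y
  rw [← hs] at rs sr
  set r := radius x y
  have a0 : |dt φ t x y| ≤ A := D_le_GS φ 0 t x y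
  have a1 : |d1 φ t x y| ≤ A := D_le_GS φ 1 t x y
  have a2 : |d2 φ t x y| ≤ A := D_le_GS φ 2 t x y
  have ats : |t - s| * |dt φ t x y| ≤ 3 * A := by
    have h := tr_D φ 0 ht x y
    have : |t - s| ≤ |t - r| + 1 := by
      have := abs_sub_le t r s
      have : |r - s| ≤ 1 := abs_le.2 ⟨by linarith, by linarith⟩
      linarith
    have h' : |t - s| * |dt φ t x y| ≤ (|t - r| + 1) * |dt φ t x y| := by gcongr
    have : |t - r| * |dt φ t x y| ≤ 2 * A := h
    nlinarith
  have l1 : |t * d1 φ t x y + x * dt φ t x y| ≤ A := G_le_GS φ 1 t x y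
  have l2 : |t * d2 φ t x y + y * dt φ t x y| ≤ A := G_le_GS φ 2 t x y
  set ft := dt φ t x y
  set f1 := d1 φ t x y
  set f2 := d2 φ t x y
  have xs : |x / s| ≤ 1 := by
    rw [abs_div, abs_of_pos s0, div_le_one s0]; exact (abs_le_radius x y).trans rs
  have ys : |y / s| ≤ 1 := by
    rw [abs_div, abs_of_pos s0, div_le_one s0]; exact (abs_le_radius' x y).trans rs
  -- each tangential derivative gains a factor `1 + t`
  have gen : ∀ (z f : ℝ), |z / s| ≤ 1 → |f| ≤ A → |t * f + z * ft| ≤ A →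
      ((1 + t) * (f + z / s * ft)) ^ 2 ≤ 36 * A ^ 2 := by
    intro z f hz hf hl
    have e : (1 + t) * (f + z / s * ft) = f + z / s * ft + (t * f + z * ft)
        + z / s * ((t - s) * ft) := by field_simp; ring
    have b1 : |z / s * ft| ≤ 1 * A := by rw [abs_mul]; gcongr
    have b2 : |z / s * ((t - s) * ft)| ≤ 1 * (3 * A) := by
      rw [abs_mul, abs_mul]; gcongr
    have : |(1 + t) * (f + z / s * ft)| ≤ 6 * A := by
      rw [e]
      have c1 := abs_add_le (f + z / s * ft + (t * f + z * ft)) (z / s * ((t - s) * ft))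
      have c2 := abs_add_le (f + z / s * ft) (t * f + z * ft)
      have c3 := abs_add_le f (z / s * ft)
      linarith
    have := sq_le_sq' (by linarith [neg_abs_le ((1 + t) * (f + z / s * ft))])
      ((le_abs_self _).trans this)
    nlinarith
  have g1 := gen x f1 xs a1 l1
  have g2 := gen y f2 ys a2 l2
  have g0 : ((1 + t) * (ft / s)) ^ 2 ≤ 36 * A ^ 2 := by
    have i1 : |1 / s| ≤ 1 := by rw [abs_of_pos (by positivity)]; rw [div_le_one s0]; exact s1
    have e : (1 + t) * (ft / s) = 1 / s * ft + ft + 1 / s * ((t - s) * ft) := by field_simp; ring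
    have b1 : |1 / s * ft| ≤ 1 * A := by rw [abs_mul]; gcongr
    have b2 : |1 / s * ((t - s) * ft)| ≤ 1 * (3 * A) := by
      rw [abs_mul, abs_mul]; gcongr
    have : |(1 + t) * (ft / s)| ≤ 6 * A := by
      rw [e]
      have c1 := abs_add_le (1 / s * ft + ft) (1 / s * ((t - s) * ft))
      have c2 := abs_add_le (1 / s * ft) ft
      linarith
    have := sq_le_sq' (by linarith [neg_abs_le ((1 + t) * (ft / s))])
      ((le_abs_self _).trans this)
    nlinarith
  have id : (1 + t) ^ 2 * (e2 φ t x y + 2 * ft * (x * f1 + y * f2) * csI t x y) =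
      ((1 + t) * (f1 + x / s * ft)) ^ 2 + ((1 + t) * (f2 + y / s * ft)) ^ 2
      + ((1 + t) * (ft / s)) ^ 2 := by
    have e : (1 : ℝ) = (1 + x ^ 2 + y ^ 2) / s ^ 2 := by rw [← ss]; field_simp
    rw [e2_ap, csI_ap]
    change (1 + t) ^ 2 * (ft ^ 2 + f1 ^ 2 + f2 ^ 2 + 2 * ft * (x * f1 + y * f2) * s⁻¹) = _
    have : ft ^ 2 = ft ^ 2 * ((1 + x ^ 2 + y ^ 2) / s ^ 2) := by rw [← e, mul_one]
    rw [this]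
    field_simp
    ring
  rw [id, ← hAA]; linarith

end Ap

namespace Ap
set_option linter.unusedVariables false

/-! ### Hardy's inequality with a weight singular at the cone -/

/-- A Hardy inequality at the light cone, `∫ |φ / J|² ≤ 16 ∫ |∇φ|²`, obtained by integrating the
divergence of `(x / ⟨x⟩) J⁻¹ φ²`. -/
theorem hardy {R : ℝ} (hR : 1 ≤ R) {φ : Sm} (hφ : Cs R φ) {t : ℝ} (ht : 0 ≤ t) :
    I ((φ * JI R) ^ 2) t ≤ 16 * I (d1 φ ^ 2 + d2 φ ^ 2) t := by
  have hR0 : (0 : ℝ) ≤ R := by linarith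
  set f1 : Sm := cX * csI * JI R * φ ^ 2
  set f2 : Sm := cY * csI * JI R * φ ^ 2
  have h1 : Cs R f1 := hφ.sq.mul_left _
  have h2 : Cs R f2 := hφ.sq.mul_left _
  have hd : Cs R (d1 f1 + d2 f2) := (h1.d1 hR).add (h2.d2 hR)
  have z : I (d1 f1 + d2 f2) t = 0 := by
    rw [I_add (h1.d1 hR) (h2.d2 hR) hR0 ht, I_d1 h1 hR ht, I_d2 h2 hR ht, add_zero]
  have ha : Cs R ((φ * JI R) ^ 2) := (hφ.mul_right _).sq
  have hb : Cs R (d1 φ ^ 2 + d2 φ ^ 2) := (hφ.d1 hR).sq.add (hφ.d2 hR).sq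
  have key : I ((φ * JI R) ^ 2) t ≤
      I ((16 : ℝ) • (d1 φ ^ 2 + d2 φ ^ 2) + (4 : ℝ) • (d1 f1 + d2 f2)) t := by
    refine I_mono_on ha ((hb.smul _).add (hd.smul _)) hR0 ht fun x y hr => ?_
    obtain ⟨q1, -, -, -, q2, q3, -⟩ := q_facts hR ht hr
    have cI : cs t x y * csI t x y = 1 := by rw [← Sm.mul_ap, cs_csI]; rfl
    have cc : cs t x y * cs t x y = 1 + x ^ 2 + y ^ 2 := by
      rw [← Sm.mul_ap, cs_sq]; simp
    have jI : JS R t x y * JI R t x y = 1 := by rw [← Sm.mul_ap, JS_JI]; rfl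
    have c1 := one_le_cs t x y
    have j1 := JS_ge_one R t x y
    simp only [f1, f2, pow_two, Derivation.leibniz, smul_eq_mul, d1_csI, d2_csI, D_JI, d1_qS, d2_qS,
      d1_cX, d2_cY, Sm.add_ap, Sm.mul_ap, Sm.neg_ap, Sm.smul_ap, Sm.pow_ap, Sm.one_ap, cX_ap, cY_ap,
      Sm.zero_ap]
    generalize qS R t x y = q at *
    generalize JS R t x y = js at *
    generalize JI R t x y = j at *
    generalize cs t x y = s at *
    generalize csI t x y = c at *
    generalize φ t x y = p
    generalize d1 φ t x y = a
    generalize d2 φ t x y = b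
    have hc0 : 0 < c := by by_contra hc; nlinarith
    have hj0 : 0 < j := by by_contra hc; nlinarith
    have hc1 : c ≤ 1 := by nlinarith
    have hj1 : j ≤ 1 := by nlinarith
    have hjq : 1 ≤ 2 * q * j := by nlinarith
    have hrc : (x ^ 2 + y ^ 2) * c ^ 2 = 1 - c ^ 2 := by
      have : (s * c) ^ 2 = 1 := by rw [cI]; norm_num
      nlinarith
    have br : 1 / 2 * j ^ 2 ≤ c * j * (1 + c ^ 2) + (1 - c ^ 2) * j ^ 3 * q := by
      have e1 : (1 - c ^ 2) * (j ^ 2 * (2 * q * j)) ≥ (1 - c ^ 2) * (j ^ 2 * 1) := by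
        have : 0 ≤ 1 - c ^ 2 := by nlinarith
        gcongr
      have e2 : c * j ≥ c ^ 2 * j ^ 2 := by
        have : c * j ≤ 1 := by nlinarith
        nlinarith [mul_pos hc0 hj0]
      have e3 : 0 ≤ c * j * c ^ 2 := by positivity
      nlinarith
    have sch : (c * (x * a + y * b)) ^ 2 ≤ a ^ 2 + b ^ 2 := by
      have e1 : (x * a + y * b) ^ 2 ≤ (x ^ 2 + y ^ 2) * (a ^ 2 + b ^ 2) := by
        nlinarith [sq_nonneg (x * b - y * a)]
      have e2 : (c * (x * a + y * b)) ^ 2 ≤ c ^ 2 * ((x ^ 2 + y ^ 2) * (a ^ 2 + b ^ 2)) := by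
        rw [mul_pow]; gcongr
      nlinarith [mul_nonneg (sq_nonneg c) (add_nonneg (sq_nonneg a) (sq_nonneg b))]
    have yg : 0 ≤ 1 / 4 * (j * p) ^ 2 + 2 * (j * p) * (c * (x * a + y * b))
        + 4 * (c * (x * a + y * b)) ^ 2 := by
      nlinarith [sq_nonneg (j * p / 2 + 2 * (c * (x * a + y * b)))]
    have br2 := mul_le_mul_of_nonneg_right br (sq_nonneg p)
    have e : (c * j * (1 + c ^ 2) + (1 - c ^ 2) * j ^ 3 * q) * p ^ 2 =
        (2 * c * j - ((x ^ 2 + y ^ 2) * c ^ 2) * c * j + ((x ^ 2 + y ^ 2) * c ^ 2) * j ^ 3 * q)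
          * p ^ 2 := by rw [hrc]; ring
    rw [e] at br2
    linarith
  rw [I_add (hb.smul _) (hd.smul _) hR0 ht, I_smul, I_smul, z, mul_zero, add_zero] at key
  exact key

/-! ### Sums over words -/

/-- The sum of the squares of `Γ^w φ` over words of length at most `m`. -/
def WS (m : ℕ) (φ : Sm) : Sm := ∑ w ∈ words m, W w φ ^ 2

theorem WS_nonneg (m : ℕ) (φ : Sm) (t x y : ℝ) : 0 ≤ WS m φ t x y := by
  rw [WS, Sm.sum_ap]; exact Finset.sum_nonneg fun i _ => sq_nonneg _

theorem W_sq_le (m : ℕ) {w : List (Fin 7)} (hw : w.length ≤ m) (φ : Sm) (t x y : ℝ) :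
    W w φ t x y ^ 2 ≤ WS m φ t x y := by
  rw [WS, Sm.sum_ap]
  exact Finset.single_le_sum (f := fun w => (W w φ ^ 2) t x y) (fun i _ => sq_nonneg _)
    (mem_words.2 hw)

theorem W_abs_le (m : ℕ) {w : List (Fin 7)} (hw : w.length ≤ m) (φ : Sm) (t x y : ℝ) :
    |W w φ t x y| ≤ √(WS m φ t x y) :=
  Real.abs_le_sqrt (W_sq_le m hw φ t x y)

theorem Cs.WS {R : ℝ} (hR : 1 ≤ R) {f : Sm} (hf : Cs R f) (m : ℕ) : Cs R (WS m f) :=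
  Cs.sum fun w _ => (hf.W hR w).sq

theorem GS_W_le (m : ℕ) {w : List (Fin 7)} (hw : w.length + 1 ≤ m) (φ : Sm) (t x y : ℝ) :
    GS (W w φ) t x y ≤ 9 * WS m φ t x y := by
  rw [GS, Sm.sum_ap]
  have : ∀ i : Fin 7, (G i (W w φ) ^ 2) t x y ≤ WS m φ t x y := fun i => by
    have := W_sq_le m (w := w ++ [i]) (by simpa using hw) φ t x y
    rwa [W_append, W_cons, W_nil] at this
  have h2 := Finset.sum_le_card_nsmul Finset.univ (fun i : Fin 7 => (G i (W w φ) ^ 2) t x y) _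
    (fun i _ => this i)
  have := WS_nonneg m φ t x y
  simp at h2 ⊢
  linarith

theorem sqrt_GS_W_le (m : ℕ) {w : List (Fin 7)} (hw : w.length + 1 ≤ m) (φ : Sm) (t x y : ℝ) :
    √(GS (W w φ) t x y) ≤ 3 * √(WS m φ t x y) := by
  refine Real.sqrt_le_iff.2 ⟨by positivity, ?_⟩
  rw [mul_pow, Real.sq_sqrt (WS_nonneg _ _ _ _ _)]
  have := GS_W_le m hw φ t x y
  linarith

/-! ### One-dimensional Sobolev inequalities -/

theorem abs_le_integral_deriv {f f' : ℝ → ℝ} (hf : ∀ x, HasDerivAt f (f' x) x)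
    (hc : Continuous f') (hs : HasCompactSupport f) (x : ℝ) : |f x| ≤ ∫ s, |f' s| := by
  have hd : deriv f = f' := funext fun x => (hf x).deriv
  have h1 : ContDiff ℝ 1 f := contDiff_one_iff_deriv.2
    ⟨fun x => (hf x).differentiableAt, by rwa [hd]⟩
  have e := hs.integral_Iic_deriv_eq h1 x
  have hs' : HasCompactSupport f' := hd ▸ hs.deriv
  have hi : Integrable f' := hc.integrable_of_hasCompactSupport hs'
  rw [← e, hd]
  calc |∫ b in Set.Iic x, f' b| ≤ ∫ b in Set.Iic x, |f' b| := abs_integral_le_integral_abs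
    _ ≤ _ := setIntegral_le_integral hi.abs (Eventually.of_forall fun _ => abs_nonneg _)

/-- The embedding `W^{2,1} ⊂ L^∞` of the plane: `|F| ≤ ∫ |∂₁∂₂F|`. -/
theorem sob_plane {R : ℝ} (hR : 1 ≤ R) {F H : Sm} (hF : Cs R F) (hH : Cs R H) {t : ℝ}
    (ht : 0 ≤ t) (h : ∀ x y, |d1 (d2 F) t x y| ≤ H t x y) (x y : ℝ) : |F t x y| ≤ I H t := by
  have hR0 : (0 : ℝ) ≤ R := by linarith
  have h2 := hF.d2 hR
  have h12 := h2.d1 hR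
  have s1 : |F t x y| ≤ ∫ v, |d2 F t x v| :=
    abs_le_integral_deriv (fun v => hasDerivAt_2 F t x v) ((d2 F).cont_2 t x)
      (hcs_slice2 hF hR0 ht x) y
  have s2 : ∀ v, |d2 F t x v| ≤ ∫ z, H t z v := fun v =>
    (abs_le_integral_deriv (fun z => hasDerivAt_1 (d2 F) t z v) ((d1 (d2 F)).cont_1 t v)
      (hcs_slice1 h2 hR0 ht v) x).trans <| integral_mono
        ((((d1 (d2 F)).cont_1 t v).integrable_of_hasCompactSupport (hcs_slice1 h12 hR0 ht v)).abs)
        ((H.cont_1 t v).integrable_of_hasCompactSupport (hcs_slice1 hH hR0 ht v))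
        (fun z => h z v)
  have hi := hH.integrable hR0 ht
  have e : I H t = ∫ v, ∫ z, H t z v :=
    integral_prod_symm (μ := (volume : Measure ℝ)) (ν := (volume : Measure ℝ)) _ hi
  rw [e]
  refine s1.trans (integral_mono
    ((((d2 F).cont_2 t x).integrable_of_hasCompactSupport (hcs_slice2 h2 hR0 ht x)).abs)
    ?_ s2)
  exact hi.integral_prod_right (μ := (volume : Measure ℝ)) (ν := (volume : Measure ℝ))

/-- A Sobolev inequality on the circle. -/
theorem sob_circle {g g' k : ℝ → ℝ} {A B : ℝ} (hg : ∀ s, HasDerivAt g (g' s) s)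
    (hc' : Continuous g') (hk : Continuous k) (h0 : ∀ s, |g s| ≤ A * k s)
    (h1 : ∀ s, |g' s| ≤ B * k s) {s : ℝ} (hs : s ∈ Set.Icc (-π) π) :
    g s ≤ (A + B) * ∫ v in (-π)..π, k v := by
  have hc : Continuous g := continuous_iff_continuousAt.2 fun s => (hg s).continuousAt
  have hpi := Real.pi_pos
  have hpi3 := Real.pi_gt_three
  set K := ∫ v in (-π)..π, k v
  have hB : ∫ v in (-π)..π, |g' v| ≤ B * K := by
    rw [← intervalIntegral.integral_const_mul]
    exact intervalIntegral.integral_mono_on (by linarith) (hc'.abs.intervalIntegrable _ _)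
      ((continuous_const.mul hk).intervalIntegrable _ _) fun v _ => h1 v
  have hA : ∫ v in (-π)..π, |g v| ≤ A * K := by
    rw [← intervalIntegral.integral_const_mul]
    exact intervalIntegral.integral_mono_on (by linarith) (hc.abs.intervalIntegrable _ _)
      ((continuous_const.mul hk).intervalIntegrable _ _) fun v _ => h0 v
  have diff : ∀ v ∈ Set.Icc (-π) π, g s - g v ≤ B * K := by
    intro v hv
    have e : ∫ z in v..s, g' z = g s - g v :=
      intervalIntegral.integral_eq_sub_of_hasDerivAt (fun z _ => hg z) (hc'.intervalIntegrable _ _)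
    rw [← e]
    refine (le_abs_self _).trans ?_
    rw [← Real.norm_eq_abs]
    refine (intervalIntegral.norm_integral_le_integral_norm_uIoc).trans ?_
    refine le_trans ?_ hB
    rw [intervalIntegral.integral_of_le (by linarith : -π ≤ π)]
    refine setIntegral_mono_set ?_ (Eventually.of_forall fun _ => abs_nonneg _) ?_
    · exact (hc'.abs.integrableOn_Icc (a := -π) (b := π)).mono_set Set.Ioc_subset_Icc_self
    · refine LE.le.eventuallyLE ?_
      rw [Set.uIoc]
      exact Set.Ioc_subset_Ioc (le_min hv.1 hs.1) (max_le hv.2 hs.2)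
  have fin : ∫ v in (-π)..π, (g s - B * K) ≤ ∫ v in (-π)..π, |g v| := by
    refine intervalIntegral.integral_mono_on (by linarith) (by simp)
      (hc.abs.intervalIntegrable _ _) fun v hv => ?_
    have := diff v hv
    have := le_abs_self (g v)
    linarith
  rw [intervalIntegral.integral_const, smul_eq_mul] at fin
  have : (2 * π) * (g s - B * K) ≤ A * K := by linarith
  have AK : 0 ≤ A * K := le_trans (intervalIntegral.integral_nonneg (by linarith) fun v _ => abs_nonneg _) hA
  by_contra hcon
  push Not at hcon
  nlinarith

end Ap

namespace Ap
set_option linter.unusedVariables false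

/-! ### A weighted Klainerman–Sobolev inequality -/

/-- The radial integral of `H` along the ray of angle `s`. -/
def rayInt (R : ℝ) (H : Sm) (t s : ℝ) : ℝ :=
  ∫ ρ in (0 : ℝ)..(t + R), ρ * H t (ρ * cos s) (ρ * sin s)

theorem Sm.cont_polar (H : Sm) (t : ℝ) :
    Continuous fun p : ℝ × ℝ => H t (p.1 * cos p.2) (p.1 * sin p.2) :=
  H.cont.comp (f := fun p : ℝ × ℝ => ((t, p.1 * cos p.2, p.1 * sin p.2) : ℝ × ℝ × ℝ))
    (by fun_prop)

theorem rayInt_cont (R : ℝ) (H : Sm) (t : ℝ) : Continuous (rayInt R H t) := by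
  refine intervalIntegral.continuous_parametric_intervalIntegral_of_continuous'
    (f := fun s ρ => ρ * H t (ρ * cos s) (ρ * sin s)) ?_ 0 (t + R)
  have : Continuous fun p : ℝ × ℝ => p.2 * H t (p.2 * cos p.1) (p.2 * sin p.1) :=
    continuous_snd.mul ((H.cont_polar t).comp (f := fun p : ℝ × ℝ => (p.2, p.1)) (by fun_prop))
  exact this

theorem polar_sq (r s : ℝ) : (r * cos s) ^ 2 + (r * sin s) ^ 2 = r ^ 2 := by
  nlinarith [Real.sin_sq_add_cos_sq s]

/-- The integral over a time slice in polar coordinates. -/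
theorem I_polar {R : ℝ} (hR : 1 ≤ R) {H : Sm} (hH : Cs R H) {t : ℝ} (ht : 0 ≤ t) :
    ∫ s in (-π)..π, rayInt R H t s = I H t := by
  have hpi := Real.pi_pos
  have e := integral_comp_polarCoord_symm (fun x : ℝ × ℝ => H t x.1 x.2)
  rw [I, ← e, polarCoord_target]
  simp only [polarCoord_symm_apply, smul_eq_mul]
  have sub : Set.Ioc 0 (t + R) ×ˢ Set.Ioo (-π) π ⊆ Set.Ioi (0 : ℝ) ×ˢ Set.Ioo (-π) π :=
    Set.prod_mono (fun x hx => hx.1) subset_rfl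
  have c : Continuous fun p : ℝ × ℝ => p.1 * H t (p.1 * cos p.2) (p.1 * sin p.2) :=
    continuous_fst.mul (H.cont_polar t)
  have hi : IntegrableOn (fun p : ℝ × ℝ => p.1 * H t (p.1 * cos p.2) (p.1 * sin p.2))
      (Set.Ioc 0 (t + R) ×ˢ Set.Ioo (-π) π) :=
    (c.continuousOn.integrableOn_compact (isCompact_Icc.prod isCompact_Icc)
      (K := Set.Icc 0 (t + R) ×ˢ Set.Icc (-π) π)).mono_set
      (Set.prod_mono Set.Ioc_subset_Icc_self Set.Ioo_subset_Icc_self)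
  have e1 : ∫ p in Set.Ioi (0 : ℝ) ×ˢ Set.Ioo (-π) π, p.1 * H t (p.1 * cos p.2) (p.1 * sin p.2) =
      ∫ p in Set.Ioc 0 (t + R) ×ˢ Set.Ioo (-π) π, p.1 * H t (p.1 * cos p.2) (p.1 * sin p.2) := by
    refine setIntegral_eq_of_subset_of_forall_sdiff_eq_zero
      (measurableSet_Ioi.prod measurableSet_Ioo) sub fun p hp => ?_
    have h1 : t + R < p.1 := by
      by_contra hcon
      exact hp.2 ⟨⟨hp.1.1, not_lt.1 hcon⟩, hp.1.2⟩
    rw [hH t _ _ ht (by rw [polar_sq]; gcongr), mul_zero]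
  rw [e1]
  rw [Measure.volume_eq_prod] at hi ⊢
  refine Eq.symm ((setIntegral_prod_swap _ _ _).symm.trans ?_)
  refine (setIntegral_prod _ hi.swap).trans (Eq.symm ?_)
  rw [intervalIntegral.integral_of_le (by linarith), integral_Ioc_eq_integral_Ioo]
  refine setIntegral_congr_fun measurableSet_Ioo fun s _ => ?_
  simp only [rayInt, Prod.swap]
  rw [intervalIntegral.integral_of_le (by linarith)]
  rfl

theorem abs_mul_add_le {a b c d M : ℝ} (ha : |a| ≤ 1) (hb : |b| ≤ 1) (hc : |c| ≤ M)
    (hd : |d| ≤ M) : |a * c + b * d| ≤ 2 * M := by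
  have h1 : |a * c| ≤ 1 * M := by rw [abs_mul]; gcongr
  have h2 : |b * d| ≤ 1 * M := by rw [abs_mul]; gcongr
  exact (abs_add_le _ _).trans (by linarith)

/-- Integrating `∂_ρ(ρ f)` along a ray from the boundary of the support. -/
theorem ray_bound {R : ℝ} (hR : 1 ≤ R) {f H : Sm} (hf : Cs R f) {t C : ℝ} (ht : 0 ≤ t) (hC : 0 ≤ C)
    (hH : ∀ x y, 0 ≤ H t x y) {ρ₀ : ℝ} (h0 : 0 < ρ₀) (h1 : ρ₀ < t + R)
    (hb : ∀ x y, x ^ 2 + y ^ 2 < (t + R) ^ 2 → ρ₀ ≤ radius x y →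
      |f t x y| ≤ C * (radius x y * H t x y) ∧ |d1 f t x y| ≤ C * H t x y ∧
      |d2 f t x y| ≤ C * H t x y) (s : ℝ) :
    |ρ₀ * f t (ρ₀ * cos s) (ρ₀ * sin s)| ≤ 3 * C * rayInt R H t s := by
  have hder : ∀ ρ, HasDerivAt (fun ρ => ρ * f t (ρ * cos s) (ρ * sin s))
      (f t (ρ * cos s) (ρ * sin s) +
        ρ * (cos s * d1 f t (ρ * cos s) (ρ * sin s) + sin s * d2 f t (ρ * cos s) (ρ * sin s))) ρ := by
    intro ρ
    have a := f.hasDerivAt_curve (a := fun _ => t) (b := fun ρ => ρ * cos s)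
      (c := fun ρ => ρ * sin s) (hasDerivAt_const ρ t) ((hasDerivAt_id ρ).mul_const (cos s))
      ((hasDerivAt_id ρ).mul_const (sin s))
    have := (hasDerivAt_id ρ).mul a
    simp only [id, one_mul, zero_mul, zero_add] at this
    exact this
  have cp : ∀ g : Sm, Continuous fun ρ => g t (ρ * cos s) (ρ * sin s) := fun g =>
    (g.cont_polar t).comp (f := fun ρ : ℝ => (ρ, s)) (by fun_prop)
  have cd : Continuous fun ρ => (f t (ρ * cos s) (ρ * sin s) +
        ρ * (cos s * d1 f t (ρ * cos s) (ρ * sin s) + sin s * d2 f t (ρ * cos s) (ρ * sin s))) :=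
    (cp f).add (continuous_id.mul (((cp (d1 f)).const_mul _).add ((cp (d2 f)).const_mul _)))
  have cH : Continuous fun ρ => ρ * H t (ρ * cos s) (ρ * sin s) := continuous_id.mul (cp H)
  have ftc := intervalIntegral.integral_eq_sub_of_hasDerivAt (a := ρ₀) (b := t + R)
    (fun ρ _ => hder ρ) (cd.intervalIntegrable _ _)
  have z : f t ((t + R) * cos s) ((t + R) * sin s) = 0 := hf t _ _ ht (by rw [polar_sq])
  rw [z, mul_zero, zero_sub] at ftc
  rw [← abs_neg, ← ftc]
  have b1 := intervalIntegral.abs_integral_le_integral_abs h1.le (μ := volume)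
    (f := fun ρ => (f t (ρ * cos s) (ρ * sin s) +
        ρ * (cos s * d1 f t (ρ * cos s) (ρ * sin s) + sin s * d2 f t (ρ * cos s) (ρ * sin s))))
  refine b1.trans ?_
  have b2 : ∫ ρ in ρ₀..(t + R), |f t (ρ * cos s) (ρ * sin s) +
        ρ * (cos s * d1 f t (ρ * cos s) (ρ * sin s) + sin s * d2 f t (ρ * cos s) (ρ * sin s))| ≤
      ∫ ρ in ρ₀..(t + R), 3 * C * (ρ * H t (ρ * cos s) (ρ * sin s)) := by
    refine intervalIntegral.integral_mono_on_of_le_Ioo h1.le (cd.abs.intervalIntegrable _ _)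
      ((continuous_const.mul cH).intervalIntegrable _ _) fun ρ hρ => ?_
    have hρ0 : 0 < ρ := h0.trans hρ.1
    have er : radius (ρ * cos s) (ρ * sin s) = ρ := by
      rw [radius, polar_sq, Real.sqrt_sq hρ0.le]
    obtain ⟨k1, k2, k3⟩ := hb (ρ * cos s) (ρ * sin s)
      (by rw [polar_sq]; exact pow_lt_pow_left₀ hρ.2 hρ0.le two_ne_zero) (by rw [er]; exact hρ.1.le)
    rw [er] at k1
    refine (abs_add_le _ _).trans ?_
    have k4 := abs_mul_add_le (Real.abs_cos_le_one s) (Real.abs_sin_le_one s) k2 k3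
    have k5 : |ρ * (cos s * d1 f t (ρ * cos s) (ρ * sin s) + sin s * d2 f t (ρ * cos s) (ρ * sin s))|
      ≤ ρ * (2 * (C * H t (ρ * cos s) (ρ * sin s))) := by
      rw [abs_mul, abs_of_pos hρ0]; gcongr
    linarith
  refine b2.trans ?_
  rw [intervalIntegral.integral_const_mul]
  refine mul_le_mul_of_nonneg_left ?_ (by positivity)
  rw [rayInt]
  refine intervalIntegral.integral_mono_interval h0.le h1.le le_rfl ?_ (cH.intervalIntegrable _ _)
  refine (ae_restrict_iff' measurableSet_Ioc).2 (Eventually.of_forall fun ρ hρ => ?_)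
  exact mul_nonneg hρ.1.le (hH _ _)

/-- The weighted sum of squares on the right of the Klainerman–Sobolev inequality. -/
def KS (R : ℝ) (φ : Sm) : Sm := qS R * WS 2 φ

theorem Cs.KS {R : ℝ} (hR : 1 ≤ R) {φ : Sm} (hφ : Cs R φ) : Cs R (KS R φ) :=
  (hφ.WS hR 2).mul_left _

theorem KS_nonneg {R : ℝ} (hR : 1 ≤ R) {φ : Sm} (hφ : Cs R φ) {t : ℝ} (ht : 0 ≤ t) (x y : ℝ) :
    0 ≤ KS R φ t x y := by
  rcases lt_or_ge (x ^ 2 + y ^ 2) ((t + R) ^ 2) with h | h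
  · rw [KS, Sm.mul_ap]
    have := (q_facts hR ht h).1
    exact mul_nonneg (by linarith) (WS_nonneg _ _ _ _ _)
  · rw [hφ.KS hR t x y ht h]

/-- The product estimates behind the Klainerman–Sobolev inequality away from the axis. -/
theorem KS_prod {R : ℝ} (hR : 1 ≤ R) (φ : Sm) (w : List (Fin 7)) (hw : w.length ≤ 1)
    {t x y : ℝ} (ht : 0 ≤ t) (hr : x ^ 2 + y ^ 2 < (t + R) ^ 2) (hra : (1 + t) / 4 ≤ radius x y) :
    |(qS R ^ 2 * φ * W w φ) t x y| ≤ 10 * (R + 4) * (radius x y * KS R φ t x y) ∧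
    ∀ b : Fin 3, b ≠ 0 →
      |D b (qS R ^ 2 * φ * W w φ) t x y| ≤ 10 * (R + 4) * KS R φ t x y := by
  obtain ⟨q1, -, -, -, -, -, q2⟩ := q_facts hR ht hr
  set B := √(WS 2 φ t x y) with hB
  have hB0 : 0 ≤ B := Real.sqrt_nonneg _
  have hBB : B * B = WS 2 φ t x y := Real.mul_self_sqrt (WS_nonneg _ _ _ _ _)
  have f0 : |φ t x y| ≤ B := W_abs_le 2 (w := []) (by simp) φ t x y
  have f1 : |W w φ t x y| ≤ B := W_abs_le 2 (by omega) φ t x y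
  have eK : KS R φ t x y = qS R t x y * (B * B) := by rw [hBB]; rfl
  have dq : ∀ b : Fin 3, |D b (qS R) t x y| ≤ 1 := by
    have cI : cs t x y * csI t x y = 1 := by rw [← Sm.mul_ap, cs_csI]; rfl
    have c0 := cs_pos t x y
    have hI : 0 < csI t x y := by rw [csI_ap]; positivity
    have r1 := radius_le_cs t x y
    have key : ∀ z, |z| ≤ radius x y → |-(z * csI t x y)| ≤ 1 := fun z hz => by
      rw [abs_neg, abs_mul, abs_of_pos hI, ← cI]
      exact mul_le_mul_of_nonneg_right (hz.trans r1) hI.le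
    intro b
    fin_cases b
    · change |dt (qS R) t x y| ≤ 1; simp
    · change |d1 (qS R) t x y| ≤ 1; simpa using key x (abs_le_radius x y)
    · change |d2 (qS R) t x y| ≤ 1; simpa using key y (abs_le_radius' x y)
  have g0 : ∀ b, qS R t x y * |D b φ t x y| ≤ (R + 4) * (3 * B) := fun b =>
    (q_D hR φ b ht hr).trans (mul_le_mul_of_nonneg_left
      (sqrt_GS_W_le 2 (w := []) (by simp) φ t x y) (by linarith))
  have g1 : ∀ b, qS R t x y * |D b (W w φ) t x y| ≤ (R + 4) * (3 * B) := fun b =>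
    (q_D hR _ b ht hr).trans (mul_le_mul_of_nonneg_left
      (sqrt_GS_W_le 2 (by omega) φ t x y) (by linarith))
  rw [eK]
  constructor
  · simp only [Sm.mul_ap, Sm.pow_ap]
    set q := qS R t x y
    have hq : q ≤ 4 * (R + 1) * radius x y := by nlinarith
    have e : |q ^ 2 * φ t x y * W w φ t x y| = q ^ 2 * (|φ t x y| * |W w φ t x y|) := by
      rw [abs_mul, abs_mul, abs_of_nonneg (sq_nonneg q)]; ring
    rw [e]
    calc q ^ 2 * (|φ t x y| * |W w φ t x y|) ≤ q ^ 2 * (B * B) := by gcongr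
      _ = q * (q * (B * B)) := by ring
      _ ≤ (4 * (R + 1) * radius x y) * (q * (B * B)) := by gcongr
      _ ≤ 10 * (R + 4) * (radius x y * (q * (B * B))) := by
        have : 0 ≤ radius x y * (q * (B * B)) :=
          mul_nonneg (radius_nonneg _ _) (mul_nonneg (by linarith) (mul_nonneg hB0 hB0))
        nlinarith
  · intro b _
    have a := g0 b; have a' := g1 b; have a'' := dq b
    simp only [pow_two, Derivation.leibniz, smul_eq_mul, Sm.add_ap, Sm.mul_ap]
    set q := qS R t x y
    have hq0 : 0 ≤ q := by linarith
    have e : ∀ p v p' v' q', q * q * p * v' + v * (q * q * p' + p * (q * q' + q * q')) =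
      q * p * (q * v') + q * v * (q * p') + 2 * (q' * (p * (q * v))) := fun _ _ _ _ _ => by ring
    rw [e]
    have h1 : |q * φ t x y * (q * D b (W w φ) t x y)| ≤ q * B * ((R + 4) * (3 * B)) := by
      rw [abs_mul, abs_mul, abs_mul, abs_of_nonneg hq0]; gcongr
    have h2 : |q * W w φ t x y * (q * D b φ t x y)| ≤ q * B * ((R + 4) * (3 * B)) := by
      rw [abs_mul, abs_mul, abs_mul, abs_of_nonneg hq0]; gcongr
    have h3 : |2 * (D b (qS R) t x y * (φ t x y * (q * W w φ t x y)))| ≤ 2 * (1 * (B * (q * B))) := by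
      rw [abs_mul, abs_mul, abs_mul, abs_mul, abs_of_nonneg hq0, abs_two]; gcongr
    refine (abs_add_le _ _).trans ?_
    have := abs_add_le (q * φ t x y * (q * D b (W w φ) t x y)) (q * W w φ t x y * (q * D b φ t x y))
    have p : 0 ≤ q * (B * B) := by positivity
    nlinarith

/-- The Klainerman–Sobolev inequality for `|x| ≥ (1 + t) / 4`: a one-dimensional bound along the
ray through the point, integrated over angles by the Sobolev inequality on the circle. -/
theorem KS_far {R : ℝ} (hR : 1 ≤ R) {φ : Sm} (hφ : Cs R φ) {t x y : ℝ} (ht : 0 ≤ t)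
    (hr : x ^ 2 + y ^ 2 < (t + R) ^ 2) (hra : (1 + t) / 4 ≤ radius x y) :
    (1 + t) * (qS R t x y ^ 2 * φ t x y ^ 2) ≤ 360 * (R + 4) * I (KS R φ) t := by
  have hpos : 0 < radius x y := by linarith
  have hρ1 := (q_facts hR ht hr).2.1
  set ρ := radius x y with hρ
  set C : ℝ := 10 * (R + 4) with hC
  have hC0 : 0 ≤ C := by rw [hC]; linarith
  have bound : ∀ w : List (Fin 7), w.length ≤ 1 → ∀ s,
      |ρ * (qS R ^ 2 * φ * W w φ) t (ρ * cos s) (ρ * sin s)| ≤ 3 * C * rayInt R (KS R φ) t s :=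
    fun w hw s => ray_bound hR ((hφ.mul_left _).mul_right _) ht hC0
      (fun x y => KS_nonneg hR hφ ht x y) hpos hρ1 (fun x' y' h1 h2 => by
        obtain ⟨k1, k2⟩ := KS_prod hR φ w hw ht h1 (hra.trans h2)
        exact ⟨k1, k2 1 (by decide), k2 2 (by decide)⟩) s
  -- the angular derivative of the weight vanishes
  have hder : ∀ s, HasDerivAt (fun s => ρ * (qS R ^ 2 * φ * φ) t (ρ * cos s) (ρ * sin s))
      (2 * (ρ * (qS R ^ 2 * φ * W [3] φ) t (ρ * cos s) (ρ * sin s))) s := by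
    intro s
    have a := (qS R ^ 2 * φ * φ).hasDerivAt_curve (a := fun _ => t) (b := fun s => ρ * cos s)
      (c := fun s => ρ * sin s) (hasDerivAt_const s t) ((Real.hasDerivAt_cos s).const_mul ρ)
      ((Real.hasDerivAt_sin s).const_mul ρ)
    refine (a.const_mul ρ).congr_deriv ?_
    simp only [pow_two, Derivation.leibniz, smul_eq_mul, Sm.add_ap, Sm.mul_ap, W_cons, W_nil, G3,
      Sm.sub_ap, d1_qS, d2_qS, Sm.neg_ap, cX_ap, cY_ap]
    ring
  have cp : ∀ g : Sm, Continuous fun s => ρ * g t (ρ * cos s) (ρ * sin s) := fun g =>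
    continuous_const.mul ((g.cont_polar t).comp (f := fun s : ℝ => (ρ, s)) (by fun_prop))
  obtain ⟨s, hs, hx, hy⟩ : ∃ s ∈ Set.Icc (-π) π, ρ * cos s = x ∧ ρ * sin s = y := by
    have e : ‖(⟨x, y⟩ : ℂ)‖ = ρ := by
      rw [hρ, radius, Complex.norm_def, Complex.normSq_mk]; congr 1; ring
    refine ⟨Complex.arg ⟨x, y⟩, ⟨(Complex.neg_pi_lt_arg _).le, Complex.arg_le_pi _⟩, ?_, ?_⟩
    · rw [← e]; exact Complex.norm_mul_cos_arg _
    · rw [← e]; exact Complex.norm_mul_sin_arg _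
  have fin := sob_circle (A := 3 * C) (B := 6 * C) (k := rayInt R (KS R φ) t) hder
    ((cp _).const_mul 2) (rayInt_cont _ _ _) (bound [] (by simp)) (fun s => by
      have := bound [3] (by simp) s
      rw [abs_mul, abs_two]; linarith) hs
  rw [I_polar hR (hφ.KS hR) ht, hx, hy] at fin
  simp only [Sm.mul_ap, Sm.pow_ap] at fin
  have p : 0 ≤ qS R t x y ^ 2 * φ t x y ^ 2 := by positivity
  have e : 3 * C + 6 * C = 90 * (R + 4) := by rw [hC]; ring
  rw [e] at fin
  calc (1 + t) * (qS R t x y ^ 2 * φ t x y ^ 2) ≤ (4 * ρ) * (qS R t x y ^ 2 * φ t x y ^ 2) := by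
        gcongr; linarith
    _ = 4 * (ρ * (qS R t x y ^ 2 * φ t x y * φ t x y)) := by ring
    _ ≤ 4 * (90 * (R + 4) * I (KS R φ) t) := by linarith
    _ = _ := by ring

/-- The terms of `∂₁∂₂(p³ f²)` for a polynomial cut-off `p` with `0 ≤ p ≤ 2τq`; the factors `p`
compensate the weights `q` in the bounds for the derivatives `a`, `b`, `c` of `f`. -/
theorem KS_near_alg {x y τ B S q p f a b c : ℝ} (hτ : 0 ≤ τ) (hq : 0 ≤ q) (hB : 0 ≤ B) (hS : 5 ≤ S)
    (P0 : 0 ≤ p) (P1 : p ≤ 2 * τ * q) (hx : |x| ≤ τ) (hy : |y| ≤ τ) (f0 : |f| ≤ B)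
    (f1 : q * |a| ≤ S * (3 * B)) (f2 : q * |b| ≤ S * (3 * B)) (f12 : q ^ 2 * |c| ≤ 18 * S ^ 2 * B) :
    |24 * (p * x) * (y * f) * f - 12 * p ^ 2 * x * f * b - 12 * p ^ 2 * y * f * a
        + 2 * p ^ 3 * (a * b + f * c)| ≤ 500 * S ^ 2 * τ ^ 3 * (q * (B * B)) := by
  have e1 : |24 * (p * x) * (y * f) * f| ≤ 24 * ((2 * τ * q) * τ) * (τ * B) * B := by
    simp only [abs_mul, abs_of_nonneg P0]
    rw [abs_of_nonneg (by norm_num : (0:ℝ) ≤ 24)]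
    gcongr
  have hp2 : p ^ 2 ≤ (2 * τ * q) ^ 2 := by gcongr
  have hp3 : p ^ 3 ≤ (2 * τ * q) ^ 3 := by gcongr
  have e2 : ∀ x b : ℝ, |x| ≤ τ → q * |b| ≤ S * (3 * B) →
      |12 * p ^ 2 * x * f * b| ≤ 12 * (4 * τ ^ 2 * q) * τ * B * (S * (3 * B)) := by
    intro x b hx f2
    simp only [abs_mul, abs_pow, abs_of_nonneg P0]
    rw [abs_of_nonneg (by norm_num : (0:ℝ) ≤ 12)]
    calc 12 * p ^ 2 * |x| * |f| * |b| ≤ 12 * (2 * τ * q) ^ 2 * τ * B * |b| := by gcongr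
      _ = 12 * (4 * τ ^ 2 * q) * τ * B * (q * |b|) := by ring
      _ ≤ _ := by gcongr
  have e4 : |2 * p ^ 3 * (a * b + f * c)| ≤
      16 * τ ^ 3 * (q * ((S * (3 * B)) * (S * (3 * B))) + q * (B * (18 * S ^ 2 * B))) := by
    have s1 : |a * b + f * c| ≤ |a| * |b| + |f| * |c| := by
      rw [← abs_mul, ← abs_mul]; exact abs_add_le _ _
    rw [abs_mul, abs_mul, abs_pow, abs_of_nonneg P0, abs_two]
    calc 2 * p ^ 3 * |a * b + f * c| ≤ 2 * (2 * τ * q) ^ 3 * (|a| * |b| + |f| * |c|) := by gcongr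
      _ = 16 * τ ^ 3 * (q * ((q * |a|) * (q * |b|)) + q * (|f| * (q ^ 2 * |c|))) := by ring
      _ ≤ _ := by gcongr
  have t1 := abs_add_le (24 * (p * x) * (y * f) * f - 12 * p ^ 2 * x * f * b
    - 12 * p ^ 2 * y * f * a) (2 * p ^ 3 * (a * b + f * c))
  have t2 := abs_sub (24 * (p * x) * (y * f) * f - 12 * p ^ 2 * x * f * b) (12 * p ^ 2 * y * f * a)
  have t3 := abs_sub (24 * (p * x) * (y * f) * f) (12 * p ^ 2 * x * f * b)
  have e2' := e2 x b hx f2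
  have e3' := e2 y a hy f1
  have z : 0 ≤ τ ^ 3 * (q * (B * B)) := by positivity
  have z1 : 48 + 288 * S + 432 * S ^ 2 ≤ 500 * S ^ 2 := by nlinarith
  have z2 := mul_le_mul_of_nonneg_right z1 z
  calc _ ≤ _ := t1
    _ ≤ 24 * ((2 * τ * q) * τ) * (τ * B) * B + 12 * (4 * τ ^ 2 * q) * τ * B * (S * (3 * B))
      + 12 * (4 * τ ^ 2 * q) * τ * B * (S * (3 * B)) + 16 * τ ^ 3 * (q * ((S * (3 * B)) * (S * (3 * B)))
        + q * (B * (18 * S ^ 2 * B))) := by linarith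
    _ = (48 + 288 * S + 432 * S ^ 2) * (τ ^ 3 * (q * (B * B))) := by ring
    _ ≤ 500 * S ^ 2 * (τ ^ 3 * (q * (B * B))) := z2
    _ = _ := by ring

/-- The Klainerman–Sobolev inequality near the axis. -/
theorem KS_near {R : ℝ} (hR : 1 ≤ R) {φ : Sm} (hφ : Cs R φ) {t x y : ℝ} (ht : 0 ≤ t)
    (hr : x ^ 2 + y ^ 2 < (t + R) ^ 2) :
    qS R t x y ^ 3 * φ t x y ^ 2 ≤ 500 * (R + 4) ^ 2 * I (KS R φ) t := by
  set τ := t + R + 2 with hτ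
  have hτ0 : 0 < τ := by linarith
  set P : Sm := cst (τ ^ 2 - 1) - cX ^ 2 - cY ^ 2 with hP
  set F : Sm := P ^ 3 * φ ^ 2 with hF
  have csF : Cs R F := hφ.sq.mul_left _
  have Pq : ∀ x y, P t x y = qS R t x y * (τ + cs t x y) := fun x y => by
    have cc : cs t x y * cs t x y = 1 + x ^ 2 + y ^ 2 := by rw [← Sm.mul_ap, cs_sq]; simp
    have : qS R t x y = τ - cs t x y := by rw [qS_ap, cs_ap, hτ]; ring
    rw [this, hP]
    simp only [Sm.sub_ap, Sm.pow_ap, cst_ap, cX_ap, cY_ap]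
    linear_combination cc
  have csle : ∀ x y, x ^ 2 + y ^ 2 < (t + R) ^ 2 → cs t x y ≤ τ := fun x y h => by
    have := cs_le t x y
    have := (q_facts hR ht h).2.1
    linarith
  have key : ∀ x y, |d1 (d2 F) t x y| ≤ ((500 * (R + 4) ^ 2 * τ ^ 3) • KS R φ) t x y := by
    intro x y
    rcases lt_or_ge (x ^ 2 + y ^ 2) ((t + R) ^ 2) with h | h
    swap
    · rw [((csF.d2 hR).d1 hR) t x y ht h, ((hφ.KS hR).smul _) t x y ht h, abs_zero]
    obtain ⟨q1, hrt, -⟩ := q_facts hR ht h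
    set B := √(WS 2 φ t x y) with hB
    have hB0 : 0 ≤ B := Real.sqrt_nonneg _
    have hBB : B * B = WS 2 φ t x y := Real.mul_self_sqrt (WS_nonneg _ _ _ _ _)
    have f0 : |φ t x y| ≤ B := W_abs_le 2 (w := []) (by simp) φ t x y
    have g0 : ∀ b, qS R t x y * |D b φ t x y| ≤ (R + 4) * (3 * B) := fun b =>
      (q_D hR φ b ht h).trans (mul_le_mul_of_nonneg_left
        (sqrt_GS_W_le 2 (w := []) (by simp) φ t x y) (by linarith))
    have g1 : ∀ i, qS R t x y * |G i (d2 φ) t x y| ≤ 6 * (R + 4) * B := fun i => by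
      obtain ⟨c, r, hr1, hG⟩ := G_D i 2
      have e : G i (d2 φ) t x y = D 2 (G i φ) t x y + r * D c φ t x y := by
        have := congrArg (fun f : Sm => f t x y) (hG φ)
        exact this
      have k1 : qS R t x y * |D 2 (G i φ) t x y| ≤ (R + 4) * (3 * B) :=
        (q_D hR _ 2 ht h).trans (mul_le_mul_of_nonneg_left
        (sqrt_GS_W_le 2 (w := [i]) (by simp) φ t x y) (by linarith))
      have k2 := g0 c
      have k3 : |G i (d2 φ) t x y| ≤ |D 2 (G i φ) t x y| + 1 * |D c φ t x y| := by
        rw [e]; refine (abs_add_le _ _).trans ?_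
        rw [abs_mul r]; gcongr
      have k4 := mul_le_mul_of_nonneg_left k3 (by linarith : 0 ≤ qS R t x y)
      linarith
    have g2 : qS R t x y * √(GS (d2 φ) t x y) ≤ 18 * (R + 4) * B := by
      rw [← Real.sqrt_sq (by linarith : 0 ≤ qS R t x y), ← Real.sqrt_mul (sq_nonneg _)]
      refine Real.sqrt_le_iff.2 ⟨by positivity, ?_⟩
      rw [GS, Sm.sum_ap, Finset.mul_sum]
      have k : ∀ i : Fin 7, qS R t x y ^ 2 * (G i (d2 φ) ^ 2) t x y ≤ (6 * (R + 4) * B) ^ 2 :=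
        fun i => by
          rw [Sm.pow_ap, ← mul_pow, ← sq_abs, abs_mul, abs_of_nonneg (by linarith : 0 ≤ qS R t x y)]
          exact pow_le_pow_left₀ (mul_nonneg (by linarith) (abs_nonneg _)) (g1 i) 2
      have := Finset.sum_le_card_nsmul Finset.univ _ _ (fun i _ => k i)
      rw [Finset.card_univ, Fintype.card_fin, nsmul_eq_mul] at this
      have z : 0 ≤ ((R + 4) * B) ^ 2 := sq_nonneg _
      refine this.trans ?_
      push_cast
      nlinarith
    have eK : KS R φ t x y = qS R t x y * (B * B) := by rw [hBB]; rfl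
    have f1 : qS R t x y * |d1 φ t x y| ≤ (R + 4) * (3 * B) := g0 1
    have f2 : qS R t x y * |d2 φ t x y| ≤ (R + 4) * (3 * B) := g0 2
    have f12 : qS R t x y ^ 2 * |d1 (d2 φ) t x y| ≤ 18 * (R + 4) ^ 2 * B := by
      have k1 : qS R t x y * |d1 (d2 φ) t x y| ≤ (R + 4) * √(GS (d2 φ) t x y) :=
        q_D hR (d2 φ) 1 ht h
      have k2 := mul_le_mul_of_nonneg_left k1 (by linarith : 0 ≤ qS R t x y)
      have k3 := mul_le_mul_of_nonneg_left g2 (by linarith : 0 ≤ R + 4)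
      linarith
    have hx : |x| ≤ τ := (abs_le_radius x y).trans (by linarith)
    have hy : |y| ≤ τ := (abs_le_radius' x y).trans (by linarith)
    have P0 : 0 ≤ P t x y := by
      rw [Pq]; exact mul_nonneg (by linarith) (by have := cs_pos t x y; linarith)
    have P1 : P t x y ≤ 2 * τ * qS R t x y := by
      rw [Pq]; have := csle x y h; nlinarith
    have dP1 : d1 P t x y = -(2 * x) := by
      simp only [hP, map_sub, D_cst, pow_two, Derivation.leibniz, smul_eq_mul, d1_cX, d1_cY,
        Sm.sub_ap, Sm.add_ap, Sm.mul_ap, cX_ap, cY_ap, Sm.zero_ap, Sm.one_ap]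
      ring
    have dP2 : d2 P = (-2 : ℝ) • cY := Sm.ext' fun t x y => by
      simp only [hP, map_sub, D_cst, pow_two, Derivation.leibniz, smul_eq_mul, d2_cX, d2_cY,
        Sm.sub_ap, Sm.add_ap, Sm.mul_ap, cX_ap, cY_ap, Sm.zero_ap, Sm.one_ap, Sm.smul_ap]; ring
    have eq : d1 (d2 F) t x y = 24 * (P t x y * x) * (y * φ t x y) * φ t x y
        - 12 * P t x y ^ 2 * x * φ t x y * d2 φ t x y
        - 12 * P t x y ^ 2 * y * φ t x y * d1 φ t x y
        + 2 * P t x y ^ 3 * (d1 φ t x y * d2 φ t x y + φ t x y * d1 (d2 φ) t x y) := by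
      simp only [hF, pow_succ, pow_zero, one_mul, map_add, Derivation.leibniz, smul_eq_mul, dP2,
        Derivation.map_smul, d1_cY,
        Sm.sub_ap, Sm.add_ap, Sm.mul_ap, cX_ap, cY_ap, Sm.zero_ap, Sm.one_ap, Sm.smul_ap, dP1]
      ring
    rw [eq, Sm.smul_ap, eK]
    exact KS_near_alg hτ0.le (by linarith) hB0 (by linarith) P0 P1 hx hy f0 f1 f2 f12
  have fin := sob_plane hR csF ((hφ.KS hR).smul _) ht key x y
  rw [I_smul] at fin
  obtain ⟨q1, -⟩ := q_facts hR ht hr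
  have Ple : qS R t x y * τ ≤ P t x y := by
    rw [Pq]; have := cs_pos t x y; nlinarith
  have h3 : (qS R t x y * τ) ^ 3 * φ t x y ^ 2 ≤ |F t x y| := by
    refine le_trans ?_ (le_abs_self _)
    simp only [hF, Sm.mul_ap, Sm.pow_ap]
    gcongr
  have h4 : τ ^ 3 * (qS R t x y ^ 3 * φ t x y ^ 2) ≤ τ ^ 3 * (500 * (R + 4) ^ 2 * I (KS R φ) t) := by
    refine le_trans (le_of_eq ?_) ((h3.trans fin).trans (le_of_eq ?_)) <;> ring
  exact le_of_mul_le_mul_left h4 (by positivity)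

theorem I_KS_nonneg {R : ℝ} (hR : 1 ≤ R) {φ : Sm} (hφ : Cs R φ) {t : ℝ} (ht : 0 ≤ t) :
    0 ≤ I (KS R φ) t := I_nonneg fun x y => KS_nonneg hR hφ ht x y

/-- The weighted Klainerman–Sobolev inequality. -/
theorem KS_ineq {R : ℝ} (hR : 1 ≤ R) {φ : Sm} (hφ : Cs R φ) {t x y : ℝ} (ht : 0 ≤ t)
    (hr : x ^ 2 + y ^ 2 < (t + R) ^ 2) :
    (1 + t) * (qS R t x y ^ 2 * φ t x y ^ 2) ≤ 1000 * (R + 4) ^ 2 * I (KS R φ) t := by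
  have hI := I_KS_nonneg hR hφ ht
  rcases le_or_gt ((1 + t) / 4) (radius x y) with h | h
  · refine (KS_far hR hφ ht hr h).trans ?_
    gcongr ?_ * _
    nlinarith
  · obtain ⟨q1, -, -, q2, -⟩ := q_facts hR ht hr
    have n := KS_near hR hφ ht hr
    have hq : 1 + t ≤ 2 * qS R t x y := by linarith
    calc (1 + t) * (qS R t x y ^ 2 * φ t x y ^ 2)
        ≤ (2 * qS R t x y) * (qS R t x y ^ 2 * φ t x y ^ 2) := by gcongr
      _ = 2 * (qS R t x y ^ 3 * φ t x y ^ 2) := by ring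
      _ ≤ _ := by linarith

end Ap

namespace Ap
set_option linter.unusedVariables false

/-! ### Finite speed of propagation -/

/-- The chain rule. -/
theorem D_compS (b : Fin 3) (g : ℝ → ℝ) (hg : ContDiff ℝ (⊤ : ℕ∞) g) (φ : Sm) (t x y : ℝ) :
    D b (compS g hg φ) t x y = deriv g (φ t x y) * D b φ t x y := by
  have h : ∀ z, HasDerivAt g (deriv g z) z := fun z =>
    (hg.differentiable (by simp) z).hasDerivAt
  fin_cases b
  · exact (hasDerivAt_t (compS g hg φ) t x y).unique ((h _).comp t (hasDerivAt_t φ t x y))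
  · exact (hasDerivAt_1 (compS g hg φ) t x y).unique
      (HasDerivAt.comp (h := fun x' => φ t x' y) x (h _) (hasDerivAt_1 φ t x y))
  · exact (hasDerivAt_2 (compS g hg φ) t x y).unique
      (HasDerivAt.comp (h := fun y' => φ t x y') y (h _) (hasDerivAt_2 φ t x y))

/-- A smoothed distance to the point `(x₀, y₀)`. -/
def ds (κ x₀ y₀ : ℝ) (hκ : 0 < κ) : Sm :=
  sqrtS (cst (κ ^ 2) + (cX - cst x₀) ^ 2 + (cY - cst y₀) ^ 2) fun t x y => by
    simp only [Sm.add_ap, Sm.sub_ap, Sm.pow_ap, cX_ap, cY_ap, cst_ap]; positivity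

theorem ds_ap (κ x₀ y₀ : ℝ) (hκ : 0 < κ) (t x y : ℝ) :
    ds κ x₀ y₀ hκ t x y = √(κ ^ 2 + (x - x₀) ^ 2 + (y - y₀) ^ 2) := rfl

theorem ds_pos (κ x₀ y₀ : ℝ) (hκ : 0 < κ) (t x y : ℝ) : 0 < ds κ x₀ y₀ hκ t x y := by
  rw [ds_ap]; positivity

theorem ds_grad (κ x₀ y₀ : ℝ) (hκ : 0 < κ) (t x y : ℝ) : dt (ds κ x₀ y₀ hκ) = 0 ∧
    d1 (ds κ x₀ y₀ hκ) t x y ^ 2 + d2 (ds κ x₀ y₀ hκ) t x y ^ 2 ≤ 1 := by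
  set s := ds κ x₀ y₀ hκ with hs
  have ss : s * s = cst (κ ^ 2) + (cX - cst x₀) ^ 2 + (cY - cst y₀) ^ 2 := Sm.ext' fun t x y => by
    rw [Sm.mul_ap, hs, ds_ap, Real.mul_self_sqrt (by positivity)]; rfl
  have sI : s * invS s (ds_pos κ x₀ y₀ hκ) = 1 :=
    Sm.ext' fun t x y => mul_inv_cancel₀ (ds_pos κ x₀ y₀ hκ t x y).ne'
  have p := ds_pos κ x₀ y₀ hκ t x y
  have e : s t x y ^ 2 = κ ^ 2 + (x - x₀) ^ 2 + (y - y₀) ^ 2 := by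
    rw [hs, ds_ap, Real.sq_sqrt (by positivity)]
  have eI : invS s (ds_pos κ x₀ y₀ hκ) t x y = (s t x y)⁻¹ := rfl
  have e1 : d1 s t x y = (s t x y)⁻¹ * (x - x₀) := by
    rw [D_sq_eq d1 ss sI, ← eI]
    simp only [pow_two, map_add, map_sub, Derivation.leibniz, smul_eq_mul, D_cst, d1_cX, d1_cY,
      Sm.smul_ap, Sm.mul_ap, Sm.add_ap, Sm.sub_ap, cX_ap, cY_ap, cst_ap, Sm.zero_ap, Sm.one_ap]
    ring
  have e2 : d2 s t x y = (s t x y)⁻¹ * (y - y₀) := by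
    rw [D_sq_eq d2 ss sI, ← eI]
    simp only [pow_two, map_add, map_sub, Derivation.leibniz, smul_eq_mul, D_cst, d2_cX, d2_cY,
      Sm.smul_ap, Sm.mul_ap, Sm.add_ap, Sm.sub_ap, cX_ap, cY_ap, cst_ap, Sm.zero_ap, Sm.one_ap]
    ring
  constructor
  · rw [D_sq_eq dt ss sI]
    simp [pow_two, Derivation.leibniz]
  · rw [e1, e2, mul_pow, mul_pow, ← mul_add, inv_pow, e]
    rw [inv_mul_le_iff₀ (by positivity)]
    nlinarith [sq_nonneg κ]

/-- The energy flux through a surface whose slope is at most that of the light cone is nonnegative. -/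
theorem cone_alg {a b d p q : ℝ} (gr : p ^ 2 + q ^ 2 ≤ 1) :
    0 ≤ a ^ 2 + b ^ 2 + d ^ 2 - 2 * a * (p * b + q * d) := by
  have i1 : (p * b + q * d) ^ 2 ≤ (p ^ 2 + q ^ 2) * (b ^ 2 + d ^ 2) := by
    nlinarith [sq_nonneg (p * d - q * b)]
  have i2 : (p ^ 2 + q ^ 2) * (b ^ 2 + d ^ 2) ≤ 1 * (b ^ 2 + d ^ 2) := by gcongr
  nlinarith [sq_nonneg (a - (p * b + q * d))]

/-- Finite propagation speed for a linear wave equation with a nonnegative damping: if the data are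
supported in `|x| < R`, the solution is supported in `|x| < t + R`. -/
theorem fsp {R : ℝ} (hR : 1 ≤ R) {u c : Sm} (hc : ∀ t x y : ℝ, 0 ≤ t → 0 ≤ c t x y)
    (hbox : Zp (box u + c * dt u))
    (h0 : ∀ x y : ℝ, R ^ 2 ≤ x ^ 2 + y ^ 2 → u 0 x y = 0)
    (h1 : ∀ x y : ℝ, R ^ 2 ≤ x ^ 2 + y ^ 2 → dt u 0 x y = 0) : Cs R u := by
  intro T x₀ y₀ hT hr
  have hrad : T + R ≤ radius x₀ y₀ := Real.le_sqrt_of_sq_le hr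
  -- spatial derivatives of the data outside the initial support
  have hgrad : ∀ b : Fin 3, ∀ x y : ℝ, R ^ 2 < x ^ 2 + y ^ 2 → D b u 0 x y = 0 := by
    intro b x y h
    fin_cases b
    · exact h1 x y h.le
    · refine (hasDerivAt_1 u 0 x y).unique ((hasDerivAt_const x (0 : ℝ)).congr_of_eventuallyEq ?_)
      have : ∀ᶠ x' in 𝓝 x, R ^ 2 < x' ^ 2 + y ^ 2 :=
        ((by fun_prop : Continuous fun x' : ℝ => x' ^ 2 + y ^ 2).tendsto x).eventually
          (lt_mem_nhds h)
      filter_upwards [this] with x' hx'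
      exact h0 _ _ hx'.le
    · refine (hasDerivAt_2 u 0 x y).unique ((hasDerivAt_const y (0 : ℝ)).congr_of_eventuallyEq ?_)
      have : ∀ᶠ y' in 𝓝 y, R ^ 2 < x ^ 2 + y' ^ 2 :=
        ((by fun_prop : Continuous fun y' : ℝ => x ^ 2 + y' ^ 2).tendsto y).eventually
          (lt_mem_nhds h)
      filter_upwards [this] with y' hy'
      exact h0 _ _ hy'.le
  have tri : ∀ x y, radius x₀ y₀ ≤ radius x y + √((x - x₀) ^ 2 + (y - y₀) ^ 2) := by
    intro x y
    have a : 0 ≤ √((x - x₀) ^ 2 + (y - y₀) ^ 2) := Real.sqrt_nonneg _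
    have b : √((x - x₀) ^ 2 + (y - y₀) ^ 2) ^ 2 = (x - x₀) ^ 2 + (y - y₀) ^ 2 :=
      Real.sq_sqrt (by positivity)
    have c := radius_sq x y
    have d := radius_nonneg x y
    have e : -(x * (x - x₀) + y * (y - y₀)) ≤ radius x y * √((x - x₀) ^ 2 + (y - y₀) ^ 2) := by
      refine (le_abs_self _).trans (abs_le_of_sq_le_sq ?_ (by positivity))
      rw [mul_pow, b, c]; nlinarith [sq_nonneg (x * (y - y₀) - y * (x - x₀))]
    refine Real.sqrt_le_iff.2 ⟨by positivity, ?_⟩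
    nlinarith
  have key : ∀ t, 0 ≤ t → t < T → dt u t x₀ y₀ = 0 := by
    intro t ht htT
    set κ := (T - t) / 2 with hκd
    have hκ : 0 < κ := by rw [hκd]; linarith
    set s := ds κ x₀ y₀ hκ
    set σ : Sm := cst T - cT - s with hσ
    set ψ := compS expNegInvGlue expNegInvGlue.contDiff σ with hψ
    set R' := radius x₀ y₀ + T + 1 with hR'
    have hR'1 : 1 ≤ R' := by have := radius_nonneg x₀ y₀; linarith
    have hR'0 : 0 ≤ R' := by linarith
    have dle : ∀ t x y, √((x - x₀) ^ 2 + (y - y₀) ^ 2) ≤ s t x y := fun t x y =>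
      Real.sqrt_le_sqrt (show (x - x₀) ^ 2 + (y - y₀) ^ 2 ≤ κ ^ 2 + (x - x₀) ^ 2 + (y - y₀) ^ 2 by
        linarith [sq_nonneg κ])
    have σap : ∀ t x y, σ t x y = T - t - s t x y := fun t x y => rfl
    have ψap : ∀ t x y, ψ t x y = expNegInvGlue (σ t x y) := fun t x y => rfl
    have csψ : Cs R' ψ := by
      intro t x y ht hr
      rw [ψap]
      refine expNegInvGlue.zero_of_nonpos ?_
      have e1 : t + R' ≤ radius x y := Real.le_sqrt_of_sq_le hr
      have e2 : radius x y ≤ radius x₀ y₀ + √((x - x₀) ^ 2 + (y - y₀) ^ 2) := by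
        have a : 0 ≤ √((x - x₀) ^ 2 + (y - y₀) ^ 2) := Real.sqrt_nonneg _
        have b : √((x - x₀) ^ 2 + (y - y₀) ^ 2) ^ 2 = (x - x₀) ^ 2 + (y - y₀) ^ 2 :=
          Real.sq_sqrt (by positivity)
        have c := radius_sq x₀ y₀
        have d := radius_nonneg x₀ y₀
        have e : (x₀ * (x - x₀) + y₀ * (y - y₀)) ≤
            radius x₀ y₀ * √((x - x₀) ^ 2 + (y - y₀) ^ 2) := by
          refine (le_abs_self _).trans (abs_le_of_sq_le_sq ?_ (by positivity))
          rw [mul_pow, b, c]; nlinarith [sq_nonneg (x₀ * (y - y₀) - y₀ * (x - x₀))]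
        refine Real.sqrt_le_iff.2 ⟨by positivity, ?_⟩
        nlinarith
      have := dle t x y
      rw [σap]; linarith
    have csE : Cs R' (ψ * e2 u) := csψ.mul_right _
    have dψ : ∀ b t x y, D b ψ t x y = deriv expNegInvGlue (σ t x y) * D b σ t x y :=
      fun b t x y => D_compS b _ _ σ t x y
    have dσt : dt σ = -1 := by
      rw [hσ]; simp only [map_sub, D_cst, dt_cT, (ds_grad κ x₀ y₀ hκ 0 0 0).1, s]; ring
    have dσ1 : d1 σ = -d1 s := by
      rw [hσ]; simp only [map_sub, D_cst, d1_cT]; ring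
    have dσ2 : d2 σ = -d2 s := by
      rw [hσ]; simp only [map_sub, D_cst, d2_cT]; ring
    have mono : ∀ τ, 0 ≤ τ → I (dt (ψ * e2 u)) τ ≤ 0 := by
      intro τ hτ
      have c1 : Cs R' (2 * ψ * dt u * d1 u) := ((csψ.mul_left _).mul_right _).mul_right _
      have c2 : Cs R' (2 * ψ * dt u * d2 u) := ((csψ.mul_left _).mul_right _).mul_right _
      set rem := dt ψ * e2 u - 2 * dt u * (d1 ψ * d1 u + d2 ψ * d2 u) + 2 * ψ * dt u * box u with hrem
      have c3 : Cs R' rem :=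
        (((csψ.dt hR'1).mul_right _).sub ((((csψ.d1 hR'1).mul_right _).add
          ((csψ.d2 hR'1).mul_right _)).mul_left _)).add (((csψ.mul_left _).mul_right _).mul_right _)
      rw [energy_ident, ← hrem, I_add ((c1.d1 hR'1).add (c2.d2 hR'1)) c3 hR'0 hτ,
        I_add (c1.d1 hR'1) (c2.d2 hR'1) hR'0 hτ, I_d1 c1 hR'1 hτ, I_d2 c2 hR'1 hτ, add_zero, zero_add]
      have : I rem τ ≤ I (0 : Sm) τ := by
        refine I_mono c3 (fun _ _ _ _ _ => rfl) hR'0 hτ fun x y => ?_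
        have a0 : dt ψ τ x y = deriv expNegInvGlue (σ τ x y) * (-1) := by
          have h : dt ψ τ x y = deriv expNegInvGlue (σ τ x y) * dt σ τ x y := dψ 0 τ x y
          rw [dσt] at h; exact h
        have a1 : d1 ψ τ x y = deriv expNegInvGlue (σ τ x y) * (-(d1 s τ x y)) := by
          have h : d1 ψ τ x y = deriv expNegInvGlue (σ τ x y) * d1 σ τ x y := dψ 1 τ x y
          rw [dσ1] at h; exact h
        have a2 : d2 ψ τ x y = deriv expNegInvGlue (σ τ x y) * (-(d2 s τ x y)) := by
          have h : d2 ψ τ x y = deriv expNegInvGlue (σ τ x y) * d2 σ τ x y := dψ 2 τ x y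
          rw [dσ2] at h; exact h
        have g0 : 0 ≤ deriv expNegInvGlue (σ τ x y) := expNegInvGlue.monotone.deriv_nonneg
        have bx : box u τ x y = -(c τ x y * dt u τ x y) := by
          have := hbox τ x y hτ
          simp only [Sm.add_ap, Sm.mul_ap] at this; linarith
        have gr := (ds_grad κ x₀ y₀ hκ τ x y).2
        have ψ0 : 0 ≤ ψ τ x y := expNegInvGlue.nonneg _
        have c0 := hc τ x y hτ
        have e : rem τ x y = -(deriv expNegInvGlue (σ τ x y) * (e2 u τ x y
            - 2 * dt u τ x y * (d1 s τ x y * d1 u τ x y + d2 s τ x y * d2 u τ x y)))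
            - 2 * (ψ τ x y * c τ x y * dt u τ x y ^ 2) := by
          rw [hrem]
          have h2 : (2 : Sm) τ x y = 2 := rfl
          simp only [Sm.add_ap, Sm.sub_ap, Sm.mul_ap, a0, a1, a2, bx, h2]; ring
        rw [e, Sm.zero_ap]
        have q1 : 0 ≤ ψ τ x y * c τ x y * dt u τ x y ^ 2 := by positivity
        have q2 : 0 ≤ e2 u τ x y
            - 2 * dt u τ x y * (d1 s τ x y * d1 u τ x y + d2 s τ x y * d2 u τ x y) := by
          rw [e2_ap]
          exact cone_alg gr
        have q3 := mul_nonneg g0 q2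
        linarith
      refine this.trans (le_of_eq ?_)
      simp [I]
    have E0 : I (ψ * e2 u) 0 = 0 := by
      have : ∀ x y, (ψ * e2 u) 0 x y = 0 := by
        intro x y
        rw [Sm.mul_ap, ψap]
        rcases le_or_gt (σ 0 x y) 0 with h | h
        · rw [expNegInvGlue.zero_of_nonpos h, zero_mul]
        · have i1 := dle 0 x y
          have i2 := tri x y
          rw [σap] at h
          have i3 : R < radius x y := by linarith
          have i4 : R ^ 2 < x ^ 2 + y ^ 2 := by
            rw [← radius_sq]; exact pow_lt_pow_left₀ i3 (by linarith) two_ne_zero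
          have g0 : dt u 0 x y = 0 := hgrad 0 x y i4
          have g1 : d1 u 0 x y = 0 := hgrad 1 x y i4
          have g2 : d2 u 0 x y = 0 := hgrad 2 x y i4
          rw [e2_ap, g0, g1, g2]; ring
      simp [I, this]
    have Et : I (ψ * e2 u) t ≤ 0 := by
      refine le_of_deriv_le (B := fun _ => (0 : ℝ)) (B' := fun _ => 0) ht
        (fun τ hτ => I_deriv csE hR'1 hτ.1) (fun τ _ => hasDerivWithinAt_const _ _ _) E0.le
        (fun τ hτ => mono τ hτ.1)
    by_contra hne
    have pos : 0 < I (ψ * e2 u) t := by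
      refine Continuous.integral_pos_of_hasCompactSupport_nonneg_nonzero (x := (x₀, y₀))
        ((ψ * e2 u).cont_slice t) (csE.hcs hR'0 ht)
        (fun p => mul_nonneg (expNegInvGlue.nonneg _) (e2_nonneg _ _ _ _)) ?_
      have hs : s t x₀ y₀ = κ := by
        change √(κ ^ 2 + (x₀ - x₀) ^ 2 + (y₀ - y₀) ^ 2) = κ
        rw [sub_self, sub_self]; simp [Real.sqrt_sq hκ.le]
      have i1 : 0 < ψ t x₀ y₀ := expNegInvGlue.pos_of_pos (by rw [σap, hs, hκd]; linarith)
      have i2 : 0 < e2 u t x₀ y₀ := by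
        rw [e2_ap]
        have : 0 < dt u t x₀ y₀ ^ 2 := by positivity
        positivity
      exact (mul_pos i1 i2).ne'
    linarith
  have fin := constant_of_has_deriv_right_zero (f := fun t => u t x₀ y₀) (a := 0) (b := T)
    (fun t _ => (hasDerivAt_t u t x₀ y₀).continuousAt.continuousWithinAt)
    (fun t ht => by
      have := (hasDerivAt_t u t x₀ y₀).hasDerivWithinAt (s := Set.Ici t)
      rwa [key t ht.1 ht.2] at this) T ⟨hT, le_rfl⟩
  rw [fin]
  refine h0 _ _ (le_trans ?_ hr)
  gcongr; linarith

end Ap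

namespace Ap
set_option linter.unusedVariables false

/-! ### Size of the data -/

section Data
variable {ι : Type}

/-- The family `φ` is `O(e)` at time `0`, uniformly on the disc of radius `R`. -/
def S0 (R : ℝ) (e : ι → ℝ) (φ : ι → Sm) : Prop :=
  ∃ K : ℝ, 0 ≤ K ∧ ∀ i x y, x ^ 2 + y ^ 2 ≤ R ^ 2 → |φ i 0 x y| ≤ K * e i

/-- Spatial derivatives of order at most `n` are `O(e)` at time `0`. -/
def SD (R : ℝ) (e : ι → ℝ) : ℕ → (ι → Sm) → Prop
  | 0, φ => S0 R e φ
  | n + 1, φ => S0 R e φ ∧ SD R e n (fun i => d1 (φ i)) ∧ SD R e n (fun i => d2 (φ i))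

/-- Derivatives with at most `j` derivatives in time, and any number of spatial ones, are `O(e)`
at time `0`. -/
def TD (R : ℝ) (e : ι → ℝ) : ℕ → (ι → Sm) → Prop
  | 0, φ => ∀ n, SD R e n φ
  | j + 1, φ => (∀ n, SD R e n φ) ∧ TD R e j (fun i => dt (φ i))

variable {R : ℝ} {e e' : ι → ℝ}

theorem SD.s0 {n : ℕ} {φ : ι → Sm} (h : SD R e n φ) : S0 R e φ := by
  cases n with
  | zero => exact h
  | succ n => exact h.1

theorem SD.pred {n : ℕ} : ∀ {φ : ι → Sm}, SD R e (n + 1) φ → SD R e n φ := by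
  induction n with
  | zero => exact fun h => h.1
  | succ n ih => exact fun h => ⟨h.1, ih h.2.1, ih h.2.2⟩

theorem SD.add {n : ℕ} : ∀ {φ ψ : ι → Sm}, SD R e n φ → SD R e n ψ →
    SD R e n (fun i => φ i + ψ i) := by
  have z : ∀ {φ ψ : ι → Sm}, S0 R e φ → S0 R e ψ → S0 R e (fun i => φ i + ψ i) := by
    rintro φ ψ ⟨K, hK, h⟩ ⟨K', hK', h'⟩
    refine ⟨K + K', by positivity, fun i x y hr => ?_⟩
    have := h i x y hr
    have := h' i x y hr
    refine (abs_add_le _ _).trans ?_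
    linarith
  induction n with
  | zero => exact fun h h' => z h h'
  | succ n ih =>
    intro φ ψ h h'
    refine ⟨z h.1 h'.1, ?_, ?_⟩
    · simp only [map_add]; exact ih h.2.1 h'.2.1
    · simp only [map_add]; exact ih h.2.2 h'.2.2

theorem SD.mul {n : ℕ} : ∀ {φ ψ : ι → Sm}, SD R e n φ → SD R e' n ψ →
    SD R (fun i => e i * e' i) n (fun i => φ i * ψ i) := by
  have z : ∀ {φ ψ : ι → Sm}, S0 R e φ → S0 R e' ψ →
      S0 R (fun i => e i * e' i) (fun i => φ i * ψ i) := by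
    rintro φ ψ ⟨K, hK, h⟩ ⟨K', hK', h'⟩
    refine ⟨K * K', by positivity, fun i x y hr => ?_⟩
    have a := h i x y hr
    have b := h' i x y hr
    rw [Sm.mul_ap, abs_mul]
    calc _ ≤ (K * e i) * (K' * e' i) := mul_le_mul a b (abs_nonneg _) ((abs_nonneg _).trans a)
      _ = _ := by ring
  induction n with
  | zero => exact fun h h' => z h h'
  | succ n ih =>
    intro φ ψ h h'
    have l : ∀ {φ ψ φ' ψ' : ι → Sm}, SD R e n φ → SD R e' n ψ → SD R e n φ' → SD R e' n ψ' →
        SD R (fun i => e i * e' i) n (fun i => φ i * ψ' i + ψ i * φ' i) := by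
      intro φ ψ φ' ψ' a b c d
      refine SD.add (ih a d) ?_
      simp only [fun i => mul_comm (ψ i) (φ' i)]
      exact ih c b
    refine ⟨z h.1 h'.1, ?_, ?_⟩
    · simp only [Derivation.leibniz, smul_eq_mul]; exact l h.pred h'.pred h.2.1 h'.2.1
    · simp only [Derivation.leibniz, smul_eq_mul]; exact l h.pred h'.pred h.2.2 h'.2.2

theorem SD.mono (he : ∀ i, e i ≤ e' i) {n : ℕ} : ∀ {φ : ι → Sm}, SD R e n φ → SD R e' n φ := by
  have z : ∀ {φ : ι → Sm}, S0 R e φ → S0 R e' φ := by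
    rintro φ ⟨K, hK, h⟩
    exact ⟨K, hK, fun i x y hr => (h i x y hr).trans (by have := he i; gcongr)⟩
  induction n with
  | zero => exact fun h => z h
  | succ n ih => exact fun h => ⟨z h.1, ih h.2.1, ih h.2.2⟩

theorem SD.const (n : ℕ) : ∀ p : Sm, SD R (fun _ : ι => 1) n (fun _ => p) := by
  have z : ∀ p : Sm, S0 R (fun _ : ι => 1) (fun _ => p) := by
    intro p
    have hc : IsCompact (Set.Icc (-|R|) |R| ×ˢ Set.Icc (-|R|) |R|) :=
      isCompact_Icc.prod isCompact_Icc
    obtain ⟨K, hK⟩ := hc.exists_bound_of_continuousOn (p.cont_slice 0).continuousOn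
    refine ⟨max K 0, le_max_right _ _, fun i x y hr => ?_⟩
    have hx : |x| ≤ |R| := sq_le_sq.1 (by nlinarith)
    have hy : |y| ≤ |R| := sq_le_sq.1 (by nlinarith)
    rw [mul_one]
    exact (hK (x, y) ⟨abs_le.1 hx, abs_le.1 hy⟩).trans (le_max_left _ _)
  induction n with
  | zero => exact z
  | succ n ih => exact fun p => ⟨z p, ih _, ih _⟩

theorem SD.of_zero (he : ∀ i, 0 ≤ e i) {n : ℕ} : ∀ {φ : ι → Sm}, (∀ i x y, φ i 0 x y = 0) →
    SD R e n φ := by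
  have z : ∀ {φ : ι → Sm}, (∀ i x y, φ i 0 x y = 0) → S0 R e φ := by
    intro φ h
    exact ⟨0, le_rfl, fun i x y _ => by rw [h, abs_zero, zero_mul]⟩
  induction n with
  | zero => exact fun h => z h
  | succ n ih =>
    intro φ h
    refine ⟨z h, ih fun i x y => ?_, ih fun i x y => ?_⟩
    · refine (hasDerivAt_1 (φ i) 0 x y).unique ?_
      simp only [h]; exact hasDerivAt_const _ _
    · refine (hasDerivAt_2 (φ i) 0 x y).unique ?_
      simp only [h]; exact hasDerivAt_const _ _

theorem SD.d1 {φ : ι → Sm} (h : ∀ n, SD R e n φ) (n : ℕ) : SD R e n (fun i => d1 (φ i)) :=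
  (h (n + 1)).2.1
theorem SD.d2 {φ : ι → Sm} (h : ∀ n, SD R e n φ) (n : ℕ) : SD R e n (fun i => d2 (φ i)) :=
  (h (n + 1)).2.2

theorem TD.sd {j : ℕ} {φ : ι → Sm} (h : TD R e j φ) : ∀ n, SD R e n φ := by
  cases j with
  | zero => exact h
  | succ j => exact h.1

theorem TD.pred {j : ℕ} : ∀ {φ : ι → Sm}, TD R e (j + 1) φ → TD R e j φ := by
  induction j with
  | zero => exact fun h => h.1
  | succ j ih => exact fun h => ⟨h.1, ih h.2⟩

theorem TD.add {j : ℕ} : ∀ {φ ψ : ι → Sm}, TD R e j φ → TD R e j ψ →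
    TD R e j (fun i => φ i + ψ i) := by
  induction j with
  | zero => exact fun h h' n => (h n).add (h' n)
  | succ j ih =>
    intro φ ψ h h'
    refine ⟨fun n => (h.1 n).add (h'.1 n), ?_⟩
    simp only [map_add]; exact ih h.2 h'.2

theorem TD.mul {j : ℕ} : ∀ {φ ψ : ι → Sm}, TD R e j φ → TD R e' j ψ →
    TD R (fun i => e i * e' i) j (fun i => φ i * ψ i) := by
  induction j with
  | zero => exact fun h h' n => (h n).mul (h' n)
  | succ j ih =>
    intro φ ψ h h'
    refine ⟨fun n => (h.1 n).mul (h'.1 n), ?_⟩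
    simp only [Derivation.leibniz, smul_eq_mul]
    refine TD.add (ih h.pred h'.2) ?_
    simp only [fun i => mul_comm (ψ i) (Ap.dt (φ i))]
    exact ih h.2 h'.pred

theorem TD.mono (he : ∀ i, e i ≤ e' i) {j : ℕ} : ∀ {φ : ι → Sm}, TD R e j φ → TD R e' j φ := by
  induction j with
  | zero => exact fun h n => (h n).mono he
  | succ j ih => exact fun h => ⟨fun n => (h.1 n).mono he, ih h.2⟩

theorem TD.const (j : ℕ) : ∀ p : Sm, TD R (fun _ : ι => 1) j (fun _ => p) := by
  induction j with
  | zero => exact fun p n => SD.const n p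
  | succ j ih => exact fun p => ⟨fun n => SD.const n p, ih _⟩

theorem TD.smul {j : ℕ} {φ : ι → Sm} (h : TD R e j φ) (p : Sm) : TD R e j (fun i => p * φ i) := by
  have := (TD.const (R := R) (ι := ι) j p).mul h
  simpa only [one_mul] using this

theorem TD.of_zp (he : ∀ i, 0 ≤ e i) {j : ℕ} : ∀ {φ : ι → Sm}, (∀ i, Zp (φ i)) → TD R e j φ := by
  induction j with
  | zero => exact fun h n => SD.of_zero he fun i x y => h i 0 x y le_rfl
  | succ j ih => exact fun h => ⟨fun n => SD.of_zero he fun i x y => h i 0 x y le_rfl,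
      ih fun i => (h i).D 0⟩

theorem TD.d1 {j : ℕ} : ∀ {φ : ι → Sm}, TD R e j φ → TD R e j (fun i => d1 (φ i)) := by
  induction j with
  | zero => exact fun h n => SD.d1 h n
  | succ j ih =>
    intro φ h
    refine ⟨fun n => SD.d1 h.1 n, ?_⟩
    simp only [← d1_dt]; exact ih h.2

theorem TD.d2 {j : ℕ} : ∀ {φ : ι → Sm}, TD R e j φ → TD R e j (fun i => d2 (φ i)) := by
  induction j with
  | zero => exact fun h n => SD.d2 h n
  | succ j ih =>
    intro φ h
    refine ⟨fun n => SD.d2 h.1 n, ?_⟩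
    simp only [← d2_dt]; exact ih h.2

theorem TD.G {φ : ι → Sm} (h : ∀ j, TD R e j φ) (a : Fin 7) (j : ℕ) :
    TD R e j (fun i => G a (φ i)) := by
  have ht : TD R e j (fun i => Ap.dt (φ i)) := (h (j + 1)).2
  have h1 := (h j).d1
  have h2 := (h j).d2
  fin_cases a
  · exact ((ht.smul cT).add (h1.smul cX)).add (h2.smul cY)
  · exact (h1.smul cT).add (ht.smul cX)
  · exact (h2.smul cT).add (ht.smul cY)
  · have := (h2.smul cX).add (h1.smul (-cY))
    simp only [neg_mul, ← sub_eq_add_neg] at this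
    exact this
  · exact ht
  · exact h1
  · exact h2

theorem TD.W (w : List (Fin 7)) : ∀ {φ : ι → Sm}, (∀ j, TD R e j φ) → ∀ j,
    TD R e j (fun i => W w (φ i)) := by
  induction w with
  | nil => exact fun h j => h j
  | cons a w ih => exact fun h j => ih (fun j => TD.G h a j) j

end Data

/-- A solution of the system on `t ≥ 0` supported in `|x| < t + R`; the component other than `a` is
`a + 1`. -/
structure Sol (R : ℝ) (u : Fin 2 → Sm) : Prop where
  eqn : ∀ a, Zp (box (u a) + dt (u (a + 1)) * dt (u (a + 1)) * dt (u a))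
  cs : ∀ a, Cs R (u a)

/-- Time-independent extension of a function of `x`. -/
def ext2 (f : ℝ → ℝ → ℝ) (hf : SmoothCompact2 f) : Sm := ⟨fun _ x y => f x y, by
  change ContDiff ℝ (⊤ : ℕ∞) (fun p : ℝ × ℝ × ℝ => f p.2.1 p.2.2)
  exact hf.1.comp contDiff_snd⟩

theorem supp_bound {f : ℝ → ℝ → ℝ} (hf : SmoothCompact2 f) :
    ∃ R : ℝ, 0 ≤ R ∧ ∀ x y : ℝ, R ^ 2 ≤ x ^ 2 + y ^ 2 → f x y = 0 := by
  obtain ⟨B, hB⟩ := hf.2.isCompact.isBounded.exists_norm_le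
  refine ⟨2 * |B| + 1, by positivity, fun x y h => ?_⟩
  by_contra hne
  have : ‖(x, y)‖ ≤ B := hB (x, y) (subset_tsupport _ hne)
  rw [Prod.norm_def, max_le_iff, Real.norm_eq_abs, Real.norm_eq_abs] at this
  have b0 := le_abs_self B
  have h1 : x ^ 2 ≤ |B| ^ 2 := sq_le_sq.2 (by rw [abs_abs]; linarith [this.1])
  have h2 : y ^ 2 ≤ |B| ^ 2 := sq_le_sq.2 (by rw [abs_abs]; linarith [this.2])
  nlinarith [abs_nonneg B]

/-- Solutions with data of size `ε` are supported in a fixed light cone, and all their derivatives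
along vector fields are `O(ε)` at time `0`. -/
theorem exists_data (f g : Fin 2 → ℝ → ℝ → ℝ) (hf : ∀ a, SmoothCompact2 (f a))
    (hg : ∀ a, SmoothCompact2 (g a)) (N : ℕ) :
    ∃ R K : ℝ, 1 ≤ R ∧ 0 < K ∧ ∀ (ε : ℝ) (u : Fin 2 → Sm), 0 < ε → ε ≤ 1 →
      (∀ a t x y, 0 < t → box (u a) t x y = -(dt (u (a + 1)) t x y) ^ 2 * dt (u a) t x y) →
      (∀ a x y, u a 0 x y = ε * f a x y) → (∀ a x y, dt (u a) 0 x y = ε * g a x y) →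
      Sol R u ∧ ∀ w ∈ words N, ∀ a x y, |W w (u a) 0 x y| ≤ K * ε := by
  choose Rf hRf0 hRf using fun a => supp_bound (hf a)
  choose Rg hRg0 hRg using fun a => supp_bound (hg a)
  set R := 1 + ∑ a, (|Rf a| + |Rg a|) with hRdef
  have hRa : ∀ a, |Rf a| + |Rg a| ≤ R := by
    intro a
    have := Finset.single_le_sum (f := fun a => |Rf a| + |Rg a|)
      (fun i _ => by positivity) (Finset.mem_univ a)
    linarith
  have hR : 1 ≤ R := by
    have : 0 ≤ ∑ a, (|Rf a| + |Rg a|) := Finset.sum_nonneg fun i _ => by positivity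
    linarith
  have f0 : ∀ a x y, R ^ 2 ≤ x ^ 2 + y ^ 2 → f a x y = 0 ∧ g a x y = 0 := by
    intro a x y h
    have a1 := hRa a
    have b1 := hRf0 a
    have b2 := hRg0 a
    rw [abs_of_nonneg b1, abs_of_nonneg b2] at a1
    exact ⟨hRf a x y (by nlinarith), hRg a x y (by nlinarith)⟩
  -- the family of all solutions with data of size `ε ≤ 1`
  let ι := {p : ℝ × (Fin 2 → Sm) // (0 < p.1 ∧ p.1 ≤ 1) ∧
      (∀ a t x y, 0 < t → box (p.2 a) t x y = -(dt (p.2 (a + 1)) t x y) ^ 2 * dt (p.2 a) t x y) ∧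
      (∀ a x y, p.2 a 0 x y = p.1 * f a x y) ∧ (∀ a x y, dt (p.2 a) 0 x y = p.1 * g a x y)}
  let e : ι → ℝ := fun i => i.1.1
  let U : Fin 2 → ι → Sm := fun a i => i.1.2 a
  have e0 : ∀ i, 0 ≤ e i := fun i => i.2.1.1.le
  have e1 : ∀ i, e i ≤ 1 := fun i => i.2.1.2
  have eqn : ∀ a i, Zp (box (U a i) + dt (U (a + 1) i) * dt (U (a + 1) i) * dt (U a i)) := by
    intro a i
    refine Zp.of_pos fun t x y ht => ?_
    have := i.2.2.1 a t x y ht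
    simp only [Sm.add_ap, Sm.mul_ap]
    change box (i.1.2 a) t x y + dt (i.1.2 (a + 1)) t x y * dt (i.1.2 (a + 1)) t x y
      * dt (i.1.2 a) t x y = 0
    rw [this]; ring
  have sd : ∀ (h : ℝ → ℝ → ℝ) (hh : SmoothCompact2 h) (V : ι → Sm),
      (∀ i x y, V i 0 x y = e i * h x y) → ∀ n, SD R e n V := by
    intro h hh V hV n
    have ec : ∀ n, SD R e n (fun i => cst (e i)) := by
      intro n
      cases n with
      | zero => exact ⟨1, zero_le_one, fun i x y _ => by rw [cst_ap, one_mul, abs_of_nonneg (e0 i)]⟩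
      | succ n =>
        refine ⟨⟨1, zero_le_one, fun i x y _ => by rw [cst_ap, one_mul, abs_of_nonneg (e0 i)]⟩, ?_, ?_⟩
        · exact SD.of_zero e0 fun i x y => by rw [D_cst]; rfl
        · exact SD.of_zero e0 fun i x y => by rw [D_cst]; rfl
    have s1 : SD R e n (fun i => cst (e i) * ext2 h hh) := by
      have := (ec n).mul (SD.const (R := R) (ι := ι) n (ext2 h hh))
      simpa only [mul_one] using this
    have s2 : SD R e n (fun i => V i - cst (e i) * ext2 h hh) := SD.of_zero e0 fun i x y => by
      rw [Sm.sub_ap, hV, Sm.mul_ap, cst_ap]; exact sub_self _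
    have := s1.add s2
    simpa only [add_sub_cancel] using this
  have td : ∀ j a, TD R e j (U a) := by
    have main : ∀ j, (∀ a, TD R e j (U a)) ∧ ∀ a, TD R e (j + 1) (U a) := by
      intro j
      induction j with
      | zero =>
        have s0 : ∀ a, TD R e 0 (U a) := fun a n =>
          sd (f a) (hf a) _ (fun i x y => i.2.2.2.1 a x y) n
        exact ⟨s0, fun a => ⟨s0 a, fun n => sd (g a) (hg a) _ (fun i x y => i.2.2.2.2 a x y) n⟩⟩
      | succ j ih =>
        refine ⟨ih.2, fun a => ⟨(ih.1 a).sd, (ih.2 a).2.sd, ?_⟩⟩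
        have t1 := (ih.1 a).d1.d1
        have t2 := (ih.1 a).d2.d2
        have t3 := (((ih.2 (a + 1)).2.mul (ih.2 (a + 1)).2).mul (ih.2 a).2).smul (-1)
        have t3' := t3.mono (e' := e) fun i => by
          have := e0 i; have := e1 i
          have : e i * e i ≤ 1 := by nlinarith
          nlinarith
        have t4 : TD R e j (fun i => box (U a i) + dt (U (a + 1) i) * dt (U (a + 1) i)
            * dt (U a i)) := TD.of_zp e0 fun i => eqn a i
        have := ((t1.add t2).add t3').add t4
        have ee : ∀ i, d1 (d1 (U a i)) + d2 (d2 (U a i)) +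
            -1 * (dt (U (a + 1) i) * dt (U (a + 1) i) * dt (U a i)) +
            (box (U a i) + dt (U (a + 1) i) * dt (U (a + 1) i) * dt (U a i))
            = dt (dt (U a i)) := by intro i; rw [box]; ring
        simpa only [ee] using this
    exact fun j => (main j).1
  have bd : ∀ w a, ∃ K : ℝ, 0 ≤ K ∧ ∀ i x y, x ^ 2 + y ^ 2 ≤ R ^ 2 →
      |W w (U a i) 0 x y| ≤ K * e i := fun w a => (TD.W w (fun j => td j a) 0).sd 0
  choose K hK0 hK using bd
  refine ⟨R, 1 + ∑ w ∈ words N, ∑ a, K w a, hR, ?_, fun ε u hε hε1 hb hu0 hu1 => ?_⟩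
  · have : 0 ≤ ∑ w ∈ words N, ∑ a, K w a :=
      Finset.sum_nonneg fun w _ => Finset.sum_nonneg fun a _ => hK0 w a
    linarith
  · let i : ι := ⟨(ε, u), ⟨hε, hε1⟩, hb, hu0, hu1⟩
    have sol : Sol R u := by
      refine ⟨fun a => eqn a i, fun a => ?_⟩
      refine fsp hR (c := dt (u (a + 1)) * dt (u (a + 1)))
        (fun t x y _ => mul_self_nonneg (dt (u (a + 1)) t x y)) (eqn a i) (fun x y h => ?_)
        (fun x y h => ?_)
      · rw [hu0, (f0 a x y h).1, mul_zero]
      · rw [hu1, (f0 a x y h).2, mul_zero]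
    refine ⟨sol, fun w hw a x y => ?_⟩
    rcases le_total (x ^ 2 + y ^ 2) (R ^ 2) with h | h
    · refine (hK w a i x y h).trans ?_
      have l1 : K w a ≤ ∑ a, K w a :=
        Finset.single_le_sum (f := fun a => K w a) (fun b _ => hK0 w b) (Finset.mem_univ a)
      have l2 : ∑ a, K w a ≤ ∑ w ∈ words N, ∑ a, K w a :=
        Finset.single_le_sum (f := fun w => ∑ a, K w a)
          (fun w _ => Finset.sum_nonneg fun a _ => hK0 w a) hw
      change K w a * ε ≤ _
      gcongr
      linarith
    · have : W w (u a) 0 x y = 0 := (sol.cs a).W hR w 0 x y le_rfl (by simpa using h)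
      rw [this, abs_zero]
      have : 0 ≤ ∑ w ∈ words N, ∑ a, K w a :=
        Finset.sum_nonneg fun w _ => Finset.sum_nonneg fun a _ => hK0 w a
      positivity

end Ap

namespace Ap
set_option linter.unusedVariables false

/-! ### The commuted equation -/

theorem mul3_le {a b c a' b' c' : ℝ} (ha : |a| ≤ a') (hb : |b| ≤ b') (hc : |c| ≤ c') :
    |a| * |b| * |c| ≤ a' * b' * c' := by
  have := (abs_nonneg a).trans ha
  have := (abs_nonneg b).trans hb
  have := (abs_nonneg c).trans hc
  gcongr

/-- Pointwise bound of the commuted nonlinearity: in a cubic expression two of the three factors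
carry at most half of the vector fields. -/
theorem nl {R : ℝ} {u : Fin 2 → Sm} (sol : Sol R u) {k N m : ℕ} (hN : N ≤ 2 * k + 1) (hm : m ≤ N)
    {t x y A β Z : ℝ} (ht : 0 ≤ t) (hβ : 1 ≤ β) (hA0 : 0 ≤ A) (hZ0 : 0 ≤ Z)
    (hA : ∀ w : List (Fin 7), w.length ≤ k → ∀ a b, |D b (W w (u a)) t x y| ≤ A * β ^ w.length)
    (hZ : ∀ w : List (Fin 7), w.length ≤ m → ∀ a b, |D b (W w (u a)) t x y| ≤ Z * β ^ w.length)
    {w : List (Fin 7)} (hw : w.length ≤ m) (a : Fin 2) :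
    |box (W w (u a)) t x y| ≤ 72 ^ N * (A ^ 2 * Z * β ^ w.length) := by
  have β0 : 0 < β := by linarith
  have pm : ∀ {i j : ℕ}, i ≤ j → β ^ i ≤ β ^ j := fun h => pow_le_pow_right₀ hβ h
  have fB : ∀ B : ℝ, 0 ≤ B → ∀ n, (∀ w : List (Fin 7), w.length ≤ n →
      ∀ a b, |D b (W w (u a)) t x y| ≤ B * β ^ w.length) → ∀ v : List (Fin 7), v.length ≤ n →
      v.length ≤ N → ∀ a, |W v (dt (u a)) t x y| ≤ 2 ^ N * B * β ^ v.length := by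
    intro B hB n H v hv hvN a
    refine (W_D v.length v le_rfl 0 (u a) t x y (B * β ^ v.length) fun c b hc => ?_).trans ?_
    · exact (H c (hc.trans hv) a b).trans (by have := pm hc; gcongr)
    · rw [mul_assoc]; gcongr; norm_num
  have fA := fB A hA0 k hA
  have fZ := fB Z hZ0 m hZ
  have F : ∀ v : List (Fin 7), v.length ≤ w.length →
      |W v (box (u a)) t x y| ≤ 3 ^ N * (8 ^ N * (A ^ 2 * Z * β ^ w.length)) := by
    intro v hv
    have e : W v (box (u a)) t x y
        = -W v (dt (u (a + 1)) * dt (u (a + 1)) * dt (u a)) t x y := by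
      have := (sol.eqn a).W v t x y ht
      rw [W_add, Sm.add_ap] at this
      linarith
    rw [e, abs_neg]
    refine (W_mul3 v.length v le_rfl _ _ _ t x y (8 ^ N * (A ^ 2 * Z * β ^ w.length)) ?_).trans ?_
    · intro w1 w2 w3 hs
      have h8 : (8 : ℝ) ^ N = 2 ^ N * 2 ^ N * 2 ^ N := by rw [← mul_pow, ← mul_pow]; norm_num
      have hp : β ^ (w1.length + w2.length + w3.length) ≤ β ^ w.length := pm (hs.trans hv)
      have fin : 2 ^ N * 2 ^ N * 2 ^ N * (A ^ 2 * Z) * β ^ (w1.length + w2.length + w3.length)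
          ≤ 8 ^ N * (A ^ 2 * Z * β ^ w.length) := by
        rw [h8, mul_assoc (2 ^ N * 2 ^ N * 2 ^ N)]; gcongr
      refine le_trans ?_ fin
      rw [pow_add, pow_add]
      rcases le_or_gt w1.length k with h1 | h1
      · rcases le_or_gt w2.length k with h2 | h2
        · refine (mul3_le (fA w1 h1 (by omega) _) (fA w2 h2 (by omega) _)
            (fZ w3 (by omega) (by omega) _)).trans (le_of_eq (by ring))
        · refine (mul3_le (fA w1 h1 (by omega) _) (fZ w2 (by omega) (by omega) _)
            (fA w3 (by omega) (by omega) _)).trans (le_of_eq (by ring))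
      · refine (mul3_le (fZ w1 (by omega) (by omega) _) (fA w2 (by omega) (by omega) _)
            (fA w3 (by omega) (by omega) _)).trans (le_of_eq (by ring))
    · gcongr
      · norm_num
      · omega
  refine (box_W w.length w le_rfl (u a) t x y _ F).trans ?_
  have h72 : (72 : ℝ) ^ N = 3 ^ N * (3 ^ N * 8 ^ N) := by rw [← mul_pow, ← mul_pow]; norm_num
  have h3 : (3 : ℝ) ^ w.length ≤ 3 ^ N := pow_le_pow_right₀ (by norm_num) (by omega)
  calc _ ≤ 3 ^ N * (3 ^ N * (8 ^ N * (A ^ 2 * Z * β ^ w.length))) := by gcongr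
    _ = _ := by rw [h72]; ring

/-! ### Bootstrap hypotheses and the energy estimate -/

/-- Parameters of the bootstrap: the cone radius, the number `k` of vector fields under pointwise
control, the growth exponent `η` per vector field, the loss `μ`, and the size `K` of the data. -/
structure Par where
  R : ℝ
  k : ℕ
  η : ℝ
  μ : ℝ
  K : ℝ
  hR : 1 ≤ R
  hk : 5 ≤ k
  hη : 0 < η
  hμ : 4 * ((k + 7) * η) ≤ μ
  hμ1 : μ < 1 / 10
  hK : 0 < K

namespace Par
variable (P : Par)

/-- Number of vector fields in the energy. -/
def N : ℕ := P.k + 6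

/-- Growth exponent of the energy norm. -/
def δ : ℝ := (P.k + 7) * P.η

theorem δ_pos : 0 < P.δ := by have := P.hη; rw [δ]; positivity
theorem δ_μ : 4 * P.δ ≤ P.μ := P.hμ
theorem η_δ (j : ℕ) (hj : j ≤ P.N + 1) : j * P.η ≤ P.δ := by
  have : (j : ℝ) ≤ P.k + 7 := by
    have : j ≤ P.k + 7 := hj
    exact_mod_cast this
  have := P.hη
  rw [δ]; gcongr
theorem δ_one : P.δ < 1 / 40 := by have := P.δ_μ; have := P.hμ1; linarith
theorem R0 : 0 ≤ P.R := by linarith [P.hR]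

end Par

/-- Bootstrap hypotheses on the time interval `[0, T]`: first derivatives of `Γ^w u`, `|w| ≤ k`, decay
at the sharp rate up to the factor `(1 + t)^(η|w|)`, which is absent for `u` itself. -/
structure Boot (P : Par) (M ε T : ℝ) (u : Fin 2 → Sm) : Prop where
  sol : Sol P.R u
  ε0 : 0 < ε
  M0 : 0 < M
  sm : M * ε ≤ 1
  data : ∀ w ∈ words (P.N + 1), ∀ a x y, |W w (u a) 0 x y| ≤ P.K * ε
  boot : ∀ t, 0 ≤ t → t ≤ T → ∀ w ∈ words P.k, ∀ a b x y, |D b (W w (u a)) t x y| ≤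
    M * ε * (1 + t) ^ (-(1 / 2) : ℝ) * JS P.R t x y ^ (P.μ - 1) * ((1 + t) ^ P.η) ^ w.length

/-- Integrated form of `energy_ident`: the divergence terms disappear. -/
theorem energy_deriv {R : ℝ} (hR : 1 ≤ R) (ψ : Sm) {φ : Sm} (hφ : Cs R φ) {t : ℝ} (ht : 0 ≤ t) :
    I (dt (ψ * e2 φ)) t = I (dt ψ * e2 φ - 2 * dt φ * (d1 ψ * d1 φ + d2 ψ * d2 φ)
      + 2 * ψ * dt φ * box φ) t := by
  have hR0 : 0 ≤ R := by linarith
  have c1 : Cs R (2 * ψ * dt φ * d1 φ) := (hφ.d1 hR).mul_left _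
  have c2 : Cs R (2 * ψ * dt φ * d2 φ) := (hφ.d2 hR).mul_left _
  have c3 : Cs R (dt ψ * e2 φ - 2 * dt φ * (d1 ψ * d1 φ + d2 ψ * d2 φ)
      + 2 * ψ * dt φ * box φ) :=
    ((hφ.e2 hR).mul_left _ |>.sub (((hφ.d1 hR).mul_left _ |>.add ((hφ.d2 hR).mul_left _)).mul_left _)).add
      ((hφ.box hR).mul_left _)
  rw [energy_ident, I_add ((c1.d1 hR).add (c2.d2 hR)) c3 hR0 ht,
    I_add (c1.d1 hR) (c2.d2 hR) hR0 ht, I_d1 c1 hR ht, I_d2 c2 hR ht, add_zero, zero_add]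

/-- At time `0` the support has area at most `4R²`. -/
theorem I_le_bd {R : ℝ} (hR : 1 ≤ R) {f : Sm} (hf : Cs R f) {B : ℝ} (hB : 0 ≤ B)
    (h : ∀ x y, f 0 x y ≤ B) : I f 0 ≤ B * (4 * R ^ 2) := by
  have hR0 : 0 ≤ R := by linarith
  rw [I_eq_Bx hf hR0 le_rfl (A := R) (by linarith)]
  have hfin : volume (Bx R) < ⊤ := Bx_compact R |>.measure_lt_top
  have i1 : ∫ x in Bx R, f 0 x.1 x.2 ≤ ∫ x in Bx R, B :=
    setIntegral_mono_on (hf.integrable hR0 le_rfl).integrableOn (by simp [hfin])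
      (Bx_compact R).measurableSet fun x _ => h _ _
  refine i1.trans ?_
  rw [setIntegral_const, smul_eq_mul, mul_comm]
  gcongr
  have : (volume (Bx R)).toReal = 4 * R ^ 2 := by
    rw [Bx, Measure.volume_eq_prod, Measure.prod_prod, Real.volume_Icc]
    rw [ENNReal.toReal_mul, ENNReal.toReal_ofReal (by linarith)]; ring
  exact this.le


/-- The words and components entering the energy. -/
def Par.ix (P : Par) : Finset (List (Fin 7) × Fin 2) := words P.N ×ˢ Finset.univ

theorem Par.mem_ix {P : Par} {p : List (Fin 7) × Fin 2} : p ∈ P.ix ↔ p.1.length ≤ P.N := by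
  simp [Par.ix]

/-- The weighted energy density, at the time `t` of its weights. -/
def Qs (P : Par) (u : Fin 2 → Sm) (t : ℝ) : Sm :=
  ∑ p ∈ P.ix, ((((1 + t) ^ P.η) ^ (p.1.length + 1)) ^ 2)⁻¹ • e2 (W p.1 (u p.2))

section
variable {P : Par} {M ε T : ℝ} {u : Fin 2 → Sm}

theorem beta_ge {t : ℝ} (ht : 0 ≤ t) : 1 ≤ (1 + t) ^ P.η :=
  Real.one_le_rpow (by linarith) P.hη.le

theorem beta_le {t : ℝ} (ht : 0 ≤ t) {j : ℕ} (hj : j ≤ P.N + 1) :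
    ((1 + t) ^ P.η) ^ j ≤ (1 + t) ^ P.δ := by
  rw [← Real.rpow_mul_natCast (by linarith), mul_comm]
  exact Real.rpow_le_rpow_of_exponent_le (by linarith) (P.η_δ j hj)

theorem Boot.csW (h : Boot P M ε T u) (w : List (Fin 7)) (a : Fin 2) : Cs P.R (W w (u a)) :=
  (h.sol.cs a).W P.hR w

theorem Boot.csQ (h : Boot P M ε T u) (t : ℝ) : Cs P.R (Qs P u t) :=
  Cs.sum fun p _ => ((h.csW _ _).e2 P.hR).smul _

theorem Qs_ap (t t' x y : ℝ) : Qs P u t t' x y =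
    ∑ p ∈ P.ix, ((((1 + t) ^ P.η) ^ (p.1.length + 1)) ^ 2)⁻¹ * e2 (W p.1 (u p.2)) t' x y := by
  rw [Qs, Sm.sum_ap]; rfl

theorem Qs_nonneg {t : ℝ} (ht : 0 ≤ t) (t' x y : ℝ) : 0 ≤ Qs P u t t' x y := by
  rw [Qs_ap]
  exact Finset.sum_nonneg fun p _ => mul_nonneg (by positivity) (e2_nonneg _ _ _ _)

theorem D_sq_le_e2 (φ : Sm) (b : Fin 3) (t x y : ℝ) : D b φ t x y ^ 2 ≤ e2 φ t x y := by
  rw [e2_ap]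
  fin_cases b
  · change dt φ t x y ^ 2 ≤ _; nlinarith [sq_nonneg (d1 φ t x y), sq_nonneg (d2 φ t x y)]
  · change d1 φ t x y ^ 2 ≤ _; nlinarith [sq_nonneg (dt φ t x y), sq_nonneg (d2 φ t x y)]
  · change d2 φ t x y ^ 2 ≤ _; nlinarith [sq_nonneg (dt φ t x y), sq_nonneg (d1 φ t x y)]

theorem e2_le_Qs {t : ℝ} (ht : 0 ≤ t) {w : List (Fin 7)} (hw : w.length ≤ P.N) (a : Fin 2)
    (t' x y : ℝ) : e2 (W w (u a)) t' x y
      ≤ (((1 + t) ^ P.η) ^ (w.length + 1)) ^ 2 * Qs P u t t' x y := by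
  have b1 : 1 ≤ (1 + t) ^ P.η := beta_ge ht
  have b0 : 0 < (1 + t) ^ P.η := by linarith
  rw [← inv_mul_le_iff₀ (by positivity), Qs_ap]
  exact Finset.single_le_sum (f := fun p : List (Fin 7) × Fin 2 =>
    ((((1 + t) ^ P.η) ^ (p.1.length + 1)) ^ 2)⁻¹ * e2 (W p.1 (u p.2)) t' x y)
    (fun p _ => mul_nonneg (by positivity) (e2_nonneg _ _ _ _)) (Par.mem_ix (p := (w, a)).2 hw)

theorem D_le_Qs {t : ℝ} (ht : 0 ≤ t) {w : List (Fin 7)} (hw : w.length ≤ P.N) (a : Fin 2)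
    (b : Fin 3) (t' x y : ℝ) : |D b (W w (u a)) t' x y|
      ≤ √(Qs P u t t' x y) * ((1 + t) ^ P.η) ^ (w.length + 1) := by
  have b1 : 1 ≤ (1 + t) ^ P.η := beta_ge ht
  refine abs_le_of_sq_le_sq ?_ (by positivity)
  rw [mul_pow, Real.sq_sqrt (Qs_nonneg ht _ _ _), mul_comm]
  exact (D_sq_le_e2 _ _ _ _ _).trans (e2_le_Qs ht hw a t' x y)

/-- Two factors `J^(μ-1)` give at least one factor `J⁻¹`. -/
theorem J_pow_le {R t x y μ : ℝ} (hμ : μ < 1 / 10) :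
    (JS R t x y ^ (μ - 1)) ^ 2 ≤ JI R t x y ∧ JI R t x y ≤ 1 := by
  have j1 := JS_ge_one R t x y
  constructor
  · rw [JI_ap, ← Real.rpow_natCast, ← Real.rpow_mul (by linarith), ← Real.rpow_neg_one]
    exact Real.rpow_le_rpow_of_exponent_le j1 (by push_cast; linarith)
  · rw [JI_ap]; exact inv_le_one_of_one_le₀ j1

/-- The commuted nonlinearity in terms of the energy density: two of the three factors of each term are
bounded by the bootstrap hypotheses, and the factor `J⁻¹` they provide is kept for later use. -/
theorem Boot.nlQ (h : Boot P M ε T u) {t : ℝ} (ht : 0 ≤ t) (htT : t ≤ T) {w : List (Fin 7)}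
    (hw : w.length ≤ P.N) (a : Fin 2) (x y : ℝ) : |box (W w (u a)) t x y| ≤
      72 ^ P.N * (M * ε) ^ 2 * (1 + t)⁻¹ * JI P.R t x y * √(Qs P u t t x y)
        * ((1 + t) ^ P.η) ^ (w.length + 1) := by
  have hε := h.ε0
  have hM := h.M0
  have b1 : 1 ≤ (1 + t) ^ P.η := beta_ge ht
  have j1 := JS_ge_one P.R t x y
  have t1 : (0 : ℝ) < 1 + t := by linarith
  set A := M * ε * (1 + t) ^ (-(1 / 2) : ℝ) * JS P.R t x y ^ (P.μ - 1) with hA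
  have A0 : 0 ≤ A := by positivity
  have A2 : A ^ 2 ≤ (M * ε) ^ 2 * (1 + t)⁻¹ * JI P.R t x y := by
    rw [hA, mul_pow, mul_pow]
    have e : ((1 + t) ^ (-(1 / 2) : ℝ)) ^ 2 = (1 + t)⁻¹ := by
      rw [← Real.rpow_natCast, ← Real.rpow_mul t1.le, ← Real.rpow_neg_one]; norm_num
    rw [e]
    have := (J_pow_le (R := P.R) (t := t) (x := x) (y := y) P.hμ1).1
    gcongr
  have := nl h.sol (k := P.k) (N := P.N) (m := P.N) (by have := P.hk; rw [Par.N]; omega) le_rfl ht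
    b1 A0 (Z := √(Qs P u t t x y) * (1 + t) ^ P.η) (by positivity)
    (fun w hw a b => h.boot t ht htT w (mem_words.2 hw) a b x y)
    (fun w hw a b => (D_le_Qs ht hw a b t x y).trans (le_of_eq (by ring))) hw a
  refine this.trans ?_
  calc _ = 72 ^ P.N * A ^ 2 * (√(Qs P u t t x y) * ((1 + t) ^ P.η) ^ (w.length + 1)) := by ring
    _ ≤ 72 ^ P.N * ((M * ε) ^ 2 * (1 + t)⁻¹ * JI P.R t x y) *
        (√(Qs P u t t x y) * ((1 + t) ^ P.η) ^ (w.length + 1)) := by gcongr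
    _ = _ := by ring

theorem I_Qs (h : Boot P M ε T u) {t : ℝ} (ht : 0 ≤ t) : I (Qs P u t) t =
    ∑ p ∈ P.ix, (1 + t) ^ (-(2 * (p.1.length + 1) * P.η)) * I (e2 (W p.1 (u p.2))) t := by
  rw [Qs, I_sum (fun p _ => ((h.csW _ _).e2 P.hR).smul _) P.R0 ht]
  refine Finset.sum_congr rfl fun p _ => ?_
  rw [I_smul]
  congr 1
  have t1 : (0 : ℝ) < 1 + t := by linarith
  rw [← pow_mul, ← Real.rpow_mul_natCast t1.le, ← Real.rpow_neg t1.le]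
  congr 1; push_cast; ring

end

/-- The energy estimate: the decaying weights absorb the nonlinearity. -/
theorem step1 (P : Par) : ∃ c0 C : ℝ, 0 < c0 ∧ 0 < C ∧ ∀ M ε T u, Boot P M ε T u → M * ε ≤ c0 →
    ∀ t, 0 ≤ t → t ≤ T → I (Qs P u t) t ≤ C * ε ^ 2 := by
  have hcard : 0 < (P.ix.card : ℝ) := by
    have : P.ix.Nonempty := ⟨([], 0), Par.mem_ix.2 (by simp)⟩
    exact_mod_cast this.card_pos
  have hη := P.hη
  have hK := P.hK
  have hR := P.hR
  refine ⟨min 1 (P.η / (P.ix.card * 72 ^ P.N)), P.ix.card * (3 * P.K ^ 2 * (4 * P.R ^ 2)),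
    by positivity, by positivity, fun M ε T u h hs t ht htT => ?_⟩
  have hε := h.ε0
  have hM := h.M0
  have sm : (M * ε) ^ 2 * (P.ix.card * 72 ^ P.N) ≤ P.η := by
    have a1 := hs.trans (min_le_left _ _)
    have a2 := hs.trans (min_le_right _ _)
    rw [le_div_iff₀ (by positivity)] at a2
    have : (M * ε) ^ 2 ≤ M * ε := by nlinarith [mul_pos hM hε]
    exact (by gcongr : _ ≤ M * ε * (P.ix.card * 72 ^ P.N)).trans a2
  set pw : List (Fin 7) × Fin 2 → ℝ := fun p => -(2 * (p.1.length + 1) * P.η) with hpw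
  set E : List (Fin 7) × Fin 2 → Sm := fun p => e2 (W p.1 (u p.2)) with hE
  have csE : ∀ p, Cs P.R (E p) := fun p => (h.csW _ _).e2 hR
  have main : ∑ p ∈ P.ix, (1 + t) ^ pw p * I (E p) t
      ≤ ∑ p ∈ P.ix, (1 + (0 : ℝ)) ^ pw p * I (E p) 0 := by
    refine le_of_deriv_le (f := fun t => ∑ p ∈ P.ix, (1 + t) ^ pw p * I (E p) t)
      (f' := fun t => ∑ p ∈ P.ix, (pw p * (1 + t) ^ (pw p - 1) * I (E p) t
        + (1 + t) ^ pw p * I (dt (E p)) t))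
      (B := fun _ => ∑ p ∈ P.ix, (1 + (0 : ℝ)) ^ pw p * I (E p) 0) (B' := fun _ => 0) ht
      (fun τ hτ => HasDerivWithinAt.fun_sum fun p _ =>
        (hasDeriv_pow (pw p) hτ.1).hasDerivWithinAt.mul (I_deriv (csE p) hR hτ.1))
      (fun τ _ => hasDerivWithinAt_const _ _ _) le_rfl fun τ hτ => ?_
    have hτ0 := hτ.1
    have t1 : (0 : ℝ) < 1 + τ := by linarith
    have b1 : 1 ≤ (1 + τ) ^ P.η := beta_ge hτ0
    set Y := I (Qs P u τ) τ with hY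
    have Y0 : 0 ≤ Y := I_nonneg fun x y => Qs_nonneg hτ0 _ _ _
    have hYs : Y = ∑ p ∈ P.ix, (1 + τ) ^ pw p * I (E p) τ := I_Qs h hτ0
    -- the damping produced by the weights
    have first : ∑ p ∈ P.ix, pw p * (1 + τ) ^ (pw p - 1) * I (E p) τ
        ≤ -(2 * P.η * (1 + τ)⁻¹) * Y := by
      rw [hYs, Finset.mul_sum]
      refine Finset.sum_le_sum fun p _ => ?_
      have i0 : 0 ≤ I (E p) τ := I_nonneg fun x y => e2_nonneg _ _ _ _
      have e : (1 + τ) ^ (pw p - 1) = (1 + τ)⁻¹ * (1 + τ) ^ pw p := by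
        rw [Real.rpow_sub_one t1.ne']; field_simp
      have l : pw p ≤ -(2 * P.η) := by
        have : (0 : ℝ) ≤ p.1.length * P.η := by positivity
        rw [hpw]; dsimp only; linarith
      rw [e]
      have : 0 ≤ (1 + τ)⁻¹ * (1 + τ) ^ pw p * I (E p) τ := by positivity
      nlinarith
    -- the contribution of the nonlinearity
    have second : ∀ p ∈ P.ix, (1 + τ) ^ pw p * I (dt (E p)) τ
        ≤ 2 * 72 ^ P.N * (M * ε) ^ 2 * (1 + τ)⁻¹ * Y := by
      intro p hp
      have hw := Par.mem_ix.1 hp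
      set φ := W p.1 (u p.2) with hφ
      have csφ : Cs P.R φ := h.csW _ _
      have e1 : I (dt (E p)) τ = I (2 * dt φ * box φ) τ := by
        have := energy_deriv hR 1 csφ hτ0
        have z1 : dt (1 : Sm) = 0 := Derivation.map_one_eq_zero _
        have z2 : d1 (1 : Sm) = 0 := Derivation.map_one_eq_zero _
        have z3 : d2 (1 : Sm) = 0 := Derivation.map_one_eq_zero _
        rw [z1, z2, z3] at this
        simp only [one_mul, zero_mul, mul_zero, add_zero, sub_zero, zero_add, mul_one] at this
        exact this
      have e2' : (1 + τ) ^ pw p = ((((1 + τ) ^ P.η) ^ (p.1.length + 1)) ^ 2)⁻¹ := by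
        rw [← pow_mul, ← Real.rpow_mul_natCast t1.le, ← Real.rpow_neg t1.le]
        congr 1; rw [hpw]; push_cast; ring
      set γ := ((1 + τ) ^ P.η) ^ (p.1.length + 1) with hγ
      have γ0 : 0 < γ := by positivity
      rw [e1, e2', ← I_smul, hY, ← I_smul]
      refine I_mono ((((csφ.box hR).mul_left _)).smul _) ((h.csQ τ).smul _) P.R0 hτ0 fun x y => ?_
      simp only [Sm.smul_ap, Sm.mul_ap, Sm.ofNat_ap]
      have n1 := h.nlQ hτ0 (hτ.2.trans htT) hw p.2 x y
      have n2 := D_le_Qs (P := P) (u := u) hτ0 hw p.2 0 τ x y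
      have n3 : JI P.R τ x y ≤ 1 := (J_pow_le P.hμ1).2
      have q0 := Qs_nonneg (P := P) (u := u) hτ0 τ x y
      change |dt φ τ x y| ≤ _ at n2
      rw [← hγ] at n1 n2
      rw [inv_mul_le_iff₀ (by positivity)]
      have j0 : 0 ≤ JI P.R τ x y := by rw [JI_ap]; have := JS_pos P.R τ x y; positivity
      calc 2 * dt φ τ x y * box φ τ x y ≤ 2 * (|dt φ τ x y| * |box φ τ x y|) := by
            rw [← abs_mul, mul_assoc]; gcongr; exact le_abs_self _
        _ ≤ 2 * ((√(Qs P u τ τ x y) * γ) * (72 ^ P.N * (M * ε) ^ 2 * (1 + τ)⁻¹ *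
            JI P.R τ x y * √(Qs P u τ τ x y) * γ)) := by gcongr
        _ ≤ 2 * ((√(Qs P u τ τ x y) * γ) * (72 ^ P.N * (M * ε) ^ 2 * (1 + τ)⁻¹ *
            1 * √(Qs P u τ τ x y) * γ)) := by gcongr
        _ = γ ^ 2 * (2 * 72 ^ P.N * (M * ε) ^ 2 * (1 + τ)⁻¹ * √(Qs P u τ τ x y) ^ 2) := by ring
        _ = _ := by rw [Real.sq_sqrt q0]
    rw [Finset.sum_add_distrib]
    have third := Finset.sum_le_card_nsmul _ _ _ second
    rw [nsmul_eq_mul] at third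
    have fin : (P.ix.card : ℝ) * (2 * 72 ^ P.N * (M * ε) ^ 2 * (1 + τ)⁻¹ * Y)
        ≤ 2 * P.η * (1 + τ)⁻¹ * Y := by
      calc _ = 2 * ((M * ε) ^ 2 * (P.ix.card * 72 ^ P.N)) * (1 + τ)⁻¹ * Y := by ring
        _ ≤ _ := by gcongr
    linarith
  rw [I_Qs h ht]
  refine main.trans ?_
  have init : ∀ p ∈ P.ix, (1 + (0 : ℝ)) ^ pw p * I (E p) 0
      ≤ 3 * (P.K * ε) ^ 2 * (4 * P.R ^ 2) := by
    intro p hp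
    rw [add_zero, Real.one_rpow, one_mul]
    refine I_le_bd hR (csE p) (by positivity) fun x y => ?_
    have hw := Par.mem_ix.1 hp
    have d : ∀ b, D b (W p.1 (u p.2)) 0 x y ^ 2 ≤ (P.K * ε) ^ 2 := by
      intro b
      have := h.data (p.1 ++ [letter b]) (mem_words.2 (by simp [hw])) p.2 x y
      rw [W_append, W_cons, W_nil, ← D_eq_G] at this
      rw [← sq_abs]; gcongr
    have g0 : dt (W p.1 (u p.2)) 0 x y ^ 2 ≤ (P.K * ε) ^ 2 := d 0
    have g1 : d1 (W p.1 (u p.2)) 0 x y ^ 2 ≤ (P.K * ε) ^ 2 := d 1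
    have g2 : d2 (W p.1 (u p.2)) 0 x y ^ 2 ≤ (P.K * ε) ^ 2 := d 2
    change e2 (W p.1 (u p.2)) 0 x y ≤ _
    rw [e2_ap]; linarith
  refine (Finset.sum_le_card_nsmul _ _ _ init).trans (le_of_eq ?_)
  rw [nsmul_eq_mul]; ring

end Ap

namespace Ap
set_option linter.unusedVariables false

/-! ### The scaling multiplier and the `L²` norm -/

section
variable {P : Par} {M ε T : ℝ} {u : Fin 2 → Sm}

theorem Boot.d0 (h : Boot P M ε T u) {w : List (Fin 7)} (hw : w.length ≤ P.N + 1) (a : Fin 2)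
    (x y : ℝ) : |W w (u a) 0 x y| ≤ P.K * ε := h.data w (mem_words.2 hw) a x y

theorem Boot.d0D (h : Boot P M ε T u) {w : List (Fin 7)} (hw : w.length ≤ P.N) (a : Fin 2)
    (b : Fin 3) (x y : ℝ) : |D b (W w (u a)) 0 x y| ≤ P.K * ε := by
  have := h.d0 (w := w ++ [letter b]) (by simp [hw]) a x y
  rwa [W_append, W_cons, W_nil, ← D_eq_G] at this

theorem Boot.e20 (h : Boot P M ε T u) {w : List (Fin 7)} (hw : w.length ≤ P.N) (a : Fin 2)
    (x y : ℝ) : e2 (W w (u a)) 0 x y ≤ 3 * (P.K * ε) ^ 2 := by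
  have d : ∀ b, D b (W w (u a)) 0 x y ^ 2 ≤ (P.K * ε) ^ 2 := fun b => by
    have := h.d0D hw a b x y
    rw [← sq_abs]; gcongr
  have g0 : dt (W w (u a)) 0 x y ^ 2 ≤ (P.K * ε) ^ 2 := d 0
  have g1 : d1 (W w (u a)) 0 x y ^ 2 ≤ (P.K * ε) ^ 2 := d 1
  have g2 : d2 (W w (u a)) 0 x y ^ 2 ≤ (P.K * ε) ^ 2 := d 2
  rw [e2_ap]; linarith

theorem rpow_two_δ {t : ℝ} (ht : 0 ≤ t) : ((1 + t) ^ P.δ) ^ 2 = (1 + t) ^ (2 * P.δ) := by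
  rw [← Real.rpow_natCast, ← Real.rpow_mul (by linarith), mul_comm]; norm_num

/-- Removing the decaying weights from the energy costs `(1 + t)^(2δ)`. -/
theorem Boot.Ie2 (h : Boot P M ε T u) {t C : ℝ} (ht : 0 ≤ t) (hE : I (Qs P u t) t ≤ C * ε ^ 2)
    {w : List (Fin 7)} (hw : w.length ≤ P.N) (a : Fin 2) :
    I (e2 (W w (u a))) t ≤ C * ε ^ 2 * (1 + t) ^ (2 * P.δ) := by
  have b1 : 1 ≤ (1 + t) ^ P.η := beta_ge ht
  have b2 := beta_le (P := P) ht (j := w.length + 1) (by omega)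
  have e0 : 0 ≤ I (Qs P u t) t := I_nonneg fun x y => Qs_nonneg ht _ _ _
  calc I (e2 (W w (u a))) t
      ≤ I (((((1 + t) ^ P.η) ^ (w.length + 1)) ^ 2) • Qs P u t) t :=
        I_mono ((h.csW _ _).e2 P.hR) ((h.csQ t).smul _) P.R0 ht fun x y => e2_le_Qs ht hw a t x y
    _ = (((1 + t) ^ P.η) ^ (w.length + 1)) ^ 2 * I (Qs P u t) t := I_smul _ _ _
    _ ≤ ((1 + t) ^ P.δ) ^ 2 * I (Qs P u t) t := by gcongr
    _ ≤ ((1 + t) ^ P.δ) ^ 2 * (C * ε ^ 2) := by gcongr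
    _ = _ := by rw [rpow_two_δ ht]; ring

/-- The nonlinearity with the smallness of `M ε` forgotten. -/
theorem Boot.nl2 (h : Boot P M ε T u) {t : ℝ} (ht : 0 ≤ t) (htT : t ≤ T) {w : List (Fin 7)}
    (hw : w.length ≤ P.N) (a : Fin 2) (x y : ℝ) : |box (W w (u a)) t x y| ≤
      72 ^ P.N * (1 + t) ^ (P.δ - 1) * (JI P.R t x y * √(Qs P u t t x y)) := by
  have hε := h.ε0
  have hM := h.M0
  have t1 : (0 : ℝ) < 1 + t := by linarith
  have j0 : 0 ≤ JI P.R t x y := by rw [JI_ap]; have := JS_pos P.R t x y; positivity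
  have b2 := beta_le (P := P) ht (j := w.length + 1) (by omega)
  have m1 : (M * ε) ^ 2 ≤ 1 := pow_le_one₀ (by positivity) h.sm
  refine (h.nlQ ht htT hw a x y).trans ?_
  rw [Real.rpow_sub_one t1.ne', div_eq_mul_inv]
  calc _ ≤ 72 ^ P.N * 1 * (1 + t)⁻¹ * JI P.R t x y * √(Qs P u t t x y) * (1 + t) ^ P.δ := by gcongr
    _ = _ := by ring

end

theorem radial_le (x y a b c : ℝ) :
    |2 * a * (x * b + y * c)| ≤ radius x y * (a ^ 2 + b ^ 2 + c ^ 2) := by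
  have r0 := radius_nonneg x y
  have hr := radius_sq x y
  have h1 : |x * b + y * c| ≤ radius x y * √(b ^ 2 + c ^ 2) := by
    refine abs_le_of_sq_le_sq ?_ (by positivity)
    rw [mul_pow, Real.sq_sqrt (by positivity), hr]
    nlinarith [sq_nonneg (x * c - y * b)]
  have h2 : √(b ^ 2 + c ^ 2) ^ 2 = b ^ 2 + c ^ 2 := Real.sq_sqrt (by positivity)
  rw [abs_mul, abs_mul, abs_two]
  calc 2 * |a| * |x * b + y * c| ≤ 2 * |a| * (radius x y * √(b ^ 2 + c ^ 2)) := by gcongr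
    _ ≤ radius x y * (|a| ^ 2 + √(b ^ 2 + c ^ 2) ^ 2) := by
        nlinarith [mul_nonneg r0 (sq_nonneg (|a| - √(b ^ 2 + c ^ 2)))]
    _ = _ := by rw [sq_abs, h2]; ring

/-- The density of the scaling energy. -/
def FS (φ : Sm) : Sm := cT * e2 φ + 2 * dt φ * (cX * d1 φ + cY * d2 φ) + φ * dt φ

theorem FS_ap (φ : Sm) (t x y : ℝ) : FS φ t x y = t * e2 φ t x y
    + 2 * dt φ t x y * (x * d1 φ t x y + y * d2 φ t x y) + φ t x y * dt φ t x y := rfl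

theorem Cs.FS {R : ℝ} (hR : 1 ≤ R) {φ : Sm} (hφ : Cs R φ) : Cs R (FS φ) :=
  (((hφ.e2 hR).mul_left _).add ((((hφ.d1 hR).mul_left _).add ((hφ.d2 hR).mul_left _)).mul_left _)).add
    (hφ.mul_right _)

/-- The only contribution to the growth of the scaling energy is `□φ · (2S + 1)φ`. -/
theorem I_FS {R : ℝ} (hR : 1 ≤ R) {φ : Sm} (hφ : Cs R φ) {t : ℝ} (ht : 0 ≤ t) :
    I (dt (FS φ)) t = I (box φ * (2 * G 0 φ + φ)) t := by
  have hR0 : 0 ≤ R := by linarith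
  have c1 := hφ.d1 hR
  have c2 := hφ.d2 hR
  have c0 := hφ.dt hR
  have cS := (c1.mul_left cX).add (c2.mul_left cY)
  have ca : Cs R (2 * cT * dt φ * d1 φ + cX * dt φ ^ 2 + 2 * d1 φ * (cX * d1 φ + cY * d2 φ)
      - cX * (d1 φ ^ 2 + d2 φ ^ 2) + φ * d1 φ) :=
    ((((c1.mul_left _).add (c0.sq.mul_left _)).add (cS.mul_left _)).sub
      ((c1.sq.add c2.sq).mul_left _)).add (c1.mul_left _)
  have cb : Cs R (2 * cT * dt φ * d2 φ + cY * dt φ ^ 2 + 2 * d2 φ * (cX * d1 φ + cY * d2 φ)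
      - cY * (d1 φ ^ 2 + d2 φ ^ 2) + φ * d2 φ) :=
    ((((c2.mul_left _).add (c0.sq.mul_left _)).add (cS.mul_left _)).sub
      ((c1.sq.add c2.sq).mul_left _)).add (c2.mul_left _)
  have cc : Cs R (box φ * (2 * G 0 φ + φ)) := (hφ.box hR).mul_right _
  rw [FS, S_ident, I_add ((ca.d1 hR).add (cb.d2 hR)) cc hR0 ht, I_add (ca.d1 hR) (cb.d2 hR) hR0 ht,
    I_d1 ca hR ht, I_d2 cb hR ht, add_zero, zero_add]

/-- Growth of the scaling energy. -/
theorem step2a (P : Par) {C : ℝ} (hC : 0 < C) : ∃ C' : ℝ, 0 < C' ∧ ∀ M ε T u, Boot P M ε T u →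
    (∀ t, 0 ≤ t → t ≤ T → I (Qs P u t) t ≤ C * ε ^ 2) →
    ∀ t, 0 ≤ t → t ≤ T → ∀ w : List (Fin 7), w.length + 1 ≤ P.N → ∀ a,
      I (FS (W w (u a))) t ≤ C' * ε ^ 2 * (1 + t) ^ (2 * P.δ) := by
  have hK := P.hK
  have hR := P.hR
  have hR0 := P.R0
  have hδ := P.δ_pos
  set A0 := 3 * P.K ^ 2 * (4 * P.R ^ 2) with hA0
  set A1 := 72 ^ P.N * 81 * C / (2 * P.δ) with hA1
  have A0p : 0 < A0 := by positivity
  have A1p : 0 < A1 := by positivity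
  refine ⟨A0 + A1, by positivity, fun M ε T u h hE τ hτ hτT w hw a => ?_⟩
  have hε := h.ε0
  set φ := W w (u a) with hφ
  have cφ : Cs P.R φ := h.csW w a
  have hS : G 0 φ = W (w ++ [0]) (u a) := by rw [W_append, W_cons, W_nil]
  have cS : Cs P.R (G 0 φ) := cφ.G hR 0
  have one_le : ∀ τ : ℝ, 0 ≤ τ → 1 ≤ (1 + τ) ^ (2 * P.δ) := fun τ hτ =>
    Real.one_le_rpow (by linarith) (by linarith)
  have step : I (FS φ) τ ≤ A0 * ε ^ 2 + A1 * ε ^ 2 * (1 + τ) ^ (2 * P.δ) := by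
    refine le_of_deriv_le (f := I (FS φ)) (f' := I (dt (FS φ)))
      (B := fun s => A0 * ε ^ 2 + A1 * ε ^ 2 * (1 + s) ^ (2 * P.δ))
      (B' := fun s => A1 * ε ^ 2 * (2 * P.δ * (1 + s) ^ (2 * P.δ - 1))) hτ
      (fun s hs => I_deriv (cφ.FS hR) hR hs.1)
      (fun s hs => (((hasDeriv_pow _ hs.1).const_mul _).const_add _).hasDerivWithinAt) ?_
      fun s hs => ?_
    · have : I (FS φ) 0 ≤ 3 * (P.K * ε) ^ 2 * (4 * P.R ^ 2) := by
        refine I_le_bd hR (cφ.FS hR) (by positivity) fun x y => ?_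
        have e : FS φ 0 x y = dt φ 0 x y * (2 * G 0 φ 0 x y + φ 0 x y) := by
          rw [FS_ap, G0]; simp; ring
        have a1 : |dt φ 0 x y| ≤ P.K * ε := h.d0D (by omega) a 0 x y
        have a2 : |G 0 φ 0 x y| ≤ P.K * ε := by rw [hS]; exact h.d0 (by simp; omega) a x y
        have a3 : |φ 0 x y| ≤ P.K * ε := h.d0 (by omega) a x y
        rw [e]
        refine (le_abs_self _).trans ?_
        rw [abs_mul]
        have a4 : |2 * G 0 φ 0 x y + φ 0 x y| ≤ 3 * (P.K * ε) := by
          refine (abs_add_le _ _).trans ?_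
          rw [abs_mul, abs_two]; linarith
        calc _ ≤ (P.K * ε) * (3 * (P.K * ε)) := by gcongr
          _ = _ := by ring
      have p1 := one_le 0 le_rfl
      have : 0 ≤ A1 * ε ^ 2 * (1 + (0 : ℝ)) ^ (2 * P.δ) := by positivity
      have : 3 * (P.K * ε) ^ 2 * (4 * P.R ^ 2) = A0 * ε ^ 2 := by rw [hA0]; ring
      linarith
    · have hs0 := hs.1
      have hsT := hs.2.trans hτT
      have s1 : (0 : ℝ) < 1 + s := by linarith
      set l := (1 + s) ^ P.δ with hl
      have l0 : 0 < l := by positivity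
      have hQ := hE s hs0 hsT
      have cQ := h.csQ s
      have cJ : ∀ {f : Sm}, Cs P.R f → Cs P.R ((f * JI P.R) ^ 2) := fun hf => (hf.mul_right _).sq
      rw [I_FS hR cφ hs0]
      have m1 : I (box φ * (2 * G 0 φ + φ)) s ≤ I ((72 ^ P.N * (1 + s) ^ (P.δ - 1)) •
          (l • Qs P u s + l⁻¹ • ((4 : ℝ) • (G 0 φ * JI P.R) ^ 2 + (φ * JI P.R) ^ 2))) s := by
        refine I_mono ((cφ.box hR).mul_right _)
          (((cQ.smul _).add (((cJ cS).smul _).add (cJ cφ) |>.smul _)).smul _) hR0 hs0 fun x y => ?_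
        simp only [Sm.smul_ap, Sm.mul_ap, Sm.add_ap, Sm.ofNat_ap, Sm.pow_ap]
        have n1 := h.nl2 hs0 hsT (w := w) (by omega) a x y
        have q2 := Real.sq_sqrt (Qs_nonneg (P := P) (u := u) hs0 s x y)
        set Z := √(Qs P u s s x y)
        have Z0 : 0 ≤ Z := Real.sqrt_nonneg _
        set j := JI P.R s x y
        have j0 : 0 ≤ j := by
          change 0 ≤ JI P.R s x y
          rw [JI_ap]; have := JS_pos P.R s x y; positivity
        set g := G 0 φ s x y
        set f := φ s x y
        calc box φ s x y * (2 * g + f) ≤ |box φ s x y| * |2 * g + f| := by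
              rw [← abs_mul]; exact le_abs_self _
          _ ≤ 72 ^ P.N * (1 + s) ^ (P.δ - 1) * (j * Z) * |2 * g + f| := by gcongr
          _ = 72 ^ P.N * (1 + s) ^ (P.δ - 1) * (Z * (j * |2 * g + f|)) := by ring
          _ ≤ _ := by
            gcongr
            rw [← q2]
            have e1 : Z * (j * |2 * g + f|) ≤ (l * Z ^ 2 + l⁻¹ * (j * |2 * g + f|) ^ 2) / 2 := by
              have := sq_nonneg (l * Z - j * |2 * g + f|)
              have e : l⁻¹ * (l * Z - j * |2 * g + f|) ^ 2 = l * Z ^ 2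
                  - 2 * (Z * (j * |2 * g + f|)) + l⁻¹ * (j * |2 * g + f|) ^ 2 := by
                field_simp; ring
              have : 0 ≤ l⁻¹ * (l * Z - j * |2 * g + f|) ^ 2 := by positivity
              linarith
            have e2 : (j * |2 * g + f|) ^ 2 ≤ 2 * (4 * (g * j) ^ 2 + (f * j) ^ 2) := by
              rw [mul_pow, sq_abs]
              nlinarith [mul_nonneg (sq_nonneg j) (sq_nonneg (2 * g - f))]
            have e3 : l⁻¹ * (j * |2 * g + f|) ^ 2 ≤ l⁻¹ * (2 * (4 * (g * j) ^ 2 + (f * j) ^ 2)) := by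
              gcongr
            have : 0 ≤ l * Z ^ 2 := by positivity
            linarith
      have hard : ∀ v : List (Fin 7), v.length ≤ P.N → I ((W v (u a) * JI P.R) ^ 2) s
          ≤ 16 * (C * ε ^ 2 * l ^ 2) := by
        intro v hv
        refine (hardy hR (h.csW v a) hs0).trans ?_
        have := h.Ie2 hs0 hQ hv a
        rw [← rpow_two_δ hs0] at this
        have m : I (d1 (W v (u a)) ^ 2 + d2 (W v (u a)) ^ 2) s ≤ I (e2 (W v (u a))) s :=
          I_mono (((h.csW v a).d1 hR).sq.add ((h.csW v a).d2 hR).sq) ((h.csW v a).e2 hR) hR0 hs0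
            fun x y => by
              rw [e2_ap]; simp only [Sm.add_ap, Sm.pow_ap]
              nlinarith [sq_nonneg (dt (W v (u a)) s x y)]
        linarith
      have h1 := hard (w ++ [0]) (by simp; omega)
      have h2 := hard w (by omega)
      rw [← hS] at h1
      rw [I_smul, I_add (cQ.smul _) (((cJ cS).smul _).add (cJ cφ) |>.smul _) hR0 hs0, I_smul, I_smul,
        I_add ((cJ cS).smul _) (cJ cφ) hR0 hs0, I_smul] at m1
      refine m1.trans ?_
      have c1 : l * I (Qs P u s) s + l⁻¹ * (4 * I ((G 0 φ * JI P.R) ^ 2) s + I ((φ * JI P.R) ^ 2) s)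
          ≤ 81 * C * ε ^ 2 * l := by
        calc _ ≤ l * (C * ε ^ 2) + l⁻¹ * (4 * (16 * (C * ε ^ 2 * l ^ 2))
              + 16 * (C * ε ^ 2 * l ^ 2)) := by gcongr
          _ = _ := by field_simp; ring
      calc _ ≤ 72 ^ P.N * (1 + s) ^ (P.δ - 1) * (81 * C * ε ^ 2 * l) := by gcongr
        _ = 72 ^ P.N * 81 * C * ε ^ 2 * ((1 + s) ^ (P.δ - 1) * (1 + s) ^ P.δ) := by rw [hl]; ring
        _ = A1 * ε ^ 2 * (2 * P.δ * (1 + s) ^ (2 * P.δ - 1)) := by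
          rw [← Real.rpow_add s1, hA1]
          have : P.δ - 1 + P.δ = 2 * P.δ - 1 := by ring
          rw [this]; field_simp
        _ ≤ _ := le_rfl
  have := one_le τ hτ
  have : 0 < A0 * ε ^ 2 := by positivity
  nlinarith

/-- The scaling energy controls the growth of the `L²` norm. -/
theorem step2 (P : Par) {C : ℝ} (hC : 0 < C) : ∃ C' : ℝ, 0 < C' ∧ ∀ M ε T u, Boot P M ε T u →
    (∀ t, 0 ≤ t → t ≤ T → I (Qs P u t) t ≤ C * ε ^ 2) →
    ∀ t, 0 ≤ t → t ≤ T → ∀ w : List (Fin 7), w.length + 1 ≤ P.N → ∀ a,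
      I (W w (u a) ^ 2) t ≤ C' * ε ^ 2 * (1 + t) ^ (1 + 2 * P.δ) := by
  have hK := P.hK
  have hR := P.hR
  have hR0 := P.R0
  have hδ := P.δ_pos
  obtain ⟨A1, A1p, H⟩ := step2a P hC
  set A0 := 3 * P.K ^ 2 * (4 * P.R ^ 2) with hA0
  set A2 := 2 * (A1 + P.R * C) + A0 with hA2
  have A0p : 0 < A0 := by positivity
  refine ⟨A2, by positivity, fun M ε T u h hE t ht htT w hw a => ?_⟩
  have hε := h.ε0
  set φ := W w (u a) with hφ
  have cφ : Cs P.R φ := h.csW w a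
  refine le_of_deriv_le (f := I (φ ^ 2)) (f' := I (dt (φ ^ 2)))
    (B := fun s => A2 * ε ^ 2 * (1 + s) ^ (1 + 2 * P.δ))
    (B' := fun s => A2 * ε ^ 2 * ((1 + 2 * P.δ) * (1 + s) ^ (1 + 2 * P.δ - 1))) ht
    (fun s hs => I_deriv cφ.sq hR hs.1)
    (fun s hs => ((hasDeriv_pow _ hs.1).const_mul _).hasDerivWithinAt) ?_ fun s hs => ?_
  · have : I (φ ^ 2) 0 ≤ 3 * (P.K * ε) ^ 2 * (4 * P.R ^ 2) := by
      refine I_le_bd hR cφ.sq (by positivity) fun x y => ?_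
      have a3 : |φ 0 x y| ≤ P.K * ε := h.d0 (by omega) a x y
      have : φ 0 x y ^ 2 ≤ (P.K * ε) ^ 2 := by rw [← sq_abs]; gcongr
      rw [Sm.pow_ap]; nlinarith
    have e : 3 * (P.K * ε) ^ 2 * (4 * P.R ^ 2) = A0 * ε ^ 2 := by rw [hA0]; ring
    rw [add_zero, Real.one_rpow, mul_one]
    have : A0 * ε ^ 2 ≤ A2 * ε ^ 2 := by
      gcongr; rw [hA2]; nlinarith [mul_pos (by linarith : 0 < P.R) hC]
    linarith
  · have hs0 := hs.1
    have hsT := hs.2.trans htT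
    have s1 : (0 : ℝ) < 1 + s := by linarith
    have m1 : I (dt (φ ^ 2)) s ≤ I ((2 : ℝ) • FS φ + (2 * P.R) • e2 φ) s := by
      refine I_mono_on (cφ.sq.dt hR) (((cφ.FS hR).smul _).add ((cφ.e2 hR).smul _)) hR0 hs0
        fun x y hr => ?_
      have hr' := (q_facts hR hs0 hr).2.1
      have rl := (abs_le.1 (radial_le x y (dt φ s x y) (d1 φ s x y) (d2 φ s x y))).1
      have en := e2_nonneg φ s x y
      have e : dt (φ ^ 2) s x y = 2 * φ s x y * dt φ s x y := by
        rw [pow_two, Derivation.leibniz]; simp; ring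
      rw [e]
      rw [Sm.add_ap, Sm.smul_ap, Sm.smul_ap, FS_ap]
      rw [← e2_ap] at rl
      nlinarith [mul_le_mul_of_nonneg_right hr'.le en]
    rw [I_add ((cφ.FS hR).smul _) ((cφ.e2 hR).smul _) hR0 hs0, I_smul, I_smul] at m1
    have b1 := H M ε T u h hE s hs0 hsT w hw a
    have b2 := h.Ie2 hs0 (hE s hs0 hsT) (w := w) (by omega) a
    rw [add_sub_cancel_left]
    set X := (1 + s) ^ (2 * P.δ)
    have X0 : 0 < X := by positivity
    calc I (dt (φ ^ 2)) s ≤ 2 * (A1 * ε ^ 2 * X) + 2 * P.R * (C * ε ^ 2 * X) := by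
          refine m1.trans ?_
          gcongr
      _ = (2 * (A1 + P.R * C)) * ε ^ 2 * (1 * X) := by ring
      _ ≤ A2 * ε ^ 2 * ((1 + 2 * P.δ) * X) := by
          gcongr
          · rw [hA2]; linarith
          · linarith

/-! ### The weighted energy -/

/-- The weight `q` turns the growth of the `L²` norm into decay away from the light cone. -/
theorem step3 (P : Par) {C C2 : ℝ} (hC : 0 < C) (hC2 : 0 < C2) : ∃ C' : ℝ, 0 < C' ∧ ∀ M ε T u, Boot P M ε T u →
    (∀ t, 0 ≤ t → t ≤ T → I (Qs P u t) t ≤ C * ε ^ 2) →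
    (∀ t, 0 ≤ t → t ≤ T → ∀ w : List (Fin 7), w.length + 1 ≤ P.N → ∀ a,
      I (W w (u a) ^ 2) t ≤ C2 * ε ^ 2 * (1 + t) ^ (1 + 2 * P.δ)) →
    ∀ t, 0 ≤ t → t ≤ T → ∀ w : List (Fin 7), w.length + 2 ≤ P.N → ∀ a,
      I (qS P.R * e2 (W w (u a))) t ≤ C' * ε ^ 2 * (1 + t) ^ (2 * P.δ) := by
  have hK := P.hK
  have hR := P.hR
  have hR0 := P.R0
  have hδ := P.δ_pos
  set A0 := 3 * P.K ^ 2 * (P.R + 2) * (4 * P.R ^ 2) with hA0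
  set A1 := (756 * C2 + 72 ^ P.N * 2 * C) / (2 * P.δ) with hA1
  have A0p : 0 < A0 := by positivity
  have A1p : 0 < A1 := by positivity
  refine ⟨A0 + A1, by positivity, fun M ε T u h hE h2 t ht htT w hw a => ?_⟩
  have hε := h.ε0
  set φ := W w (u a) with hφ
  have cφ : Cs P.R φ := h.csW w a
  have step : I (qS P.R * e2 φ) t ≤ A0 * ε ^ 2 + A1 * ε ^ 2 * (1 + t) ^ (2 * P.δ) := by
    refine le_of_deriv_le (f := I (qS P.R * e2 φ)) (f' := I (dt (qS P.R * e2 φ)))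
      (B := fun s => A0 * ε ^ 2 + A1 * ε ^ 2 * (1 + s) ^ (2 * P.δ))
      (B' := fun s => A1 * ε ^ 2 * (2 * P.δ * (1 + s) ^ (2 * P.δ - 1))) ht
      (fun s hs => I_deriv ((cφ.e2 hR).mul_left _) hR hs.1)
      (fun s hs => (((hasDeriv_pow _ hs.1).const_mul _).const_add _).hasDerivWithinAt) ?_
      fun s hs => ?_
    · have i0 : I (qS P.R * e2 φ) 0 ≤ (P.R + 2) * (3 * (P.K * ε) ^ 2) * (4 * P.R ^ 2) := by
        refine I_le_bd hR ((cφ.e2 hR).mul_left _) (by positivity) fun x y => ?_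
        have q1 : qS P.R 0 x y ≤ P.R + 2 := by
          rw [qS_ap]; have := Real.sqrt_nonneg (1 + x ^ 2 + y ^ 2); linarith
        have := h.e20 (w := w) (by omega) a x y
        rw [Sm.mul_ap]
        have e0 := e2_nonneg φ 0 x y
        calc _ ≤ (P.R + 2) * e2 φ 0 x y := by gcongr
          _ ≤ _ := by gcongr
      have e : (P.R + 2) * (3 * (P.K * ε) ^ 2) * (4 * P.R ^ 2) = A0 * ε ^ 2 := by rw [hA0]; ring
      have : 0 ≤ A1 * ε ^ 2 * (1 + (0 : ℝ)) ^ (2 * P.δ) := by positivity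
      linarith
    · have hs0 := hs.1
      have hsT := hs.2.trans htT
      have s1 : (0 : ℝ) < 1 + s := by linarith
      set l := (1 + s) ^ P.δ with hl
      have l0 : 0 < l := by positivity
      have hQ := hE s hs0 hsT
      have cQ := h.csQ s
      set L := (1 + s) ^ (2 * P.δ) with hL
      have l2 : l ^ 2 = L := rpow_two_δ hs0
      have hGS : I (GS φ) s ≤ 7 * (C2 * ε ^ 2 * ((1 + s) * L)) := by
        rw [GS, I_sum (fun v _ => (cφ.G hR v).sq) hR0 hs0]
        refine (Finset.sum_le_card_nsmul _ _ (C2 * ε ^ 2 * ((1 + s) * L)) fun i _ => ?_).trans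
          (by simp)
        have := h2 s hs0 hsT (w ++ [i]) (by simp; omega) a
        rw [W_append, W_cons, W_nil, Real.rpow_add s1, Real.rpow_one] at this
        exact this
      have m1 : I (dt (qS P.R * e2 φ)) s ≤ I (((108 * (1 + s) ^ (-2 : ℝ)) • GS φ) +
          (72 ^ P.N * 2 * (1 + s) ^ (P.δ - 1) * l) • Qs P u s) s := by
        rw [energy_deriv hR (qS P.R) cφ hs0]
        refine I_mono_on ((((cφ.e2 hR).mul_left _).sub ((((cφ.d1 hR).mul_left _).add
          ((cφ.d2 hR).mul_left _)).mul_left _)).add ((cφ.box hR).mul_left _))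
          (((cφ.GS hR).smul _).add (cQ.smul _)) hR0 hs0 fun x y hr => ?_
        have e : (dt (qS P.R) * e2 φ - 2 * dt φ * (d1 (qS P.R) * d1 φ + d2 (qS P.R) * d2 φ)
            + 2 * qS P.R * dt φ * box φ) s x y = (e2 φ s x y + 2 * dt φ s x y *
            (x * d1 φ s x y + y * d2 φ s x y) * csI s x y)
            + 2 * (qS P.R s x y * dt φ s x y * box φ s x y) := by
          rw [dt_qS, d1_qS, d2_qS]
          have t2 : (2 : Sm) s x y = 2 := rfl
          simp only [Sm.add_ap, Sm.sub_ap, Sm.mul_ap, Sm.neg_ap, Sm.one_ap, t2, cX_ap, cY_ap]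
          ring
        rw [e, Sm.add_ap, Sm.smul_ap, Sm.smul_ap]
        have g1 := good_e2 φ hs0 x y
        have g2 : e2 φ s x y + 2 * dt φ s x y * (x * d1 φ s x y + y * d2 φ s x y) * csI s x y
            ≤ 108 * (1 + s) ^ (-2 : ℝ) * GS φ s x y := by
          rw [Real.rpow_neg s1.le, Real.rpow_two, mul_comm (108 : ℝ),
            mul_assoc (((1 + s) ^ 2)⁻¹), le_inv_mul_iff₀ (by positivity)]
          exact g1
        have n1 := h.nl2 hs0 hsT (w := w) (by omega) a x y
        have n2 := D_le_Qs (P := P) (u := u) hs0 (w := w) (by omega) a 0 s x y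
        change |dt φ s x y| ≤ _ at n2
        have n3 := beta_le (P := P) hs0 (j := w.length + 1) (by omega)
        have q2 := Real.sq_sqrt (Qs_nonneg (P := P) (u := u) hs0 s x y)
        obtain ⟨q1, -, -, -, qJ, -⟩ := q_facts hR hs0 hr
        have qj : qS P.R s x y * JI P.R s x y ≤ 1 := by
          rw [JI_ap, ← div_eq_mul_inv, div_le_one (JS_pos _ _ _ _)]; exact qJ
        have j0 : 0 ≤ JI P.R s x y := by rw [JI_ap]; have := JS_pos P.R s x y; positivity
        set Z := √(Qs P u s s x y)
        have Z0 : 0 ≤ Z := Real.sqrt_nonneg _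
        have g3 : qS P.R s x y * dt φ s x y * box φ s x y
            ≤ 72 ^ P.N * (1 + s) ^ (P.δ - 1) * l * Qs P u s s x y := by
          refine (le_abs_self _).trans ?_
          rw [abs_mul, abs_mul, abs_of_pos (by linarith)]
          calc _ ≤ qS P.R s x y * (Z * l) *
                (72 ^ P.N * (1 + s) ^ (P.δ - 1) * (JI P.R s x y * Z)) := by gcongr; exact n2.trans (by gcongr)
            _ = 72 ^ P.N * (1 + s) ^ (P.δ - 1) * l * Z ^ 2 * (qS P.R s x y * JI P.R s x y) := by ring
            _ ≤ 72 ^ P.N * (1 + s) ^ (P.δ - 1) * l * Z ^ 2 * 1 := by gcongr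
            _ = _ := by rw [q2, mul_one]
        linarith
      rw [I_add ((cφ.GS hR).smul _) (cQ.smul _) hR0 hs0, I_smul, I_smul] at m1
      refine m1.trans ?_
      have x1 : (1 + s) ^ (2 * P.δ - 1) = (1 + s) ^ (P.δ - 1) * l := by
        rw [hl, ← Real.rpow_add s1]; congr 1; ring
      have x2 : (1 + s) ^ (2 * P.δ - 1) = (1 + s) ^ (-2 : ℝ) * ((1 + s) * L) := by
        rw [hL, ← Real.rpow_one_add' s1.le (by linarith), ← Real.rpow_add s1]; congr 1; ring
      calc _ ≤ 108 * (1 + s) ^ (-2 : ℝ) * (7 * (C2 * ε ^ 2 * ((1 + s) * L)))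
            + 72 ^ P.N * 2 * (1 + s) ^ (P.δ - 1) * l * (C * ε ^ 2) := by gcongr
        _ = 756 * C2 * ε ^ 2 * ((1 + s) ^ (-2 : ℝ) * ((1 + s) * L))
            + 72 ^ P.N * 2 * C * ε ^ 2 * ((1 + s) ^ (P.δ - 1) * l) := by ring
        _ = A1 * ε ^ 2 * (2 * P.δ * (1 + s) ^ (2 * P.δ - 1)) := by
          rw [← x1, ← x2, hA1]; field_simp
        _ ≤ _ := le_rfl
  have : 1 ≤ (1 + t) ^ (2 * P.δ) := Real.one_le_rpow (by linarith) (by linarith)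
  have : 0 < A0 * ε ^ 2 := by positivity
  nlinarith

end Ap

namespace Ap
set_option linter.unusedVariables false

/-! ### Pointwise decay with a loss -/

theorem abs_le_of_deriv_le {f f' B B' : ℝ → ℝ} {a b : ℝ} (hab : a ≤ b)
    (hf : ∀ t ∈ Set.Icc a b, HasDerivWithinAt f (f' t) (Set.Ici a) t)
    (hB : ∀ t ∈ Set.Icc a b, HasDerivWithinAt B (B' t) (Set.Ici a) t)
    (h0 : |f a| ≤ B a) (h : ∀ t ∈ Set.Icc a b, |f' t| ≤ B' t) : |f b| ≤ B b := by
  refine abs_le.2 ⟨?_, le_of_deriv_le hab hf hB ((le_abs_self _).trans h0)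
    fun t ht => (le_abs_self _).trans (h t ht)⟩
  have := le_of_deriv_le hab (f := fun s => -f s) (f' := fun s => -f' s) (fun t ht => (hf t ht).neg) hB
    ((neg_le_abs _).trans h0) fun t ht => (neg_le_abs _).trans (h t ht)
  linarith

theorem exists_dir (x y : ℝ) : ∃ c s : ℝ, c ^ 2 + s ^ 2 = 1 ∧ x = radius x y * c ∧
    y = radius x y * s := by
  rcases eq_or_ne (radius x y) 0 with h | h
  · have := radius_sq x y
    rw [h] at this
    have hx : x = 0 := by nlinarith [sq_nonneg x, sq_nonneg y]
    have hy : y = 0 := by nlinarith [sq_nonneg x, sq_nonneg y]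
    exact ⟨1, 0, by norm_num, by rw [h, hx]; ring, by rw [hy]; ring⟩
  · refine ⟨x / radius x y, y / radius x y, ?_, by field_simp, by field_simp⟩
    rw [div_pow, div_pow, ← add_div, ← radius_sq]
    exact div_self (by positivity)

theorem radius_dir {c s r : ℝ} (h : c ^ 2 + s ^ 2 = 1) (hr : 0 ≤ r) : radius (r * c) (r * s) = r := by
  rw [radius, mul_pow, mul_pow, ← mul_add, h, mul_one, Real.sqrt_sq hr]

theorem dir_le {c s : ℝ} (h : c ^ 2 + s ^ 2 = 1) : |c| ≤ 1 ∧ |s| ≤ 1 :=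
  ⟨abs_le_one_iff_mul_self_le_one.2 (by nlinarith [sq_nonneg s]),
    abs_le_one_iff_mul_self_le_one.2 (by nlinarith [sq_nonneg c])⟩

/-- The Klainerman–Sobolev inequality applied to `∂Γ^w u`. -/
theorem step4a (P : Par) {C : ℝ} (hC : 0 < C) : ∃ C' : ℝ, 0 < C' ∧ ∀ M ε T u, Boot P M ε T u →
    (∀ t, 0 ≤ t → t ≤ T → ∀ w : List (Fin 7), w.length + 2 ≤ P.N → ∀ a,
      I (qS P.R * e2 (W w (u a))) t ≤ C * ε ^ 2 * (1 + t) ^ (2 * P.δ)) →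
    ∀ t, 0 ≤ t → t ≤ T → ∀ w : List (Fin 7), w.length + 4 ≤ P.N → ∀ a b x y,
      x ^ 2 + y ^ 2 < (t + P.R) ^ 2 →
      qS P.R t x y * |D b (W w (u a)) t x y| ≤ C' * ε * (1 + t) ^ (P.δ - 1 / 2) := by
  have hR := P.hR
  have hR0 := P.R0
  set n : ℝ := ((words 2).card : ℝ) with hn
  have n0 : 0 < n := by
    have : (words 2).Nonempty := ⟨[], mem_words.2 (by simp)⟩
    rw [hn]; exact_mod_cast this.card_pos
  set A := 1000 * (P.R + 4) ^ 2 * (n * (16 * (n * C))) with hA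
  have A0 : 0 < A := by positivity
  refine ⟨√A, by positivity, fun M ε T u h h3 t ht htT w hw a b x y hr => ?_⟩
  have hε := h.ε0
  have t1 : (0 : ℝ) < 1 + t := by linarith
  set φ := W w (u a) with hφ
  have cφ : Cs P.R φ := h.csW w a
  have cE : Cs P.R (∑ c ∈ words 2, qS P.R * e2 (W c φ)) :=
    Cs.sum fun c _ => ((cφ.W hR c).e2 hR).mul_left _
  have hI : I (KS P.R (D b φ)) t ≤ n * (16 * (n * (C * ε ^ 2 * (1 + t) ^ (2 * P.δ)))) := by
    have e1 : I (∑ c ∈ words 2, qS P.R * e2 (W c φ)) t ≤ n * (C * ε ^ 2 * (1 + t) ^ (2 * P.δ)) := by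
      rw [I_sum (fun c _ => ((cφ.W hR c).e2 hR).mul_left _) hR0 ht]
      refine (Finset.sum_le_card_nsmul _ _ (C * ε ^ 2 * (1 + t) ^ (2 * P.δ)) fun c hc => ?_).trans
        (by rw [nsmul_eq_mul])
      have := h3 t ht htT (w ++ c) (by have := mem_words.1 hc; simp; omega) a
      rwa [W_append] at this
    have e2' : I (KS P.R (D b φ)) t ≤ I ((n * 16) • ∑ c ∈ words 2, qS P.R * e2 (W c φ)) t := by
      refine I_mono_on ((cφ.D hR b).KS hR) (cE.smul _) hR0 ht fun x y hr => ?_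
      have q1 := (q_facts hR ht hr).1
      rw [KS, Sm.mul_ap, Sm.smul_ap, Sm.sum_ap]
      simp only [Sm.mul_ap]
      rw [← Finset.mul_sum, WS, Sm.sum_ap]
      simp only [Sm.pow_ap]
      set B := ∑ c ∈ words 2, e2 (W c φ) t x y with hB
      have B0 : 0 ≤ B := Finset.sum_nonneg fun c _ => e2_nonneg _ _ _ _
      have key : ∀ v ∈ words 2, W v (D b φ) t x y ^ 2 ≤ 16 * B := by
        intro v hv
        have := W_D 2 v (mem_words.1 hv) b φ t x y (√B) fun c a' hc => by
          refine Real.abs_le_sqrt ((D_sq_le_e2 _ _ _ _ _).trans ?_)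
          exact Finset.single_le_sum (f := fun c => e2 (W c φ) t x y)
            (fun c _ => e2_nonneg _ _ _ _) (mem_words.2 hc)
        rw [← sq_abs]
        calc _ ≤ (2 ^ 2 * √B) ^ 2 := by gcongr
          _ = _ := by rw [mul_pow, Real.sq_sqrt B0]; norm_num
      have := Finset.sum_le_card_nsmul _ _ _ key
      rw [nsmul_eq_mul, ← hn] at this
      calc _ ≤ qS P.R t x y * (n * (16 * B)) := by gcongr
        _ = _ := by ring
    rw [I_smul] at e2'
    refine e2'.trans ?_
    calc _ ≤ n * 16 * (n * (C * ε ^ 2 * (1 + t) ^ (2 * P.δ))) := by gcongr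
      _ = _ := by ring
  have ks := KS_ineq hR (cφ.D hR b) ht hr
  have q1 := (q_facts hR ht hr).1
  have e : ((1 + t) ^ (P.δ - 1 / 2)) ^ 2 = (1 + t)⁻¹ * (1 + t) ^ (2 * P.δ) := by
    rw [← Real.rpow_natCast, ← Real.rpow_mul t1.le, ← Real.rpow_neg_one, ← Real.rpow_add t1]
    congr 1; push_cast; ring
  have fin : (qS P.R t x y * |D b φ t x y|) ^ 2 ≤ (√A * ε * (1 + t) ^ (P.δ - 1 / 2)) ^ 2 := by
    rw [mul_pow, mul_pow, mul_pow, e, Real.sq_sqrt A0.le, sq_abs]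
    have : (1 + t) * (qS P.R t x y ^ 2 * D b φ t x y ^ 2)
        ≤ A * ε ^ 2 * (1 + t) ^ (2 * P.δ) := by
      calc _ ≤ 1000 * (P.R + 4) ^ 2 * (n * (16 * (n * (C * ε ^ 2 * (1 + t) ^ (2 * P.δ))))) :=
            ks.trans (by gcongr)
        _ = _ := by rw [hA]; ring
    rw [← le_inv_mul_iff₀ t1] at this
    exact this.trans (le_of_eq (by ring))
  exact (le_abs_self _).trans (abs_le_of_sq_le_sq fin (by positivity))

/-- `Γ^w u` is obtained from `step4a` by integrating inwards from the boundary of the light cone, where it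
vanishes. The logarithm produced by `1 / q` is absorbed in a further factor `(1 + t)^δ`. -/
theorem step4b (P : Par) {C : ℝ} (hC : 0 < C) : ∃ C' : ℝ, 0 < C' ∧ ∀ M ε T u, Boot P M ε T u →
    (∀ t, 0 ≤ t → t ≤ T → ∀ w : List (Fin 7), w.length + 4 ≤ P.N → ∀ a b x y,
      x ^ 2 + y ^ 2 < (t + P.R) ^ 2 →
      qS P.R t x y * |D b (W w (u a)) t x y| ≤ C * ε * (1 + t) ^ (P.δ - 1 / 2)) →
    ∀ t, 0 ≤ t → t ≤ T → ∀ w : List (Fin 7), w.length + 4 ≤ P.N → ∀ a x y,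
      |W w (u a) t x y| ≤ C' * ε * (1 + t) ^ (2 * P.δ - 1 / 2) := by
  have hR := P.hR
  have hR0 := P.R0
  have hδ := P.δ_pos
  refine ⟨2 * C / P.δ * (P.R + 1) ^ P.δ, by positivity, fun M ε T u h h4 t ht htT w hw a x y => ?_⟩
  have hε := h.ε0
  have t1 : (0 : ℝ) < 1 + t := by linarith
  set φ := W w (u a) with hφ
  have cφ : Cs P.R φ := h.csW w a
  rcases le_or_gt ((t + P.R) ^ 2) (x ^ 2 + y ^ 2) with hr | hr
  · rw [cφ t x y ht hr, abs_zero]; positivity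
  have r0 := radius_nonneg x y
  have rR := (q_facts hR ht hr).2.1
  obtain ⟨c, s, hcs, hx, hy⟩ := exists_dir x y
  obtain ⟨hc, hs⟩ := dir_le hcs
  set r := radius x y with hrad
  set A := C * ε * (1 + t) ^ (P.δ - 1 / 2) with hA
  have A0 : 0 ≤ A := by positivity
  have key : |φ t ((t + P.R - (t + P.R - r)) * c) ((t + P.R - (t + P.R - r)) * s)|
      ≤ 2 * A / P.δ * (1 + (t + P.R - r)) ^ P.δ := by
    refine abs_le_of_deriv_le (a := 0) (b := t + P.R - r)
      (f := fun z => φ t ((t + P.R - z) * c) ((t + P.R - z) * s))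
      (f' := fun z => 0 * dt φ t ((t + P.R - z) * c) ((t + P.R - z) * s)
        + (-c) * d1 φ t ((t + P.R - z) * c) ((t + P.R - z) * s)
        + (-s) * d2 φ t ((t + P.R - z) * c) ((t + P.R - z) * s))
      (B := fun z => 2 * A / P.δ * (1 + z) ^ P.δ)
      (B' := fun z => 2 * A / P.δ * (P.δ * (1 + z) ^ (P.δ - 1))) (by linarith) (fun z hz => ?_)
      (fun z hz => ((hasDeriv_pow _ hz.1).const_mul _).hasDerivWithinAt) ?_ fun z hz => ?_
    · refine (Sm.hasDerivAt_curve φ (hasDerivAt_const z t) ?_ ?_).hasDerivWithinAt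
      · simpa using ((hasDerivAt_id z).const_sub (t + P.R)).mul_const c
      · simpa using ((hasDerivAt_id z).const_sub (t + P.R)).mul_const s
    · rw [cφ t _ _ ht (by rw [mul_pow, mul_pow, ← mul_add, hcs]; simp), abs_zero]; positivity
    · have z0 := hz.1
      have z1 : (0 : ℝ) < 1 + z := by linarith
      have zr : 0 ≤ t + P.R - z := by linarith [hz.2]
      have bd : ∀ b, |D b φ t ((t + P.R - z) * c) ((t + P.R - z) * s)| ≤ A / (1 + z) := by
        intro b
        have hsq : ((t + P.R - z) * c) ^ 2 + ((t + P.R - z) * s) ^ 2 = (t + P.R - z) ^ 2 := by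
          rw [mul_pow, mul_pow, ← mul_add, hcs, mul_one]
        rcases eq_or_lt_of_le z0 with hz0 | hz0
        · rw [(cφ.D hR b) t _ _ ht (by rw [hsq, ← hz0, sub_zero]), abs_zero]; positivity
        · have hin : ((t + P.R - z) * c) ^ 2 + ((t + P.R - z) * s) ^ 2 < (t + P.R) ^ 2 := by
            rw [hsq]; exact pow_lt_pow_left₀ (by linarith) zr (by norm_num)
          have := h4 t ht htT w hw a b _ _ hin
          have qq := (q_facts hR ht hin).2.2.2.1
          rw [radius_dir hcs zr] at qq
          rw [le_div_iff₀ z1, mul_comm]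
          refine le_trans ?_ this
          gcongr; linarith
      have b1 : |d1 φ t ((t + P.R - z) * c) ((t + P.R - z) * s)| ≤ A / (1 + z) := bd 1
      have b2 : |d2 φ t ((t + P.R - z) * c) ((t + P.R - z) * s)| ≤ A / (1 + z) := bd 2
      rw [zero_mul, zero_add]
      refine (abs_add_le _ _).trans ?_
      rw [abs_mul, abs_mul, abs_neg, abs_neg]
      have e : 2 * A / P.δ * (P.δ * (1 + z) ^ (P.δ - 1)) = 2 * A * (1 + z) ^ (P.δ - 1) := by
        field_simp
      rw [e]
      have le1 : (1 + z)⁻¹ ≤ (1 + z) ^ (P.δ - 1) := by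
        rw [← Real.rpow_neg_one]
        exact Real.rpow_le_rpow_of_exponent_le (by linarith) (by linarith)
      calc _ ≤ 1 * (A / (1 + z)) + 1 * (A / (1 + z)) := by gcongr
        _ = 2 * A * (1 + z)⁻¹ := by ring
        _ ≤ _ := by gcongr
  rw [sub_sub_cancel, ← hx, ← hy] at key
  refine key.trans ?_
  have l1 : (1 + (t + P.R - r)) ^ P.δ ≤ (P.R + 1) ^ P.δ * (1 + t) ^ P.δ := by
    rw [← Real.mul_rpow (by linarith) t1.le]
    exact Real.rpow_le_rpow (by linarith) (by nlinarith) hδ.le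
  calc _ ≤ 2 * A / P.δ * ((P.R + 1) ^ P.δ * (1 + t) ^ P.δ) := by gcongr
    _ = 2 * C / P.δ * (P.R + 1) ^ P.δ * ε * ((1 + t) ^ (P.δ - 1 / 2) * (1 + t) ^ P.δ) := by
        rw [hA]; ring
    _ = _ := by rw [← Real.rpow_add t1]; congr 2; ring

end Ap

namespace Ap
set_option linter.unusedVariables false

/-! ### Transport along outgoing rays -/

/-- The incoming null derivative of `v` along the ray `τ ↦ (τ, (τ + ρ)(c, s))`, normalised so that
the wave equation becomes an ordinary differential equation for it. -/
def Ph (v : Sm) (c s ρ τ : ℝ) : ℝ :=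
  √(τ + ρ) * (dt v τ ((τ + ρ) * c) ((τ + ρ) * s) - c * d1 v τ ((τ + ρ) * c) ((τ + ρ) * s)
    - s * d2 v τ ((τ + ρ) * c) ((τ + ρ) * s)) - v τ ((τ + ρ) * c) ((τ + ρ) * s) / (2 * √(τ + ρ))

/-- The algebraic identity behind `ray_deriv`, with `R = √r`. -/
theorem ph_alg {R c s tt v11 v22 v12 vt v1 v2 v t1 t2 : ℝ} (hR : 0 < R) (h : c ^ 2 + s ^ 2 = 1) :
    1 / (2 * R) * (vt - c * v1 - s * v2)
      + R * (1 * (tt - c * t1 - s * t2) + c * (t1 - c * v11 - s * v12) + s * (t2 - c * v12 - s * v22))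
      - ((1 * vt + c * v1 + s * v2) * (2 * R) - v * (2 * (1 / (2 * R)))) / (2 * R) ^ 2
    = R * (tt - v11 - v22) + ((R ^ 2 * c) * ((R ^ 2 * c) * v22 - v1 - (R ^ 2 * s) * v12)
      - (R ^ 2 * s) * (v2 + (R ^ 2 * c) * v12 - (R ^ 2 * s) * v11) + v / 4) / (R ^ 2 * R) := by
  rw [← sub_eq_zero]
  have e : R * (v11 + v22) * (1 - (c ^ 2 + s ^ 2)) = 0 := by rw [h]; ring
  rw [← e]
  field_simp
  ring

/-- The transport equation: the outgoing derivative of `Ph` is `√r □v + (Ω²v + v / 4) / r^(3/2)`. -/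
theorem ray_deriv (v : Sm) {c s ρ τ : ℝ} (hcs : c ^ 2 + s ^ 2 = 1) (hr : 0 < τ + ρ) :
    HasDerivAt (Ph v c s ρ) (√(τ + ρ) * box v τ ((τ + ρ) * c) ((τ + ρ) * s)
      + (G 3 (G 3 v) τ ((τ + ρ) * c) ((τ + ρ) * s) + v τ ((τ + ρ) * c) ((τ + ρ) * s) / 4)
        / ((τ + ρ) * √(τ + ρ))) τ := by
  have hb : HasDerivAt (fun z : ℝ => (z + ρ) * c) c τ := by
    simpa using ((hasDerivAt_id τ).add_const ρ).mul_const c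
  have hc : HasDerivAt (fun z : ℝ => (z + ρ) * s) s τ := by
    simpa using ((hasDerivAt_id τ).add_const ρ).mul_const s
  have hsq : HasDerivAt (fun z : ℝ => √(z + ρ)) (1 / (2 * √(τ + ρ))) τ :=
    ((hasDerivAt_id τ).add_const ρ).sqrt hr.ne'
  have h1 := Sm.hasDerivAt_curve (dt v - c • d1 v - s • d2 v) (hasDerivAt_id τ) hb hc
  have h2 := Sm.hasDerivAt_curve v (hasDerivAt_id τ) hb hc
  have sp : 0 < √(τ + ρ) := Real.sqrt_pos.2 hr
  have hs2 : √(τ + ρ) ^ 2 = τ + ρ := Real.sq_sqrt hr.le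
  refine ((hsq.mul h1).sub (h2.div (hsq.const_mul 2) (by positivity))).congr_deriv ?_
  simp only [map_sub, map_smul, Derivation.map_smul, Sm.sub_ap, Sm.smul_ap, d1_dt, d2_dt, d2_d1, id]
  have g3 : G 3 (G 3 v) τ ((τ + ρ) * c) ((τ + ρ) * s) =
      ((τ + ρ) * c) * (((τ + ρ) * c) * d2 (d2 v) τ ((τ + ρ) * c) ((τ + ρ) * s)
        - d1 v τ ((τ + ρ) * c) ((τ + ρ) * s)
        - ((τ + ρ) * s) * d1 (d2 v) τ ((τ + ρ) * c) ((τ + ρ) * s))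
      - ((τ + ρ) * s) * (d2 v τ ((τ + ρ) * c) ((τ + ρ) * s)
        + ((τ + ρ) * c) * d1 (d2 v) τ ((τ + ρ) * c) ((τ + ρ) * s)
        - ((τ + ρ) * s) * d1 (d1 v) τ ((τ + ρ) * c) ((τ + ρ) * s)) := by
    simp only [G3, map_sub, Derivation.leibniz, smul_eq_mul, d1_cX, d1_cY, d2_cX, d2_cY, d2_d1,
      Sm.sub_ap, Sm.mul_ap, Sm.add_ap, cX_ap, cY_ap, Sm.one_ap, Sm.zero_ap]
    ring
  rw [g3, box]
  simp only [Sm.sub_ap, Sm.add_ap]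
  have := ph_alg (c := c) (s := s) (tt := dt (dt v) τ ((τ + ρ) * c) ((τ + ρ) * s))
    (v11 := d1 (d1 v) τ ((τ + ρ) * c) ((τ + ρ) * s)) (v22 := d2 (d2 v) τ ((τ + ρ) * c) ((τ + ρ) * s))
    (v12 := d1 (d2 v) τ ((τ + ρ) * c) ((τ + ρ) * s)) (vt := dt v τ ((τ + ρ) * c) ((τ + ρ) * s))
    (v1 := d1 v τ ((τ + ρ) * c) ((τ + ρ) * s)) (v2 := d2 v τ ((τ + ρ) * c) ((τ + ρ) * s))
    (v := v τ ((τ + ρ) * c) ((τ + ρ) * s)) (t1 := dt (d1 v) τ ((τ + ρ) * c) ((τ + ρ) * s))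
    (t2 := dt (d2 v) τ ((τ + ρ) * c) ((τ + ρ) * s)) sp hcs
  rw [hs2] at this
  refine Eq.trans ?_ this
  ring

/-- Comparison for a scalar equation with a damping coefficient `g ≥ 0`. -/
theorem transport {f g h B B' : ℝ → ℝ} {a b : ℝ} (hab : a ≤ b)
    (hf : ∀ τ ∈ Set.Icc a b, HasDerivAt f (-g τ * f τ + h τ) τ)
    (hB : ∀ τ ∈ Set.Icc a b, HasDerivAt B (B' τ) τ)
    (h0 : |f a| ≤ B a) (hB0 : ∀ τ ∈ Set.Icc a b, 0 ≤ B τ) (hg : ∀ τ ∈ Set.Icc a b, 0 ≤ g τ)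
    (hh : ∀ τ ∈ Set.Icc a b, |h τ| < B' τ) : |f b| ≤ B b := by
  have key : ∀ f h : ℝ → ℝ, (∀ τ ∈ Set.Icc a b, HasDerivAt f (-g τ * f τ + h τ) τ) → f a ≤ B a →
      (∀ τ ∈ Set.Icc a b, |h τ| < B' τ) → f b ≤ B b := by
    intro f h hf h0 hh
    refine image_le_of_deriv_right_lt_deriv_boundary' (f := f) (f' := fun τ => -g τ * f τ + h τ)
      (B := B) (B' := B') (a := a) (b := b)
      (fun τ hτ => (hf τ hτ).continuousAt.continuousWithinAt)
      (fun τ hτ => (hf τ ⟨hτ.1, hτ.2.le⟩).hasDerivWithinAt) h0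
      (fun τ hτ => (hB τ hτ).continuousAt.continuousWithinAt)
      (fun τ hτ => (hB τ ⟨hτ.1, hτ.2.le⟩).hasDerivWithinAt) (fun τ hτ e => ?_) ⟨hab, le_rfl⟩
    have hτ' : τ ∈ Set.Icc a b := ⟨hτ.1, hτ.2.le⟩
    have := mul_nonneg (hg τ hτ') (hB0 τ hτ')
    have := (le_abs_self _).trans_lt (hh τ hτ')
    rw [e]; linarith
  refine abs_le.2 ⟨?_, key f h hf ((le_abs_self _).trans h0) hh⟩
  have := key (fun τ => -f τ) (fun τ => -h τ) (fun τ hτ => ((hf τ hτ).neg).congr_deriv (by ring))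
    ((neg_le_abs _).trans h0) (fun τ hτ => by rw [abs_neg]; exact hh τ hτ)
  linarith

/-- Geometry of the points of an outgoing ray, far from the origin of the ray. -/
theorem ray_facts {R q0 μ c s τ : ℝ} (hR : 1 ≤ R) (hq : 2 < q0) (hμ0 : 0 ≤ μ) (hμ : μ < 1 / 10)
    (hcs : c ^ 2 + s ^ 2 = 1)
    (hτ : 2 * q0 ≤ 1 + τ) {r : ℝ} (hr : r = τ + (R + 2 - q0)) :
    (1 + τ) / 2 ≤ r ∧ r ≤ R * (1 + τ) ∧ (r * c) ^ 2 + (r * s) ^ 2 < (τ + R) ^ 2 ∧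
    q0 ≤ 2 * qS R τ (r * c) (r * s) ∧
    JS R τ (r * c) (r * s) ^ (μ - 1) ≤ 2 * q0 ^ (μ - 1) ∧
    q0 ^ (μ - 1) ≤ 2 * JS R τ (r * c) (r * s) ^ (μ - 1) ∧
    JS R τ (r * c) (r * s) ^ (μ - 1) ≤ 1 := by
  have h1 : (1 + τ) / 2 ≤ r := by rw [hr]; linarith
  have h2 : r < τ + R := by linarith
  have r0 : 0 < r := by linarith
  have h3 : (r * c) ^ 2 + (r * s) ^ 2 < (τ + R) ^ 2 := by
    rw [mul_pow, mul_pow, ← mul_add, hcs, mul_one]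
    exact pow_lt_pow_left₀ h2 r0.le (by norm_num)
  have τ0 : 0 ≤ τ := by linarith
  obtain ⟨q1, -, q2, q3, q4, q5, -⟩ := q_facts hR τ0 h3
  rw [radius_dir hcs r0.le] at q2 q3
  have j1 := JS_ge_one R τ (r * c) (r * s)
  have two : (2 : ℝ) ^ (1 - μ) ≤ 2 := by
    conv_rhs => rw [← Real.rpow_one 2]
    exact Real.rpow_le_rpow_of_exponent_le (by norm_num) (by linarith)
  have inv : ∀ z : ℝ, 0 < z → (2 * z) ^ (1 - μ) ≤ 2 * z ^ (1 - μ) := fun z hz => by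
    rw [Real.mul_rpow (by norm_num) hz.le]; gcongr
  have flip : ∀ z z' : ℝ, 0 < z → 0 < z' → z ≤ 2 * z' → z' ^ (μ - 1) ≤ 2 * z ^ (μ - 1) := by
    intro z z' hz hz' hle
    have a := (Real.rpow_le_rpow hz.le hle (by linarith : (0 : ℝ) ≤ 1 - μ)).trans (inv z' hz')
    have e : ∀ z : ℝ, 0 < z → z ^ (μ - 1) = (z ^ (1 - μ))⁻¹ := fun z hz => by
      rw [← Real.rpow_neg hz.le, neg_sub]
    rw [e z hz, e z' hz', ← div_eq_mul_inv, inv_le_iff_one_le_mul₀ (by positivity), div_mul_eq_mul_div,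
      le_div_iff₀ (by positivity)]
    linarith
  refine ⟨h1, by nlinarith, h3, by linarith, flip _ _ (by linarith) (by linarith) (by linarith),
    flip _ _ (by linarith) (by linarith) (by linarith), ?_⟩
  exact Real.rpow_le_one_of_one_le_of_nonpos j1 (by linarith)

/-- Derivatives tangential to outgoing cones, in terms of the vector fields. -/
theorem tang {v : Sm} {c s τ r V : ℝ} (hτ : 0 ≤ τ) (hcs : c ^ 2 + s ^ 2 = 1) (hr : (1 + τ) / 2 ≤ r)
    (hV : ∀ i, |G i v τ (r * c) (r * s)| ≤ V) :
    |dt v τ (r * c) (r * s) + c * d1 v τ (r * c) (r * s) + s * d2 v τ (r * c) (r * s)|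
      ≤ 6 * V / (1 + τ) ∧
    |c * d2 v τ (r * c) (r * s) - s * d1 v τ (r * c) (r * s)| ≤ 2 * V / (1 + τ) := by
  obtain ⟨hc, hs⟩ := dir_le hcs
  have X : 0 < 1 + τ := by linarith
  have V0 : 0 ≤ V := (abs_nonneg _).trans (hV 0)
  have r0 : 0 < r := by linarith
  constructor
  · have e : (τ + r) * (dt v τ (r * c) (r * s) + c * d1 v τ (r * c) (r * s) + s * d2 v τ (r * c) (r * s))
        = G 0 v τ (r * c) (r * s) + c * G 1 v τ (r * c) (r * s) + s * G 2 v τ (r * c) (r * s) := by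
      rw [G0, G1, G2]
      simp only [Sm.add_ap, Sm.mul_ap, cT_ap, cX_ap, cY_ap]
      linear_combination (-(r * dt v τ (r * c) (r * s))) * hcs
    rw [le_div_iff₀ X]
    set z := dt v τ (r * c) (r * s) + c * d1 v τ (r * c) (r * s) + s * d2 v τ (r * c) (r * s)
    have b : (τ + r) * |z| ≤ 3 * V := by
      rw [← abs_of_pos (by linarith : 0 < τ + r), ← abs_mul, e]
      refine (abs_add_three _ _ _).trans ?_
      rw [abs_mul, abs_mul]
      have h0 := hV 0
      have h1 : |c| * |G 1 v τ (r * c) (r * s)| ≤ 1 * V := by have := hV 1; gcongr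
      have h2 : |s| * |G 2 v τ (r * c) (r * s)| ≤ 1 * V := by have := hV 2; gcongr
      linarith
    nlinarith [abs_nonneg z]
  · have e : r * (c * d2 v τ (r * c) (r * s) - s * d1 v τ (r * c) (r * s))
        = G 3 v τ (r * c) (r * s) := by
      rw [G3]
      simp only [Sm.sub_ap, Sm.mul_ap, cT_ap, cX_ap, cY_ap]
      ring
    rw [le_div_iff₀ X]
    set z := c * d2 v τ (r * c) (r * s) - s * d1 v τ (r * c) (r * s)
    have b : r * |z| ≤ V := by
      rw [← abs_of_pos r0, ← abs_mul, e]; exact hV 3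
    nlinarith [abs_nonneg z]

end Ap

namespace Ap
set_option linter.unusedVariables false

variable {P : Par} {M ε T : ℝ} {u : Fin 2 → Sm}

/-- The damping coefficient of the transport equation: it is only kept for the undifferentiated
solution, where the sign of the nonlinearity is needed to avoid a logarithmic loss. -/
def gam (u : Fin 2 → Sm) (w : List (Fin 7)) (a : Fin 2) (t x y : ℝ) : ℝ :=
  if w = [] then 1 / 2 * dt (u (a + 1)) t x y ^ 2 else 0

theorem gam_nonneg (w : List (Fin 7)) (a : Fin 2) (t x y : ℝ) : 0 ≤ gam u w a t x y := by
  rw [gam]; split_ifs <;> positivity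

/-- The linear error `(Ω²v + v / 4) / r^(3/2)` of the transport equation. -/
theorem src_rest {g v r sr X Y V : ℝ} (hX : 0 < X) (hY : 0 < Y) (hr : X / 2 ≤ r) (hsr : Y / 2 ≤ sr)
    (hg : |g| ≤ V) (hv : |v| ≤ V) : |(g + v / 4) / (r * sr)| ≤ 5 * V / (X * Y) := by
  have V0 : 0 ≤ V := (abs_nonneg _).trans hv
  have h1 : X / 2 * (Y / 2) ≤ r * sr := by gcongr; linarith
  have h2 : 0 < X / 2 * (Y / 2) := by positivity
  rw [abs_div, abs_of_pos (h2.trans_le h1)]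
  have h3 : |g + v / 4| ≤ 5 / 4 * V := by
    refine (abs_add_le _ _).trans ?_
    rw [abs_div, abs_of_pos (by norm_num : (0 : ℝ) < 4)]
    linarith
  calc _ ≤ (5 / 4 * V) / (X / 2 * (Y / 2)) := by gcongr
    _ = _ := by field_simp; ring

/-- `√r` times the cubic term `-b² ∂ₜv` differs from the damping `-½ b² Ph` only by a tangential derivative
and a term of lower order. -/
theorem src_damp {b v vt vr sr X Y V R : ℝ} (hR : 1 ≤ R) (hX : 0 < X) (hY : 0 < Y) (hXY : X = Y ^ 2)
    (hsr : Y / 2 ≤ sr) (hsR : sr ≤ R * Y) (hv : |v| ≤ V) (ht : |vt + vr| ≤ 6 * V / X)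
    (hb : b ^ 2 * X ≤ 1) :
    |sr * (-b ^ 2 * vt) + 1 / 2 * b ^ 2 * (sr * (vt - vr) - v / (2 * sr))| ≤ 4 * R * V / (X * Y) := by
  have V0 : 0 ≤ V := (abs_nonneg _).trans hv
  have s0 : 0 < sr := by linarith
  have e : sr * (-b ^ 2 * vt) + 1 / 2 * b ^ 2 * (sr * (vt - vr) - v / (2 * sr))
      = -(b ^ 2 * (v / (4 * sr) + 1 / 2 * sr * (vt + vr))) := by field_simp; ring
  rw [e, abs_neg, abs_mul, abs_of_nonneg (sq_nonneg b)]
  have h1 : |v / (4 * sr)| ≤ V / (2 * Y) := by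
    rw [abs_div, abs_of_pos (by positivity : 0 < 4 * sr)]
    exact div_le_div₀ V0 hv (by positivity) (by linarith)
  have h2 : |1 / 2 * sr * (vt + vr)| ≤ 3 * R * V / Y := by
    rw [abs_mul, abs_of_pos (by positivity : 0 < 1 / 2 * sr)]
    calc _ ≤ 1 / 2 * (R * Y) * (6 * V / X) := by gcongr
      _ = _ := by rw [hXY]; field_simp; ring
  have h3 : |v / (4 * sr) + 1 / 2 * sr * (vt + vr)| ≤ 4 * R * V / Y := by
    refine (abs_add_le _ _).trans ((add_le_add h1 h2).trans ?_)
    have e1 : V / (2 * Y) = 1 / 2 * (V / Y) := by field_simp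
    have e2 : 3 * R * V / Y = 3 * R * (V / Y) := by ring
    have e3 : 4 * R * V / Y = 4 * R * (V / Y) := by ring
    rw [e1, e2, e3]
    have := div_nonneg V0 hY.le
    nlinarith
  have hb' : b ^ 2 ≤ 1 / X := by rw [le_div_iff₀ hX]; exact hb
  calc _ ≤ 1 / X * (4 * R * V / Y) := by gcongr
    _ = _ := by field_simp

/-- The source term of the transport equation. -/
theorem ray_src {C4 : ℝ} (hC4 : 0 < C4) (h : Boot P M ε T u)
    (h4 : ∀ t, 0 ≤ t → t ≤ T → ∀ w : List (Fin 7), w.length + 4 ≤ P.N → ∀ a x y,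
      |W w (u a) t x y| ≤ C4 * ε * (1 + t) ^ (2 * P.δ - 1 / 2))
    {w : List (Fin 7)} (hw : w.length ≤ P.k) (a : Fin 2) {c s q0 τ : ℝ} (hcs : c ^ 2 + s ^ 2 = 1)
    (hq : 2 < q0) (hτ : 2 * q0 ≤ 1 + τ) (hT : τ ≤ T) {r : ℝ} (hr : r = τ + (P.R + 2 - q0)) :
    |√r * box (W w (u a)) τ (r * c) (r * s)
      + (G 3 (G 3 (W w (u a))) τ (r * c) (r * s) + W w (u a) τ (r * c) (r * s) / 4) / (r * √r)
      + gam u w a τ (r * c) (r * s) * (√r * (dt (W w (u a)) τ (r * c) (r * s)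
        - c * d1 (W w (u a)) τ (r * c) (r * s) - s * d2 (W w (u a)) τ (r * c) (r * s))
        - W w (u a) τ (r * c) (r * s) / (2 * √r))|
    < 10 * P.R * C4 * ε * (1 + τ) ^ (2 * P.δ - 2)
      + w.length * (2 * P.R * 72 ^ P.N) * (M * ε) ^ 3 * q0 ^ (P.μ - 1)
        * (1 + τ) ^ (w.length * P.η - 1) := by
  have hR := P.hR
  have hε := h.ε0
  have hM := h.M0
  have hδ := P.δ_pos
  have hδμ := P.δ_μ
  have τ0 : 0 ≤ τ := by linarith
  obtain ⟨f1, f2, f3, f4, f5, f6, f7⟩ := ray_facts hR hq (by linarith : 0 ≤ P.μ) P.hμ1 hcs hτ hr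
  set X := 1 + τ with hX
  have X0 : 0 < X := by linarith
  set Y := √X with hY
  have Y0 : 0 < Y := Real.sqrt_pos.2 X0
  have XY : X = Y ^ 2 := (Real.sq_sqrt X0.le).symm
  have r0 : 0 < r := by linarith
  set sr := √r with hsr
  have s0 : 0 < sr := Real.sqrt_pos.2 r0
  have s1 : Y / 2 ≤ sr := by
    refine Real.le_sqrt_of_sq_le ?_
    rw [div_pow, ← XY]; linarith
  have s2 : sr ≤ P.R * Y := by
    refine (Real.sqrt_le_left (by positivity)).2 ?_
    rw [mul_pow, ← XY]; nlinarith
  set V := C4 * ε * X ^ (2 * P.δ - 1 / 2) with hV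
  have V0 : 0 < V := by positivity
  have hVb : ∀ w' : List (Fin 7), w'.length ≤ P.k + 2 → ∀ x y, |W w' (u a) τ x y| ≤ V :=
    fun w' hw' x y => h4 τ τ0 hT w' (by have : P.N = P.k + 6 := rfl; omega) a x y
  set v := W w (u a) with hv
  have vV : |v τ (r * c) (r * s)| ≤ V := hVb w (by omega) _ _
  have gV : ∀ i, |G i v τ (r * c) (r * s)| ≤ V := fun i => by
    have := hVb (w ++ [i]) (by simp; omega) (r * c) (r * s)
    rwa [W_append, W_cons, W_nil] at this
  have ggV : |G 3 (G 3 v) τ (r * c) (r * s)| ≤ V := by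
    have := hVb (w ++ [3, 3]) (by simp; omega) (r * c) (r * s)
    rwa [W_append, W_cons, W_cons, W_nil] at this
  have VE : V / (X * Y) = C4 * ε * X ^ (2 * P.δ - 2) := by
    rw [hV, hY, Real.sqrt_eq_rpow, div_eq_iff (by positivity)]
    have : X ^ (2 * P.δ - 1 / 2) = X ^ (2 * P.δ - 2) * (X * X ^ (1 / 2 : ℝ)) := by
      nth_rw 3 [← Real.rpow_one X]
      rw [← Real.rpow_add X0, ← Real.rpow_add X0]; congr 1; ring
    rw [this]; ring
  have E0 : 0 < V / (X * Y) := by positivity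
  have rest := src_rest X0 Y0 f1 s1 ggV vV
  obtain ⟨tg, -⟩ := tang τ0 hcs f1 gV
  have bt := h.boot τ τ0 hT
  have j1 := JS_ge_one P.R τ (r * c) (r * s)
  have J0 : 0 < JS P.R τ (r * c) (r * s) ^ (P.μ - 1) := Real.rpow_pos_of_pos (by linarith) _
  by_cases hw0 : w = []
  · have hv0 : v = u a := by rw [hv, hw0]; rfl
    have hb : dt (u (a + 1)) τ (r * c) (r * s) ^ 2 * X ≤ 1 := by
      have b1 : |dt (u (a + 1)) τ (r * c) (r * s)| ≤ _ := bt [] (by simp [mem_words]) (a + 1) 0 (r * c) (r * s)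
      have b2 : |dt (u (a + 1)) τ (r * c) (r * s)| ≤ 1 / Y := by
        refine b1.trans ?_
        have : X ^ (-(1 / 2) : ℝ) = 1 / Y := by
          rw [hY, Real.sqrt_eq_rpow, Real.rpow_neg X0.le, inv_eq_one_div]
        rw [List.length_nil, pow_zero, mul_one, this]
        have hsm := h.sm
        calc _ ≤ 1 * (1 / Y) * 1 := by gcongr
          _ = _ := by ring
      have : dt (u (a + 1)) τ (r * c) (r * s) ^ 2 ≤ (1 / Y) ^ 2 := by
        rw [← sq_abs]; gcongr
      calc _ ≤ (1 / Y) ^ 2 * X := by gcongr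
        _ = 1 := by rw [XY]; field_simp
    have eq : box v τ (r * c) (r * s) = -dt (u (a + 1)) τ (r * c) (r * s) ^ 2 * dt v τ (r * c) (r * s) := by
      have := h.sol.eqn a τ (r * c) (r * s) τ0
      simp only [Sm.add_ap, Sm.mul_ap] at this
      rw [hv0]; linarith
    have damp := src_damp (vr := c * d1 v τ (r * c) (r * s) + s * d2 v τ (r * c) (r * s)) hR X0 Y0 XY
      s1 s2 vV (by rwa [← add_assoc]) hb
    rw [gam, if_pos hw0, eq]
    have hl : w.length = 0 := by rw [hw0]; rfl
    rw [hl, Nat.cast_zero, zero_mul, zero_mul, zero_mul, zero_mul, add_zero]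
    rw [← sub_sub] at damp
    calc _ ≤ 4 * P.R * V / (X * Y) + 5 * V / (X * Y) := by
          rw [add_right_comm]
          exact (abs_add_le _ _).trans (add_le_add damp rest)
      _ = (4 * P.R + 5) * (V / (X * Y)) := by ring
      _ < (10 * P.R) * (V / (X * Y)) := by gcongr; linarith
      _ = _ := by rw [VE]; ring
  · rw [gam, if_neg hw0, zero_mul, add_zero]
    have hl : (1 : ℝ) ≤ w.length := by
      exact_mod_cast List.length_pos_iff.2 hw0
    set A := M * ε * X ^ (-(1 / 2) : ℝ) * JS P.R τ (r * c) (r * s) ^ (P.μ - 1) with hA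
    have A0 : 0 ≤ A := by positivity
    have b1 : 1 ≤ X ^ P.η := beta_ge τ0
    have hnl := nl (N := P.N) (m := P.k) h.sol (k := P.k)
      (by have : P.N = P.k + 6 := rfl; have := P.hk; omega)
      (by have : P.N = P.k + 6 := rfl; omega) τ0 b1 A0 A0
      (fun w hw a b => bt w (mem_words.2 hw) a b (r * c) (r * s))
      (fun w hw a b => bt w (mem_words.2 hw) a b (r * c) (r * s)) hw a
    have q00 : 0 < q0 ^ (P.μ - 1) := Real.rpow_pos_of_pos (by linarith) _
    have A3 : A ^ 2 * A ≤ (M * ε) ^ 3 * (1 / (X * Y)) * (2 * q0 ^ (P.μ - 1)) := by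
      have : X ^ (-(1 / 2) : ℝ) = 1 / Y := by
        rw [hY, Real.sqrt_eq_rpow, Real.rpow_neg X0.le, inv_eq_one_div]
      rw [hA, this]
      calc _ = (M * ε) ^ 3 * (1 / (Y ^ 2 * Y)) * (JS P.R τ (r * c) (r * s) ^ (P.μ - 1)
            * (JS P.R τ (r * c) (r * s) ^ (P.μ - 1)) ^ 2) := by field_simp
        _ ≤ (M * ε) ^ 3 * (1 / (Y ^ 2 * Y)) * ((2 * q0 ^ (P.μ - 1)) * 1 ^ 2) := by gcongr
        _ = _ := by rw [XY]; ring
    have bx : |sr * box v τ (r * c) (r * s)| ≤ 1 * (2 * P.R * 72 ^ P.N) * (M * ε) ^ 3 * q0 ^ (P.μ - 1)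
        * X ^ (w.length * P.η - 1) := by
      rw [abs_mul, abs_of_pos s0]
      have ex : X ^ (w.length * P.η - 1) = (X ^ P.η) ^ w.length / X := by
        rw [Real.rpow_sub X0, Real.rpow_one, mul_comm, Real.rpow_mul_natCast X0.le]
      calc _ ≤ P.R * Y * (72 ^ P.N * ((M * ε) ^ 3 * (1 / (X * Y)) * (2 * q0 ^ (P.μ - 1)) *
            (X ^ P.η) ^ w.length)) := by
            refine mul_le_mul s2 (hnl.trans ?_) (abs_nonneg _) (by positivity)
            gcongr
        _ = _ := by rw [ex]; field_simp
    have lw : 1 * (2 * P.R * 72 ^ P.N) * (M * ε) ^ 3 * q0 ^ (P.μ - 1) * X ^ (w.length * P.η - 1)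
        ≤ w.length * (2 * P.R * 72 ^ P.N) * (M * ε) ^ 3 * q0 ^ (P.μ - 1) * X ^ (w.length * P.η - 1) := by
      gcongr
    have r5 : 5 * V / (X * Y) < 10 * P.R * C4 * ε * X ^ (2 * P.δ - 2) := by
      calc 5 * V / (X * Y) = 5 * (V / (X * Y)) := by ring
        _ < (10 * P.R) * (V / (X * Y)) := by gcongr; linarith
        _ = _ := by rw [VE]; ring
    have := abs_add_le (sr * box v τ (r * c) (r * s))
      ((G 3 (G 3 v) τ (r * c) (r * s) + v τ (r * c) (r * s) / 4) / (r * sr))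
    linarith

end Ap

namespace Ap
set_option linter.unusedVariables false

variable {P : Par} {M ε T : ℝ} {u : Fin 2 → Sm}

theorem rpow_half {X : ℝ} (hX : 0 < X) : X ^ (-(1 / 2) : ℝ) = 1 / √X := by
  rw [Real.sqrt_eq_rpow, Real.rpow_neg hX.le, inv_eq_one_div]

/-- The transported quantity stays of the size it has where the ray enters the region
`2 q₀ ≤ 1 + t`. -/
theorem phi_bound {Ca C4 : ℝ} (hCa : 0 < Ca) (hC4 : 0 < C4) (h : Boot P M ε T u)
    (h4a : ∀ t, 0 ≤ t → t ≤ T → ∀ w : List (Fin 7), w.length + 4 ≤ P.N → ∀ a b x y,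
      x ^ 2 + y ^ 2 < (t + P.R) ^ 2 →
      qS P.R t x y * |D b (W w (u a)) t x y| ≤ Ca * ε * (1 + t) ^ (P.δ - 1 / 2))
    (h4 : ∀ t, 0 ≤ t → t ≤ T → ∀ w : List (Fin 7), w.length + 4 ≤ P.N → ∀ a x y,
      |W w (u a) t x y| ≤ C4 * ε * (1 + t) ^ (2 * P.δ - 1 / 2))
    {w : List (Fin 7)} (hw : w.length ≤ P.k) (a : Fin 2) {c s q0 t : ℝ} (hcs : c ^ 2 + s ^ 2 = 1)
    (hq : 2 < q0) (ht : 2 * q0 ≤ 1 + t) (hT : t ≤ T) :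
    |Ph (W w (u a)) c s (P.R + 2 - q0) t| ≤ q0 ^ (P.μ - 1) * ((12 * P.R * Ca + C4 + 20 * P.R * C4) * ε
      + 1 / P.η * (2 * P.R * 72 ^ P.N) * (M * ε) ^ 3 * (1 + t) ^ (w.length * P.η)) := by
  have hR := P.hR
  have hε := h.ε0
  have hM := h.M0
  have hδ := P.δ_pos
  have hδμ := P.δ_μ
  have hδ1 := P.δ_one
  have hη := P.hη
  have hNk : P.N = P.k + 6 := rfl
  set v := W w (u a) with hv
  set Q := q0 ^ (P.μ - 1) with hQ
  have Q0 : 0 < Q := Real.rpow_pos_of_pos (by linarith) _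
  set ρ := P.R + 2 - q0 with hρ
  set j : ℝ := (w.length : ℝ) with hj
  have j0 : 0 ≤ j := Nat.cast_nonneg _
  set A' := 10 * P.R * C4 with hA'
  have A'0 : 0 < A' := by positivity
  set A2 := 2 * P.R * 72 ^ P.N with hA2
  have A20 : 0 < A2 := by positivity
  have init : |Ph v c s ρ (2 * q0 - 1)| ≤ (12 * P.R * Ca + C4) * ε * Q := by
    set τ := 2 * q0 - 1 with hτ
    have τ0 : 0 ≤ τ := by linarith
    obtain ⟨f1, f2, f3, f4, f5, f6, f7⟩ := ray_facts (τ := τ) hR hq (by linarith : 0 ≤ P.μ) P.hμ1 hcs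
      (by linarith) (r := τ + ρ) rfl
    have X0 : 0 < 1 + τ := by linarith
    set Y := √(1 + τ) with hY
    have Y0 : 0 < Y := Real.sqrt_pos.2 X0
    have XY : 1 + τ = Y ^ 2 := (Real.sq_sqrt X0.le).symm
    have r0 : 0 < τ + ρ := by linarith
    rw [Ph]
    set r := τ + ρ with hr
    set sr := √r with hsr
    have s0 : 0 < sr := Real.sqrt_pos.2 r0
    have s1 : Y / 2 ≤ sr := by
      refine Real.le_sqrt_of_sq_le ?_
      rw [div_pow, ← XY]; linarith
    have s2 : sr ≤ P.R * Y := by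
      refine (Real.sqrt_le_left (by positivity)).2 ?_
      rw [mul_pow, ← XY]; nlinarith
    have hD : ∀ b, |D b v τ (r * c) (r * s)| ≤ 4 * Ca * ε * ((1 + τ) ^ (P.δ - 1 / 2) / (1 + τ)) := by
      intro b
      have := h4a τ τ0 (by linarith) w (by omega) a b _ _ f3
      have h2 : (1 + τ) / 4 * |D b v τ (r * c) (r * s)| ≤ Ca * ε * (1 + τ) ^ (P.δ - 1 / 2) := by
        refine le_trans ?_ this
        gcongr; linarith
      rw [← mul_div_assoc, le_div_iff₀ X0]; linarith
    have hV := h4 τ τ0 (by linarith) w (by omega) a (r * c) (r * s)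
    rw [← hv] at hV
    have rp : ∀ p : ℝ, (1 + τ) ^ (p - 1 / 2) = (1 + τ) ^ (p - 1) * Y := fun p => by
      rw [hY, Real.sqrt_eq_rpow, ← Real.rpow_add X0]; congr 1; ring
    have small : ∀ p : ℝ, p ≤ P.μ → (1 + τ) ^ (p - 1) ≤ Q := fun p hp => by
      calc (1 + τ) ^ (p - 1) ≤ (1 + τ) ^ (P.μ - 1) :=
            Real.rpow_le_rpow_of_exponent_le (by linarith) (by linarith)
        _ ≤ Q := Real.rpow_le_rpow_of_nonpos (by linarith) (by linarith) (by linarith [P.hμ1])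
    have e1 := small P.δ (by linarith)
    have e2 := small (2 * P.δ) (by linarith)
    obtain ⟨hc, hs⟩ := dir_le hcs
    have g0 : |dt v τ (r * c) (r * s)| ≤ _ := hD 0
    have g1 : |d1 v τ (r * c) (r * s)| ≤ _ := hD 1
    have g2 : |d2 v τ (r * c) (r * s)| ≤ _ := hD 2
    set Z := 4 * Ca * ε * ((1 + τ) ^ (P.δ - 1 / 2) / (1 + τ)) with hZ
    have m : |dt v τ (r * c) (r * s) - c * d1 v τ (r * c) (r * s) - s * d2 v τ (r * c) (r * s)| ≤ 3 * Z := by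
      have h1 : |c * d1 v τ (r * c) (r * s)| ≤ 1 * Z := by rw [abs_mul]; gcongr
      have h2 : |s * d2 v τ (r * c) (r * s)| ≤ 1 * Z := by rw [abs_mul]; gcongr
      have := abs_sub (dt v τ (r * c) (r * s) - c * d1 v τ (r * c) (r * s)) (s * d2 v τ (r * c) (r * s))
      have := abs_sub (dt v τ (r * c) (r * s)) (c * d1 v τ (r * c) (r * s))
      linarith
    refine (abs_sub _ _).trans ?_
    have p1 : |sr * (dt v τ (r * c) (r * s) - c * d1 v τ (r * c) (r * s) - s * d2 v τ (r * c) (r * s))|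
        ≤ 12 * P.R * Ca * ε * Q := by
      rw [abs_mul, abs_of_pos s0]
      calc _ ≤ P.R * Y * (3 * Z) := by gcongr
        _ = 12 * P.R * Ca * ε * (1 + τ) ^ (P.δ - 1) := by
          rw [hZ, rp, XY]; field_simp; ring
        _ ≤ _ := by gcongr
    have p2 : |v τ (r * c) (r * s) / (2 * sr)| ≤ C4 * ε * Q := by
      rw [abs_div, abs_of_pos (by positivity : 0 < 2 * sr), div_le_iff₀ (by positivity)]
      calc _ ≤ C4 * ε * ((1 + τ) ^ (2 * P.δ - 1) * Y) := by rw [← rp]; exact hV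
        _ ≤ C4 * ε * (Q * (2 * sr)) := by gcongr; linarith
        _ = _ := by ring
    linarith
  have hab : 2 * q0 - 1 ≤ t := by linarith
  have e12 : 1 / (1 - 2 * P.δ) ≤ 2 := by rw [div_le_iff₀ (by linarith)]; linarith
  have e12' : 0 < 1 - 2 * P.δ := by linarith
  have negX : ∀ τ, 2 * q0 - 1 ≤ τ → A' * ε / (1 - 2 * P.δ) * (1 + τ) ^ (2 * P.δ - 1) ≤ 2 * A' * ε * Q := by
    intro τ hτ
    have : (1 + τ) ^ (2 * P.δ - 1) ≤ Q := by
      calc (1 + τ) ^ (2 * P.δ - 1) ≤ (1 + τ) ^ (P.μ - 1) :=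
            Real.rpow_le_rpow_of_exponent_le (by linarith) (by linarith)
        _ ≤ Q := Real.rpow_le_rpow_of_nonpos (by linarith) (by linarith) (by linarith [P.hμ1])
    calc _ = A' * ε * (1 / (1 - 2 * P.δ)) * (1 + τ) ^ (2 * P.δ - 1) := by ring
      _ ≤ A' * ε * 2 * Q := by
        gcongr
        exact Real.rpow_nonneg (by linarith) _
      _ = _ := by ring
  have posX : ∀ τ, 2 * q0 - 1 ≤ τ → 0 ≤ 1 / P.η * A2 * (M * ε) ^ 3 * Q * (1 + τ) ^ (j * P.η) := by
    intro τ hτ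
    have := Real.rpow_nonneg (by linarith : (0 : ℝ) ≤ 1 + τ) (j * P.η)
    positivity
  have main := transport (f := Ph v c s ρ) (a := 2 * q0 - 1) (b := t)
    (g := fun τ => gam u w a τ ((τ + ρ) * c) ((τ + ρ) * s))
    (h := fun τ => (√(τ + ρ) * box v τ ((τ + ρ) * c) ((τ + ρ) * s)
      + (G 3 (G 3 v) τ ((τ + ρ) * c) ((τ + ρ) * s) + v τ ((τ + ρ) * c) ((τ + ρ) * s) / 4)
        / ((τ + ρ) * √(τ + ρ))) + gam u w a τ ((τ + ρ) * c) ((τ + ρ) * s) * Ph v c s ρ τ)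
    (B := fun τ => ((12 * P.R * Ca + C4) * ε * Q + 2 * A' * ε * Q)
      - A' * ε / (1 - 2 * P.δ) * (1 + τ) ^ (2 * P.δ - 1)
      + 1 / P.η * A2 * (M * ε) ^ 3 * Q * (1 + τ) ^ (j * P.η))
    (B' := fun τ => 10 * P.R * C4 * ε * (1 + τ) ^ (2 * P.δ - 2)
      + j * A2 * (M * ε) ^ 3 * Q * (1 + τ) ^ (j * P.η - 1)) hab ?_ ?_ ?_ ?_ ?_ ?_
  · refine main.trans ?_
    have : 0 ≤ A' * ε / (1 - 2 * P.δ) * (1 + t) ^ (2 * P.δ - 1) := by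
      have := Real.rpow_nonneg (by linarith : (0 : ℝ) ≤ 1 + t) (2 * P.δ - 1)
      positivity
    rw [hA'] at this ⊢
    linarith
  · intro τ hτ
    refine (ray_deriv v hcs (by rw [hρ]; linarith [hτ.1])).congr_deriv ?_
    ring
  · intro τ hτ
    have τ0 : 0 ≤ τ := by linarith [hτ.1]
    refine (((hasDeriv_pow (2 * P.δ - 1) τ0).const_mul (A' * ε / (1 - 2 * P.δ))).const_sub _ |>.add
      ((hasDeriv_pow (j * P.η) τ0).const_mul (1 / P.η * A2 * (M * ε) ^ 3 * Q))).congr_deriv ?_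
    rw [show 2 * P.δ - 1 - 1 = 2 * P.δ - 2 by ring, hA']
    field_simp
    ring
  · have := negX _ le_rfl
    have := posX _ le_rfl
    linarith
  · intro τ hτ
    have := negX _ hτ.1
    have := posX _ hτ.1
    have : 0 ≤ (12 * P.R * Ca + C4) * ε * Q := by positivity
    linarith
  · intro τ hτ; exact gam_nonneg _ _ _ _ _
  · intro τ hτ
    exact ray_src hC4 h h4 hw a hcs hq (by linarith [hτ.1]) (hτ.2.trans hT) rfl

/-- All first derivatives are combinations of `Ph`, the tangential derivatives and `v` itself. -/
theorem recover {vt v1 v2 c s F V sr X Y v : ℝ} (hcs : c ^ 2 + s ^ 2 = 1) (hY : 0 < Y) (hX : 0 < X)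
    (hXY : X = Y ^ 2) (hsr : Y / 2 ≤ sr)
    (hF : |sr * (vt - c * v1 - s * v2) - v / (2 * sr)| ≤ F) (hv : |v| ≤ V)
    (ht : |vt + c * v1 + s * v2| ≤ 6 * V / X) (ho : |c * v2 - s * v1| ≤ 2 * V / X) :
    |vt| ≤ F / Y + 6 * (V / X) ∧ |v1| ≤ F / Y + 6 * (V / X) ∧ |v2| ≤ F / Y + 6 * (V / X) := by
  have V0 : 0 ≤ V := (abs_nonneg _).trans hv
  have F0 : 0 ≤ F := (abs_nonneg _).trans hF
  have s0 : 0 < sr := by linarith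
  obtain ⟨hc, hs⟩ := dir_le hcs
  have hm : |vt - (c * v1 + s * v2)| ≤ 2 * (F / Y) + 2 * (V / X) := by
    have e : vt - (c * v1 + s * v2)
        = (sr * (vt - c * v1 - s * v2) - v / (2 * sr) + v / (2 * sr)) / sr := by
      field_simp; ring
    rw [e, abs_div, abs_of_pos s0, div_le_iff₀ s0]
    have h2 : |v / (2 * sr)| ≤ V / Y := by
      rw [abs_div, abs_of_pos (by positivity : 0 < 2 * sr)]
      exact div_le_div₀ V0 hv hY (by linarith)
    refine (abs_add_le _ _).trans ((add_le_add hF h2).trans ?_)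
    calc F + V / Y = (2 * (F / Y) + 2 * (V / X)) * (Y / 2) := by rw [hXY]; field_simp
      _ ≤ _ := by gcongr
  rw [add_assoc] at ht
  rw [mul_div_assoc] at ht ho
  set vr := c * v1 + s * v2 with hvr
  have hP : 0 ≤ F / Y := by positivity
  have hQ : 0 ≤ V / X := by positivity
  obtain ⟨m1, m2⟩ := abs_le.1 hm
  obtain ⟨t1, t2⟩ := abs_le.1 ht
  have kr : |vr| ≤ F / Y + 4 * (V / X) := abs_le.2 ⟨by linarith, by linarith⟩
  refine ⟨abs_le.2 ⟨by linarith, by linarith⟩, ?_, ?_⟩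
  · have e : v1 = c * vr - s * (c * v2 - s * v1) := by rw [hvr]; linear_combination (-v1) * hcs
    rw [e]
    have := abs_sub (c * vr) (s * (c * v2 - s * v1))
    have h1 : |c * vr| ≤ 1 * (F / Y + 4 * (V / X)) := by rw [abs_mul]; gcongr
    have h2 : |s * (c * v2 - s * v1)| ≤ 1 * (2 * (V / X)) := by rw [abs_mul]; gcongr
    linarith
  · have e : v2 = s * vr + c * (c * v2 - s * v1) := by rw [hvr]; linear_combination (-v2) * hcs
    rw [e]
    have := abs_add_le (s * vr) (c * (c * v2 - s * v1))
    have h1 : |s * vr| ≤ 1 * (F / Y + 4 * (V / X)) := by rw [abs_mul]; gcongr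
    have h2 : |c * (c * v2 - s * v1)| ≤ 1 * (2 * (V / X)) := by rw [abs_mul]; gcongr
    linarith

theorem final_alg {A A3 C ε E Y Q J β e c : ℝ} (hA : 0 ≤ A) (hA3 : 0 ≤ A3) (hC : 0 ≤ C) (hε : 0 ≤ ε)
    (hE : 0 ≤ E) (hY : 0 < Y) (hQ : 0 ≤ Q) (hJ : 0 ≤ J) (hQJ : Q ≤ 2 * J) (hβ : 1 ≤ β)
    (he : e ≤ Q / Y) (hc : 2 * (A + 6 * C + A3) ≤ c) :
    Q * (A * ε + A3 * E * β) / Y + 6 * (C * ε * e) ≤ c * (ε + E) * (1 / Y) * J * β := by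
  have h1 : A * ε ≤ A * ε * β := le_mul_of_one_le_right (by positivity) hβ
  have h2 : C * ε ≤ C * ε * β := le_mul_of_one_le_right (by positivity) hβ
  have β0 : 0 ≤ β := by linarith
  have h3 : A * ε + A3 * E + 6 * C * ε ≤ (A + 6 * C + A3) * (ε + E) := by
    nlinarith [mul_nonneg hA hE, mul_nonneg hC hE, mul_nonneg hA3 hε]
  have h4 : C * ε * e ≤ C * ε * (Q / Y) := by gcongr
  have h5 : C * ε * (Q / Y) ≤ C * ε * β * (Q / Y) := by gcongr
  have h6 : Q * (A * ε + A3 * E * β) / Y ≤ Q * (A * ε * β + A3 * E * β) / Y := by gcongr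
  calc _ ≤ Q * (A * ε * β + A3 * E * β) / Y + 6 * (C * ε * β * (Q / Y)) := by linarith
    _ = (A * ε + A3 * E + 6 * C * ε) * (1 / Y * Q * β) := by ring
    _ ≤ (A + 6 * C + A3) * (ε + E) * (1 / Y * (2 * J) * β) := by gcongr
    _ = (2 * (A + 6 * C + A3)) * ((ε + E) * (1 / Y) * J * β) := by ring
    _ ≤ c * ((ε + E) * (1 / Y) * J * β) := by gcongr
    _ = _ := by ring

/-- The improved pointwise bounds, with a constant independent of the bootstrap constant `M`. -/
theorem step5 (P : Par) {Ca C4 : ℝ} (hCa : 0 < Ca) (hC4 : 0 < C4) : ∃ C' : ℝ, 0 < C' ∧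
    ∀ M ε T u, Boot P M ε T u →
    (∀ t, 0 ≤ t → t ≤ T → ∀ w : List (Fin 7), w.length + 4 ≤ P.N → ∀ a b x y,
      x ^ 2 + y ^ 2 < (t + P.R) ^ 2 →
      qS P.R t x y * |D b (W w (u a)) t x y| ≤ Ca * ε * (1 + t) ^ (P.δ - 1 / 2)) →
    (∀ t, 0 ≤ t → t ≤ T → ∀ w : List (Fin 7), w.length + 4 ≤ P.N → ∀ a x y,
      |W w (u a) t x y| ≤ C4 * ε * (1 + t) ^ (2 * P.δ - 1 / 2)) →
    ∀ t, 0 ≤ t → t ≤ T → ∀ w ∈ words P.k, ∀ a b x y, |D b (W w (u a)) t x y| ≤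
      C' * (ε + (M * ε) ^ 3) * (1 + t) ^ (-(1 / 2) : ℝ) * JS P.R t x y ^ (P.μ - 1)
        * ((1 + t) ^ P.η) ^ w.length := by
  have hR := P.hR
  have hη := P.hη
  have hδ := P.δ_pos
  have hδμ := P.δ_μ
  have hδ1 := P.δ_one
  set A := 12 * P.R * Ca + C4 + 20 * P.R * C4 with hA
  have A0 : 0 < A := by positivity
  set A3 := 1 / P.η * (2 * P.R * 72 ^ P.N) with hA3
  have A30 : 0 < A3 := by positivity
  refine ⟨8 * Ca + 2 * (A + 6 * C4 + A3), by positivity, fun M ε T u h h4a h4 t ht hT w hw a b x y => ?_⟩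
  have hε := h.ε0
  have hM := h.M0
  have hNk : P.N = P.k + 6 := rfl
  have hw' := mem_words.1 hw
  set v := W w (u a) with hv
  have X0 : 0 < 1 + t := by linarith
  have j1 := JS_ge_one P.R t x y
  have J0 : 0 < JS P.R t x y ^ (P.μ - 1) := Real.rpow_pos_of_pos (by linarith) _
  have β1 : 1 ≤ ((1 + t) ^ P.η) ^ w.length := one_le_pow₀ (beta_ge ht)
  set β := ((1 + t) ^ P.η) ^ w.length with hβ
  have Xh : 0 < (1 + t) ^ (-(1 / 2) : ℝ) := Real.rpow_pos_of_pos X0 _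
  have E3 : 0 ≤ (M * ε) ^ 3 := by positivity
  rcases le_or_gt ((t + P.R) ^ 2) (x ^ 2 + y ^ 2) with hout | hin
  · have : D b v t x y = 0 := (h.csW w a).D hR b t x y ht hout
    rw [this, abs_zero]; positivity
  obtain ⟨q1, q2, q3, q4, q5, q6, -⟩ := q_facts hR ht hin
  obtain ⟨c, s, hcs, hx, hy⟩ := exists_dir x y
  set q0 := t + P.R + 2 - radius x y with hq0
  rcases lt_or_ge (1 + t) (2 * q0) with hI | hII
  -- away from the cone `q` is comparable to `1 + t`, and `(1 + t)^δ ≤ 4 q^μ` absorbs the loss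
  · have b1 := h4a t ht hT w (by omega) a b x y hin
    set q := qS P.R t x y with hq
    have qp : (0 : ℝ) < q := by linarith
    have x1 : (1 + t) ^ P.δ ≤ 4 * q ^ P.μ := by
      calc (1 + t) ^ P.δ ≤ (4 * q) ^ P.δ := Real.rpow_le_rpow X0.le (by linarith) hδ.le
        _ = 4 ^ P.δ * q ^ P.δ := Real.mul_rpow (by norm_num) qp.le
        _ ≤ 4 ^ (1 : ℝ) * q ^ P.μ := by
          gcongr
          · norm_num
          · linarith
          · linarith
        _ = _ := by rw [Real.rpow_one]
    have x2 : q ^ P.μ ≤ q * (2 * JS P.R t x y ^ (P.μ - 1)) := by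
      have e : q ^ P.μ = q * q ^ (P.μ - 1) := by
        nth_rw 2 [← Real.rpow_one q]
        rw [← Real.rpow_add qp]; congr 1; ring
      rw [e]
      gcongr
      calc q ^ (P.μ - 1) ≤ (JS P.R t x y / 2) ^ (P.μ - 1) :=
            Real.rpow_le_rpow_of_nonpos (by linarith) (by linarith) (by linarith [P.hμ1])
        _ = JS P.R t x y ^ (P.μ - 1) * 2 ^ (1 - P.μ) := by
          rw [Real.div_rpow (by linarith) (by norm_num), div_eq_mul_inv, ← Real.rpow_neg (by norm_num),
            neg_sub]
        _ ≤ JS P.R t x y ^ (P.μ - 1) * 2 ^ (1 : ℝ) := by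
          gcongr
          · norm_num
          · linarith
        _ = _ := by rw [Real.rpow_one]; ring
    have x3 : (1 + t) ^ (P.δ - 1 / 2) = (1 + t) ^ P.δ * (1 + t) ^ (-(1 / 2) : ℝ) := by
      rw [← Real.rpow_add X0]; rfl
    have x4 : q * |D b v t x y| ≤ q * (8 * Ca * ε * (1 + t) ^ (-(1 / 2) : ℝ) * JS P.R t x y ^ (P.μ - 1)) := by
      refine b1.trans ?_
      rw [x3]
      calc _ ≤ Ca * ε * ((4 * (q * (2 * JS P.R t x y ^ (P.μ - 1)))) * (1 + t) ^ (-(1 / 2) : ℝ)) := by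
            gcongr; exact x1.trans (by gcongr)
        _ = _ := by ring
    have x5 := le_of_mul_le_mul_left x4 qp
    refine x5.trans ?_
    calc _ ≤ (8 * Ca * ε * (1 + t) ^ (-(1 / 2) : ℝ) * JS P.R t x y ^ (P.μ - 1)) * β :=
          le_mul_of_one_le_right (by positivity) β1
      _ ≤ _ := by
        gcongr
        · linarith
        · linarith
  -- close to the cone, `(t, x, y)` lies on the outgoing ray in the direction `(c, s)`
  · have hq2 : 2 < q0 := by linarith
    have hr : radius x y = t + (P.R + 2 - q0) := by rw [hq0]; ring
    obtain ⟨f1, f2, f3, f4, f5, f6, f7⟩ := ray_facts hR hq2 (by linarith : 0 ≤ P.μ) P.hμ1 hcs hII hr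
    have hF := phi_bound hCa hC4 h h4a h4 hw' a hcs hq2 hII hT
    rw [← hA, ← hA3, ← hv] at hF
    rw [Ph, ← hr, ← hx, ← hy] at hF
    set Y := √(1 + t) with hY
    have Y0 : 0 < Y := Real.sqrt_pos.2 X0
    have XY : 1 + t = Y ^ 2 := (Real.sq_sqrt X0.le).symm
    have s1 : Y / 2 ≤ √(radius x y) := by
      refine Real.le_sqrt_of_sq_le ?_
      rw [div_pow, ← XY]; linarith
    have hV : ∀ w' : List (Fin 7), w'.length ≤ P.k + 1 → ∀ x y,
        |W w' (u a) t x y| ≤ C4 * ε * (1 + t) ^ (2 * P.δ - 1 / 2) :=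
      fun w' hw' x y => h4 t ht hT w' (by omega) a x y
    have vV := hV w (by omega) x y
    have tg := tang (v := v) ht hcs f1 (V := C4 * ε * (1 + t) ^ (2 * P.δ - 1 / 2)) fun i => by
      have := hV (w ++ [i]) (by simp; omega) (radius x y * c) (radius x y * s)
      rwa [W_append, W_cons, W_nil] at this
    rw [← hx, ← hy] at tg
    rw [← hx, ← hy] at f6
    obtain ⟨r0, r1, r2⟩ := recover hcs Y0 X0 XY s1 hF vV tg.1 tg.2
    have hb : |D b v t x y| ≤ q0 ^ (P.μ - 1) * (A * ε + A3 * (M * ε) ^ 3 * (1 + t) ^ (w.length * P.η)) / Y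
        + 6 * (C4 * ε * (1 + t) ^ (2 * P.δ - 1 / 2) / (1 + t)) := by
      fin_cases b
      · exact r0
      · exact r1
      · exact r2
    refine hb.trans ?_
    set Q := q0 ^ (P.μ - 1) with hQ
    have Q0 : 0 < Q := Real.rpow_pos_of_pos (by linarith) _
    have eβ : (1 + t) ^ (w.length * P.η) = β := by
      rw [mul_comm, Real.rpow_mul_natCast X0.le]
    have eV : (1 + t) ^ (2 * P.δ - 1 / 2) / (1 + t) ≤ Q / Y := by
      have : (1 + t) ^ (2 * P.δ - 1 / 2) = (1 + t) ^ (2 * P.δ - 1) * Y := by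
        rw [hY, Real.sqrt_eq_rpow, ← Real.rpow_add X0]; congr 1; ring
      have sm : (1 + t) ^ (2 * P.δ - 1) ≤ Q := by
        calc (1 + t) ^ (2 * P.δ - 1) ≤ (1 + t) ^ (P.μ - 1) :=
              Real.rpow_le_rpow_of_exponent_le (by linarith) (by linarith)
          _ ≤ Q := Real.rpow_le_rpow_of_nonpos (by linarith) (by linarith) (by linarith [P.hμ1])
      rw [this, div_le_div_iff₀ X0 Y0, XY]
      calc _ = (1 + t) ^ (2 * P.δ - 1) * Y ^ 2 := by rw [XY]; ring
        _ ≤ _ := by gcongr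
    rw [eβ, rpow_half X0, ← hY, mul_div_assoc (C4 * ε)]
    exact final_alg A0.le A30.le hC4.le hε.le E3 Y0 Q0.le J0.le f6 β1 eV
      (by linarith : 2 * (A + 6 * C4 + A3) ≤ 8 * Ca + 2 * (A + 6 * C4 + A3))

end Ap

namespace Ap
set_option linter.unusedVariables false

variable {P : Par} {M ε T : ℝ} {u : Fin 2 → Sm}

/-! ### The continuity argument -/

/-- Continuity principle: a finite family of bounds `|f i| ≤ g i` which holds at time `0`, and which
is strict at the time `T` as soon as it holds up to the time `T`, holds for all times. The functions
`f i` are supported in a compact set which depends monotonically on time. -/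
theorem cont_arg {ι : Type*} [Finite ι] {f g : ι → ℝ × (ℝ × ℝ) → ℝ} {R : ℝ}
    (hf : ∀ i, Continuous (f i)) (hg : ∀ i, Continuous (g i)) (hg0 : ∀ i z, 0 < g i z)
    (hs : ∀ i t A p, 0 ≤ t → t + R ≤ A → p ∉ Bx A → f i (t, p) = 0)
    (h0 : ∀ i p, |f i (0, p)| ≤ g i (0, p))
    (himp : ∀ T, 0 ≤ T → (∀ t, 0 ≤ t → t ≤ T → ∀ i p, |f i (t, p)| ≤ g i (t, p)) →
      ∀ i p, |f i (T, p)| < g i (T, p)) :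
    ∀ t, 0 ≤ t → ∀ i p, |f i (t, p)| ≤ g i (t, p) := by
  set s : Set ℝ := {t | ∀ θ ∈ Set.Icc (0 : ℝ) 1, ∀ i p, |f i (θ * t, p)| ≤ g i (θ * t, p)} with hsdef
  have hclosed : IsClosed s := by
    have e : s = ⋂ θ ∈ Set.Icc (0 : ℝ) 1, ⋂ i, ⋂ p, {t | |f i (θ * t, p)| ≤ g i (θ * t, p)} := by
      ext t; simp [hsdef]
    rw [e]
    refine isClosed_biInter fun θ _ => isClosed_iInter fun i => isClosed_iInter fun p => ?_
    have c : Continuous fun t : ℝ => (θ * t, p) := by fun_prop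
    exact isClosed_le ((hf i).comp c).abs ((hg i).comp c)
  have hall : ∀ t, 0 ≤ t → t ∈ s → ∀ τ, 0 ≤ τ → τ ≤ t → ∀ i p, |f i (τ, p)| ≤ g i (τ, p) := by
    intro t ht hts τ hτ hτt i p
    rcases ht.eq_or_lt with h | h
    · have : τ = 0 := by linarith
      rw [this]; exact h0 i p
    · have := hts (τ / t) ⟨by positivity, (div_le_one h).2 hτt⟩ i p
      rwa [div_mul_cancel₀ _ h.ne'] at this
  have hopen : ∀ t, 0 ≤ t → t ∈ s → ∀ y, t < y → (s ∩ Set.Ioc t y).Nonempty := by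
    intro t ht hts y hy
    have str := himp t ht (hall t ht hts)
    have ev : ∀ᶠ τ in 𝓝 t, ∀ i, ∀ p ∈ Bx (t + 1 + R), |f i (τ, p)| < g i (τ, p) := by
      rw [eventually_all]
      intro i
      refine (Bx_compact _).eventually_forall_of_forall_eventually fun p _ => ?_
      exact (isOpen_lt (hf i).abs (hg i)).mem_nhds (str i p)
    obtain ⟨d, hd, hball⟩ := Metric.eventually_nhds_iff.1 ev
    refine ⟨min (t + min d 1 / 2) y, ?_, ?_, min_le_right _ _⟩
    · have hz : ∀ σ, 0 ≤ σ → σ ≤ t + min d 1 / 2 → ∀ i p, |f i (σ, p)| ≤ g i (σ, p) := by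
        intro σ hσ hσ2 i p
        rcases le_or_gt σ t with h | h
        · exact hall t ht hts σ hσ h i p
        · have hd1 : min d 1 ≤ d := min_le_left _ _
          have hd2 : min d 1 ≤ 1 := min_le_right _ _
          by_cases hp : p ∈ Bx (t + 1 + R)
          · refine (hball ?_ i p hp).le
            rw [Real.dist_eq, abs_lt]
            constructor <;> linarith
          · rw [hs i σ _ p hσ (by linarith) hp, abs_zero]; exact (hg0 i _).le
      have m0 : 0 < min d 1 := by positivity
      intro θ hθ i p
      have n0 : 0 ≤ min (t + min d 1 / 2) y := le_min (by linarith) (by linarith)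
      refine hz _ (mul_nonneg hθ.1 n0) ?_ i p
      exact (mul_le_of_le_one_left n0 hθ.2).trans (min_le_left _ _)
    · have : 0 < min d 1 := by positivity
      exact lt_min (by linarith) hy
  intro t ht
  have : t ∈ s := by
    refine (hclosed.inter isClosed_Icc).Icc_subset_of_forall_exists_gt (a := 0) (b := t) ?_ ?_
      ⟨ht, le_rfl⟩
    · intro θ _ i p
      rw [mul_zero]; exact h0 i p
    · exact fun x hx y hy => hopen x hx.2.1 hx.1 y hy
  exact hall t ht this t ht le_rfl

/-- All the estimates which follow from the bootstrap hypotheses. -/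
theorem boot_close (P : Par) : ∃ c0 C1 C2 C4 : ℝ, 0 < c0 ∧ 0 < C1 ∧ 0 < C2 ∧ 0 < C4 ∧
    ∀ M ε T u, Boot P M ε T u → M * ε ≤ c0 → ∀ t, 0 ≤ t → t ≤ T →
      I (Qs P u t) t ≤ C2 * ε ^ 2 ∧
      (∀ w : List (Fin 7), w.length + 4 ≤ P.N → ∀ a x y,
        |W w (u a) t x y| ≤ C4 * ε * (1 + t) ^ (2 * P.δ - 1 / 2)) ∧
      ∀ w ∈ words P.k, ∀ a b x y, |D b (W w (u a)) t x y| ≤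
        C1 * (ε + (M * ε) ^ 3) * (1 + t) ^ (-(1 / 2) : ℝ) * JS P.R t x y ^ (P.μ - 1)
          * ((1 + t) ^ P.η) ^ w.length := by
  obtain ⟨c0, C, hc0, hC, s1⟩ := step1 P
  obtain ⟨C2, hC2, s2⟩ := step2 P hC
  obtain ⟨C3, hC3, s3⟩ := step3 P hC hC2
  obtain ⟨Ca, hCa, s4a⟩ := step4a P hC3
  obtain ⟨C4, hC4, s4b⟩ := step4b P hCa
  obtain ⟨C5, hC5, s5⟩ := step5 P hCa hC4
  refine ⟨c0, C5, C, C4, hc0, hC5, hC, hC4, fun M ε T u h hs t ht hT => ?_⟩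
  have e1 := s1 M ε T u h hs
  have e2 := s2 M ε T u h e1
  have e3 := s3 M ε T u h e1 e2
  have e4a := s4a M ε T u h e3
  have e4b := s4b M ε T u h e4a
  exact ⟨e1 t ht hT, e4b t ht hT, s5 M ε T u h e4a e4b t ht hT⟩

/-- The bootstrap hypotheses hold globally for small data. -/
theorem boot_global (P : Par) : ∃ M ε₀ : ℝ, 0 < M ∧ 0 < ε₀ ∧ ∀ ε u, 0 < ε → ε < ε₀ → Sol P.R u →
    (∀ w ∈ words (P.N + 1), ∀ a x y, |W w (u a) 0 x y| ≤ P.K * ε) → ∀ T, Boot P M ε T u := by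
  obtain ⟨c0, C1, C2, C4, hc0, hC1, hC2, hC4, hcl⟩ := boot_close P
  have hR := P.hR
  have hK := P.hK
  have hη := P.hη
  -- `M` dominates the constant `2 C1` of `boot_close` and the size of the data
  set M := 4 * C1 + 2 * P.K * (2 * (P.R + 1)) + 1 with hM
  have MR : 0 < 2 * P.K * (2 * (P.R + 1)) := by positivity
  have M1 : 1 ≤ M := by linarith
  have M0 : 0 < M := by linarith
  refine ⟨M, min (c0 / M) (min (1 / M) (1 / M ^ 3)), M0, by positivity, fun ε u hε hε0 sol data => ?_⟩
  have s1 : M * ε ≤ c0 := by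
    have := hε0.le.trans (min_le_left _ _)
    rw [le_div_iff₀ M0] at this; linarith
  have s2 : M * ε ≤ 1 := by
    have := hε0.le.trans ((min_le_right _ _).trans (min_le_left _ _))
    rw [le_div_iff₀ M0] at this; linarith
  have s3 : M ^ 3 * ε ≤ 1 := by
    have := hε0.le.trans ((min_le_right _ _).trans (min_le_right _ _))
    rw [le_div_iff₀ (by positivity)] at this; linarith
  have s4 : (M * ε) ^ 3 ≤ ε := by
    have ε1 : ε ≤ 1 := by nlinarith
    calc (M * ε) ^ 3 = (M ^ 3 * ε) * ε * ε := by ring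
      _ ≤ 1 * 1 * ε := by gcongr
      _ = ε := by ring
  set f : (↥(words P.k) × Fin 2 × Fin 3) → ℝ × (ℝ × ℝ) → ℝ := fun i z =>
    D i.2.2 (W i.1.1 (u i.2.1)) z.1 z.2.1 z.2.2 with hf
  set g : (↥(words P.k) × Fin 2 × Fin 3) → ℝ × (ℝ × ℝ) → ℝ := fun i z =>
    M * ε * (1 + |z.1|) ^ (-(1 / 2) : ℝ) * JS P.R z.1 z.2.1 z.2.2 ^ (P.μ - 1)
      * ((1 + |z.1|) ^ P.η) ^ i.1.1.length with hg
  have Xp : ∀ t : ℝ, 0 < 1 + |t| := fun t => by positivity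
  have Jp := JS_pos P.R
  have hg0 : ∀ i z, 0 < g i z := fun i z => by
    have := Xp z.1
    have := Jp z.1 z.2.1 z.2.2
    simp only [hg]; positivity
  have hfc : ∀ i, Continuous (f i) := fun i => Sm.cont _
  have hgc : ∀ i, Continuous (g i) := fun i => by
    have c1 : Continuous fun z : ℝ × (ℝ × ℝ) => 1 + |z.1| := by fun_prop
    have c2 : Continuous fun z : ℝ × (ℝ × ℝ) => JS P.R z.1 z.2.1 z.2.2 := Sm.cont _
    exact ((continuous_const.mul (c1.rpow_const fun z => Or.inl (Xp z.1).ne')).mul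
      (c2.rpow_const fun z => Or.inl (Jp _ _ _).ne')).mul
      ((c1.rpow_const fun z => Or.inl (Xp z.1).ne').pow _)
  have csW : ∀ w a b, Cs P.R (D b (W w (u a))) := fun w a b => ((sol.cs a).W hR w).D hR b
  have mk : ∀ T, (∀ t, 0 ≤ t → t ≤ T → ∀ i p, |f i (t, p)| ≤ g i (t, p)) → Boot P M ε T u := by
    intro T H
    refine ⟨sol, hε, M0, s2, data, fun t ht hT w hw a b x y => ?_⟩
    have := H t ht hT (⟨w, hw⟩, a, b) (x, y)
    simpa only [hf, hg, abs_of_nonneg ht] using this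
  have key := cont_arg (R := P.R) hfc hgc hg0 ?_ ?_ ?_
  · exact fun T => mk T fun t ht _ => key t ht
  · intro i t A p ht hA hp
    exact (csW _ _ _).zero_off P.R0 ht hA hp
  · intro i p
    rcases le_or_gt ((0 + P.R) ^ 2) (p.1 ^ 2 + p.2 ^ 2) with hout | hin
    · have : f i (0, p) = 0 := csW _ _ _ 0 _ _ le_rfl hout
      rw [this, abs_zero]; exact (hg0 _ _).le
    · obtain ⟨q1, q2, q3, q4, q5, q6, q7⟩ := q_facts hR le_rfl hin
      have j1 := JS_ge_one P.R 0 p.1 p.2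
      have hl := mem_words.1 i.1.2
      have d := data (i.1.1 ++ [letter i.2.2])
        (mem_words.2 (by have : P.N = P.k + 6 := rfl; simp; omega)) i.2.1 p.1 p.2
      rw [W_append, W_cons, W_nil, ← D_eq_G] at d
      simp only [hf, hg, abs_zero, add_zero, Real.one_rpow, one_pow, mul_one]
      refine d.trans ?_
      have jl : 1 ≤ 2 * (P.R + 1) * JS P.R 0 p.1 p.2 ^ (P.μ - 1) := by
        have a1 : JS P.R 0 p.1 p.2 ≤ 2 * (P.R + 1) := by linarith
        have a2 : JS P.R 0 p.1 p.2 ^ (-1 : ℝ) ≤ JS P.R 0 p.1 p.2 ^ (P.μ - 1) :=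
          Real.rpow_le_rpow_of_exponent_le j1 (by
            have := P.δ_μ; have := P.δ_pos; linarith)
        rw [Real.rpow_neg_one] at a2
        calc 1 = JS P.R 0 p.1 p.2 * (JS P.R 0 p.1 p.2)⁻¹ := (mul_inv_cancel₀ (by linarith)).symm
          _ ≤ _ := by gcongr
      have jp : 0 < JS P.R 0 p.1 p.2 ^ (P.μ - 1) := Real.rpow_pos_of_pos (by linarith) _
      calc P.K * ε = P.K * ε * 1 := (mul_one _).symm
        _ ≤ P.K * ε * (2 * (P.R + 1) * JS P.R 0 p.1 p.2 ^ (P.μ - 1)) := by gcongr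
        _ = (P.K * (2 * (P.R + 1))) * ε * JS P.R 0 p.1 p.2 ^ (P.μ - 1) := by ring
        _ ≤ _ := by gcongr; linarith
  · intro T hT H i p
    have b := mk T H
    obtain ⟨-, -, b3⟩ := hcl M ε T u b s1 T hT le_rfl
    have b4 := b3 i.1.1 i.1.2 i.2.1 i.2.2 p.1 p.2
    refine b4.trans_lt ?_
    simp only [hg, abs_of_nonneg hT]
    have hX : 0 < 1 + T := by linarith
    have hJ := Jp T p.1 p.2
    have c : C1 * (ε + (M * ε) ^ 3) < M * ε := by nlinarith
    gcongr

end Ap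

namespace Ap
set_option linter.unusedVariables false

/-! ### Translation to the norms of the statement -/

theorem jb_ge_one (z : ℝ) : 1 ≤ jb z := by
  rw [jb]; exact Real.one_le_sqrt.2 (by nlinarith [sq_nonneg z])
theorem jb_le (z : ℝ) : jb z ≤ 1 + |z| := by
  rw [jb]
  refine Real.sqrt_le_iff.2 ⟨by positivity, ?_⟩
  nlinarith [abs_nonneg z, sq_abs z]

/-- Comparison of nonpositive powers of comparable quantities. -/
theorem rpow_cmp {z w c a : ℝ} (hz : 0 < z) (hw : 0 < w) (hc : 1 ≤ c) (h : z ≤ c * w) (ha : -1 ≤ a)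
    (ha0 : a ≤ 0) : w ^ a ≤ c * z ^ a := by
  have c0 : 0 < c := by linarith
  have h1 : (c * w) ^ a ≤ z ^ a := Real.rpow_le_rpow_of_nonpos hz h ha0
  rw [Real.mul_rpow c0.le hw.le] at h1
  have h2 : c ^ (-1 : ℝ) ≤ c ^ a := Real.rpow_le_rpow_of_exponent_le hc ha
  rw [Real.rpow_neg_one] at h2
  calc w ^ a = c * (c⁻¹ * w ^ a) := by rw [← mul_assoc, mul_inv_cancel₀ c0.ne', one_mul]
    _ ≤ c * (c ^ a * w ^ a) := by gcongr
    _ ≤ _ := by gcongr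

/-- In the light cone `⟨t + |x|⟩` is bounded by a multiple of `1 + t`. -/
theorem jb_plus {R t x y a : ℝ} (hR : 1 ≤ R) (ht : 0 ≤ t) (hr : x ^ 2 + y ^ 2 < (t + R) ^ 2)
    (ha : -1 ≤ a) (ha0 : a ≤ 0) : (1 + t) ^ a ≤ (R + 2) * jb (t + radius x y) ^ a := by
  obtain ⟨-, h1, -⟩ := q_facts hR ht hr
  have r0 := radius_nonneg x y
  refine rpow_cmp (by linarith [jb_ge_one (t + radius x y)]) (by linarith) (by linarith) ?_ ha ha0
  have := jb_le (t + radius x y)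
  rw [abs_of_nonneg (by linarith)] at this
  nlinarith

/-- In the light cone `⟨t - |x|⟩` is bounded by a multiple of `J`. -/
theorem jb_minus {R t x y a : ℝ} (hR : 1 ≤ R) (ht : 0 ≤ t) (hr : x ^ 2 + y ^ 2 < (t + R) ^ 2)
    (ha : -1 ≤ a) (ha0 : a ≤ 0) : JS R t x y ^ a ≤ (R + 2) * jb (t - radius x y) ^ a := by
  obtain ⟨h0, h1, h2, h3, h4, -⟩ := q_facts hR ht hr
  refine rpow_cmp (by linarith [jb_ge_one (t - radius x y)]) (JS_pos _ _ _ _) (by linarith) ?_ ha ha0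
  have := jb_le (t - radius x y)
  have h5 : |t - radius x y| ≤ JS R t x y + R := abs_le.2 ⟨by linarith, by linarith⟩
  nlinarith

/-- The estimates in terms of words of vector fields. -/
theorem estimates (P : Par) : ∃ ε₀ C : ℝ, 0 < ε₀ ∧ 0 < C ∧ ∀ ε u, 0 < ε → ε < ε₀ → Sol P.R u →
    (∀ w ∈ words (P.N + 1), ∀ a x y, |W w (u a) 0 x y| ≤ P.K * ε) → ∀ t, 0 ≤ t →
      (∀ w : List (Fin 7), w.length ≤ P.k → ∀ a x y,
        |W w (u a) t x y| ≤ C * ε * jb (t + radius x y) ^ (-(1 : ℝ) / 2 + P.μ)) ∧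
      (∀ a b x y, |D b (u a) t x y| ≤
        C * ε * jb (t + radius x y) ^ (-(1 : ℝ) / 2) * jb (t - radius x y) ^ (P.μ - 1)) ∧
      (∀ w : List (Fin 7), w.length ≤ P.k → ∀ a b x y, |D b (W w (u a)) t x y| ≤
        C * ε * jb (t + radius x y) ^ (-(1 : ℝ) / 2 + P.δ) * jb (t - radius x y) ^ (P.μ - 1)) ∧
      ∀ w : List (Fin 7), w.length ≤ P.k → ∀ a,
        I (e2 (W w (u a))) t ≤ C * ε ^ 2 * (1 + t) ^ (2 * P.δ) := by
  obtain ⟨M, ε₀, M0, hε₀, hB⟩ := boot_global P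
  obtain ⟨c0, C1, C2, C4, hc0, -, hC2, hC4, hcl⟩ := boot_close P
  have hR := P.hR
  have hδ := P.δ_pos
  have hδ1 := P.δ_one
  have hδμ := P.δ_μ
  have hμ1 := P.hμ1
  have c1 : 0 < M * (P.R + 2) ^ 2 := by positivity
  have c2 : 0 < C4 * (P.R + 2) := by positivity
  set C := M * (P.R + 2) ^ 2 + C2 + C4 * (P.R + 2) with hC
  have d1 : M * (P.R + 2) ^ 2 ≤ C := by linarith
  have d2 : C2 ≤ C := by linarith
  have d3 : C4 * (P.R + 2) ≤ C := by linarith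
  have C0 : 0 < C := by linarith
  refine ⟨min ε₀ (c0 / M), C, by positivity, C0, fun ε u hε hε0 sol data t ht => ?_⟩
  have B := hB ε u hε (hε0.trans_le (min_le_left _ _)) sol data t
  have s1 : M * ε ≤ c0 := by
    have := hε0.le.trans (min_le_right _ _)
    rw [le_div_iff₀ M0] at this; linarith
  obtain ⟨e1, e2, -⟩ := hcl M ε t u B s1 t ht le_rfl
  have X1 : 1 ≤ 1 + t := by linarith
  have X0 : 0 < 1 + t := by linarith
  have jp : ∀ x y a, 0 < jb (t + radius x y) ^ (a : ℝ) := fun x y a =>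
    Real.rpow_pos_of_pos (by linarith [jb_ge_one (t + radius x y)]) _
  have jm : ∀ x y a, 0 < jb (t - radius x y) ^ (a : ℝ) := fun x y a =>
    Real.rpow_pos_of_pos (by linarith [jb_ge_one (t - radius x y)]) _
  -- a word `w` costs the power `s` of `1 + t`
  have key : ∀ (w : List (Fin 7)) (s : ℝ), w.length ≤ P.k → 0 ≤ s → s ≤ P.δ →
      ((1 + t) ^ P.η) ^ w.length ≤ (1 + t) ^ s → ∀ a b x y, |D b (W w (u a)) t x y| ≤
        C * ε * jb (t + radius x y) ^ (-(1 : ℝ) / 2 + s) * jb (t - radius x y) ^ (P.μ - 1) := by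
    intro w s hw hs0 hs hβ a b x y
    have p1 := jp x y (-(1 : ℝ) / 2 + s)
    have p2 := jm x y (P.μ - 1)
    rcases lt_or_ge (x ^ 2 + y ^ 2) ((t + P.R) ^ 2) with hr | hr
    · have b1 := B.boot t ht le_rfl w (mem_words.2 hw) a b x y
      have b2 := jb_plus (a := -(1 : ℝ) / 2 + s) hR ht hr (by linarith) (by linarith)
      have b3 := jb_minus (a := P.μ - 1) hR ht hr (by linarith) (by linarith)
      have p3 : 0 < JS P.R t x y ^ (P.μ - 1) := Real.rpow_pos_of_pos (JS_pos _ _ _ _) _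
      calc |D b (W w (u a)) t x y|
          ≤ M * ε * (1 + t) ^ (-(1 / 2) : ℝ) * JS P.R t x y ^ (P.μ - 1) * (1 + t) ^ s :=
            b1.trans (by gcongr)
        _ = M * ε * (1 + t) ^ (-(1 : ℝ) / 2 + s) * JS P.R t x y ^ (P.μ - 1) := by
            rw [Real.rpow_add X0, show (-(1 : ℝ) / 2) = -(1 / 2) by ring]; ring
        _ ≤ M * ε * ((P.R + 2) * jb (t + radius x y) ^ (-(1 : ℝ) / 2 + s))
              * ((P.R + 2) * jb (t - radius x y) ^ (P.μ - 1)) := by gcongr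
        _ = M * (P.R + 2) ^ 2 * ε * jb (t + radius x y) ^ (-(1 : ℝ) / 2 + s)
              * jb (t - radius x y) ^ (P.μ - 1) := by ring
        _ ≤ _ := by gcongr
    · rw [(B.csW w a).D hR b t x y ht hr, abs_zero]; positivity
  refine ⟨fun w hw a x y => ?_, fun a b x y => ?_, fun w hw => ?_, fun w hw a => ?_⟩
  · have p1 := jp x y (-(1 : ℝ) / 2 + P.μ)
    rcases lt_or_ge (x ^ 2 + y ^ 2) ((t + P.R) ^ 2) with hr | hr
    · have b2 := jb_plus (a := -(1 : ℝ) / 2 + P.μ) hR ht hr (by linarith) (by linarith)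
      calc |W w (u a) t x y| ≤ C4 * ε * (1 + t) ^ (2 * P.δ - 1 / 2) :=
            e2 w (by have : P.N = P.k + 6 := rfl; omega) a x y
        _ ≤ C4 * ε * (1 + t) ^ (-(1 : ℝ) / 2 + P.μ) := by
            gcongr ?_ * ?_
            exact Real.rpow_le_rpow_of_exponent_le X1 (by linarith)
        _ ≤ C4 * ε * ((P.R + 2) * jb (t + radius x y) ^ (-(1 : ℝ) / 2 + P.μ)) := by gcongr
        _ = C4 * (P.R + 2) * ε * jb (t + radius x y) ^ (-(1 : ℝ) / 2 + P.μ) := by ring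
        _ ≤ _ := by gcongr
    · rw [B.csW w a t x y ht hr, abs_zero]; positivity
  · simpa using key [] 0 (by simp) le_rfl hδ.le (by simp) a b x y
  · exact key w P.δ hw hδ.le le_rfl (beta_le ht (by have : P.N = P.k + 6 := rfl; omega))
  · refine (B.Ie2 ht e1 (by have : P.N = P.k + 6 := rfl; omega) a).trans ?_
    gcongr

/-- The cardinality counts the multi-indices over which `ptwiseNorm` sums. -/
theorem ptwise_le {s : ℕ} {us : List (ℝ → ℝ → ℝ → ℝ)} {t x y B : ℝ} (hB : 0 ≤ B)
    (h : ∀ v ∈ us, ∀ α : Fin 7 → ℕ, ∑ i, α i ≤ s → |GamMulti α v t x y| ≤ B) :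
    ptwiseNorm s us t x y ≤ Fintype.card (Fin 7 → Fin (s + 1)) * (us.length * B) := by
  rw [ptwiseNorm, ← nsmul_eq_mul]
  refine Finset.sum_le_card_nsmul _ _ _ fun α _ => ?_
  split_ifs with hα
  · refine Real.sqrt_le_iff.2 ⟨by positivity, ?_⟩
    have := List.sum_le_card_nsmul (us.map fun v => (GamMulti (fun i => (α i : ℕ)) v t x y) ^ 2)
      (B ^ 2) (by
        intro z hz
        obtain ⟨v, hv, rfl⟩ := List.mem_map.1 hz
        exact sq_le_sq' (abs_le.1 (h v hv _ hα)).1 (abs_le.1 (h v hv _ hα)).2)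
    refine this.trans ?_
    rw [List.length_map, nsmul_eq_mul, mul_pow]
    gcongr
    exact_mod_cast Nat.le_self_pow two_ne_zero _
  · positivity

/-- The Sobolev norm is controlled through any integrable majorant of the squared derivatives. -/
theorem sob_le {s : ℕ} {us : List (ℝ → ℝ → ℝ → ℝ)} {t B : ℝ} (hB : 0 ≤ B) {F : ℝ × ℝ → ℝ}
    (hF : Integrable F) (hFB : ∫ x, F x ≤ B ^ 2)
    (h : ∀ v ∈ us, ∀ α : Fin 7 → ℕ, ∑ i, α i ≤ s → ∀ x : ℝ × ℝ, GamMulti α v t x.1 x.2 ^ 2 ≤ F x) :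
    sobNorm s us t ≤ Fintype.card (Fin 7 → Fin (s + 1)) * (us.length * B) := by
  rw [sobNorm, ← nsmul_eq_mul]
  refine Finset.sum_le_card_nsmul _ _ _ fun α _ => ?_
  split_ifs with hα
  · refine Real.sqrt_le_iff.2 ⟨by positivity, ?_⟩
    have h1 : ∫ x : ℝ × ℝ, (us.map fun v => (GamMulti (fun i => (α i : ℕ)) v t x.1 x.2) ^ 2).sum
        ≤ ∫ x, us.length * F x := by
      refine integral_mono_of_nonneg (Eventually.of_forall fun x => ?_) (hF.const_mul _)
        (Eventually.of_forall fun x => ?_)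
      · refine List.sum_nonneg fun z hz => ?_
        obtain ⟨v, hv, rfl⟩ := List.mem_map.1 hz
        exact sq_nonneg _
      · have := List.sum_le_card_nsmul
          (us.map fun v => (GamMulti (fun i => (α i : ℕ)) v t x.1 x.2) ^ 2) (F x) (by
            intro z hz
            obtain ⟨v, hv, rfl⟩ := List.mem_map.1 hz
            exact h v hv _ hα x)
        simpa only [List.length_map, nsmul_eq_mul] using this
    refine h1.trans ?_
    rw [integral_const_mul, mul_pow]
    calc (us.length : ℝ) * ∫ x, F x ≤ us.length * B ^ 2 := by gcongr
      _ ≤ _ := by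
        gcongr
        exact_mod_cast Nat.le_self_pow two_ne_zero _
  · positivity

/-- Square integrable majorant of the derivatives `Γ^α∂u` with `|α| ≤ k`. -/
def Maj (k : ℕ) (u : Fin 2 → Sm) : Sm :=
  (4 : ℝ) ^ k • ∑ p ∈ words k ×ˢ (Finset.univ : Finset (Fin 2)), e2 (W p.1 (u p.2))

theorem Maj_ap (k : ℕ) (u : Fin 2 → Sm) (t x y : ℝ) : Maj k u t x y = (4 : ℝ) ^ k *
    ∑ p ∈ words k ×ˢ (Finset.univ : Finset (Fin 2)), e2 (W p.1 (u p.2)) t x y := by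
  rw [Maj, Sm.smul_ap, Sm.sum_ap]

/-- `Maj` bounds `Γ^w ∂u` and not only `∂Γ^w u`; the commutators account for the factor `4^k`. -/
theorem le_Maj {k : ℕ} {u : Fin 2 → Sm} {w : List (Fin 7)} (hw : w.length ≤ k) (a : Fin 2)
    (b : Fin 3) (t x y : ℝ) : W w (D b (u a)) t x y ^ 2 ≤ Maj k u t x y := by
  rw [Maj_ap]
  obtain ⟨f, hf⟩ : ∃ f : List (Fin 7) × Fin 2 → ℝ, f = fun p => e2 (W p.1 (u p.2)) t x y :=
    ⟨_, rfl⟩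
  have f0 : ∀ p, 0 ≤ f p := fun p => by rw [hf]; exact e2_nonneg _ _ _ _
  have S0 : 0 ≤ ∑ p ∈ words k ×ˢ (Finset.univ : Finset (Fin 2)), f p :=
    Finset.sum_nonneg fun p _ => f0 p
  have hD : ∀ c b', D b' (W c (u a)) t x y ^ 2 ≤ f (c, a) := fun c b' => by
    rw [hf]; exact D_sq_le_e2 _ b' t x y
  rw [← hf]
  have h := W_D k w hw b (u a) t x y √(∑ p ∈ words k ×ˢ (Finset.univ : Finset (Fin 2)), f p) (by
    intro c b' hc
    refine Real.abs_le_sqrt ((hD c b').trans ?_)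
    exact Finset.single_le_sum (fun p _ => f0 p)
      (Finset.mem_product.2 ⟨mem_words.2 hc, Finset.mem_univ a⟩))
  have h2 := pow_le_pow_left₀ (abs_nonneg _) h 2
  rw [sq_abs, mul_pow, Real.sq_sqrt S0, ← pow_mul, mul_comm k 2, pow_mul] at h2
  norm_num at h2
  exact h2

end Ap

/-- a priori estimates: pointwise and `L²` decay bounds for the
small amplitude solution. -/
theorem apriori_estimates (f1 f2 g1 g2 : ℝ → ℝ → ℝ)
    (hf1 : SmoothCompact2 f1) (hf2 : SmoothCompact2 f2)
    (hg1 : SmoothCompact2 g1) (hg2 : SmoothCompact2 g2)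
    (k : ℕ) (hk : 4 ≤ k) (μ ν : ℝ) (hμ0 : 0 < μ) (hμ1 : μ < 1 / 10)
    (hν0 : 0 < ν) (hν1 : ((8 * k + 7 : ℕ) : ℝ) * ν < μ) :
    ∃ ε₀ C : ℝ, 0 < ε₀ ∧ 0 < C ∧ ∀ ε : ℝ, 0 < ε → ε < ε₀ →
      ∀ u1 u2 : ℝ → ℝ → ℝ → ℝ, IsSolution ε f1 f2 g1 g2 u1 u2 →
        (∀ t x1 x2 : ℝ, 0 ≤ t →
          ptwiseNorm (k + 1) [u1, u2] t x1 x2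
            ≤ C * ε * jb (t + radius x1 x2) ^ (-(1 : ℝ) / 2 + μ)) ∧
        (∀ t x1 x2 : ℝ, 0 ≤ t →
          ptwiseNorm 0 (dList u1 u2) t x1 x2
            ≤ C * ε * jb (t + radius x1 x2) ^ (-(1 : ℝ) / 2)
              * jb (t - radius x1 x2) ^ (μ - 1)) ∧
        (∀ t x1 x2 : ℝ, 0 ≤ t →
          ptwiseNorm k (dList u1 u2) t x1 x2
            ≤ C * ε * jb (t + radius x1 x2) ^ (-(1 : ℝ) / 2 + ν)
              * jb (t - radius x1 x2) ^ (μ - 1)) ∧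
        (∀ t : ℝ, 0 ≤ t →
          sobNorm k (dList u1 u2) t ≤ C * ε * (1 + t) ^ (μ - ν)) := by
  -- the loss per vector field is chosen so that all of them together cost the exponent `ν`
  obtain ⟨R, K, hR, hK, hdata⟩ := Ap.exists_data ![f1, f2] ![g1, g2]
    (Fin.forall_fin_two.2 ⟨hf1, hf2⟩) (Fin.forall_fin_two.2 ⟨hg1, hg2⟩) (k + 8)
  have hk0 : (0 : ℝ) < k + 8 := by positivity
  have h4k : (4 : ℝ) ≤ k := by exact_mod_cast hk
  have hνμ : 4 * ν ≤ μ := by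
    push_cast at hν1
    nlinarith
  have hδ' : ((k + 1 : ℕ) + 7 : ℝ) * (ν / (k + 8)) = ν := by
    push_cast
    field_simp
    ring
  let P : Ap.Par := ⟨R, k + 1, ν / (k + 8), μ, K, hR, by omega, by positivity,
    by rw [hδ']; exact hνμ, hμ1, hK⟩
  have hδ : P.δ = ν := hδ'
  obtain ⟨ε₀, C, hε₀, hC, hest⟩ := Ap.estimates P
  obtain ⟨A, hA⟩ : ∃ A : ℝ, A = ∑ p ∈ Ap.words k ×ˢ (Finset.univ : Finset (Fin 2)), C := ⟨_, rfl⟩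
  have hA0 : 0 ≤ A := hA ▸ Finset.sum_nonneg fun _ _ => hC.le
  -- a common constant; `c m` counts the multi-indices of order at most `m`
  obtain ⟨c, hc⟩ : ∃ c : ℕ → ℝ, c = fun m => (Fintype.card (Fin 7 → Fin (m + 1)) : ℝ) := ⟨_, rfl⟩
  have c0 : ∀ m, 0 ≤ c m := fun m => by rw [hc]; positivity
  have hcm : ∀ m, (Fintype.card (Fin 7 → Fin (m + 1)) : ℝ) = c m := fun m => by rw [hc]
  have k1 : 0 ≤ c (k + 1) * (2 * C) := by have := c0 (k + 1); positivity
  have k2 : 0 ≤ c 0 * (6 * C) := by have := c0 0; positivity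
  have k3 : 0 ≤ c k * (6 * (2 ^ k * C)) := by have := c0 k; positivity
  have k4 : 0 ≤ c k * (6 * √(4 ^ k * A)) := by have := c0 k; positivity
  refine ⟨min ε₀ 1, 1 + c (k + 1) * (2 * C) + c 0 * (6 * C) + c k * (6 * (2 ^ k * C))
    + c k * (6 * √(4 ^ k * A)), by positivity, by positivity, fun ε hε hε1 u1 u2 hu => ?_⟩
  obtain ⟨u, hu0, hu1⟩ : ∃ u : Fin 2 → Ap.Sm, (u 0).1 = u1 ∧ (u 1).1 = u2 :=
    ⟨![⟨u1, hu.smooth1⟩, ⟨u2, hu.smooth2⟩], rfl, rfl⟩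
  subst hu0 hu1
  obtain ⟨sol, data⟩ := hdata ε u hε (hε1.le.trans (min_le_right _ _))
    (Fin.forall_fin_two.2 ⟨hu.pde1, hu.pde2⟩) (Fin.forall_fin_two.2 ⟨hu.init1, hu.init2⟩)
    (Fin.forall_fin_two.2 ⟨hu.initd1, hu.initd2⟩)
  have est := hest ε u hε (hε1.trans_le (min_le_left _ _)) sol data
  have mem2 : ∀ v ∈ [(u 0).1, (u 1).1], ∃ a, v = (u a).1 := by
    intro v hv
    simp only [List.mem_cons, List.not_mem_nil, or_false] at hv
    rcases hv with rfl | rfl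
    exacts [⟨0, rfl⟩, ⟨1, rfl⟩]
  have mem6 : ∀ v ∈ dList (u 0).1 (u 1).1, ∃ a b, v = (Ap.D b (u a)).1 := by
    intro v hv
    simp only [dList, List.mem_cons, List.not_mem_nil, or_false] at hv
    rcases hv with rfl | rfl | rfl | rfl | rfl | rfl
    exacts [⟨0, 0, rfl⟩, ⟨0, 1, rfl⟩, ⟨0, 2, rfl⟩, ⟨1, 0, rfl⟩, ⟨1, 1, rfl⟩, ⟨1, 2, rfl⟩]
  have jp : ∀ z a : ℝ, 0 < jb z ^ a := fun z a =>
    Real.rpow_pos_of_pos (by linarith [Ap.jb_ge_one z]) _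
  refine ⟨fun t x y ht => ?_, fun t x y ht => ?_, fun t x y ht => ?_, fun t ht => ?_⟩
  · have p1 := jp (t + radius x y) (-(1 : ℝ) / 2 + μ)
    refine (Ap.ptwise_le (B := C * ε * jb (t + radius x y) ^ (-(1 : ℝ) / 2 + μ))
      (by positivity) fun v hv α hα => ?_).trans ?_
    · obtain ⟨a, rfl⟩ := mem2 v hv
      obtain ⟨w, hw, e⟩ := Ap.GamMulti_eq α
      rw [e]
      exact (est t ht).1 w (by change w.length ≤ k + 1; omega) a x y
    · rw [hcm]
      calc _ = c (k + 1) * (2 * C) * ε * jb (t + radius x y) ^ (-(1 : ℝ) / 2 + μ) := by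
            norm_num; ring
        _ ≤ _ := by gcongr; linarith
  · have p1 := jp (t + radius x y) (-(1 : ℝ) / 2)
    have p2 := jp (t - radius x y) (μ - 1)
    refine (Ap.ptwise_le (B := C * ε * jb (t + radius x y) ^ (-(1 : ℝ) / 2)
      * jb (t - radius x y) ^ (μ - 1)) (by positivity) fun v hv α hα => ?_).trans ?_
    · obtain ⟨a, b, rfl⟩ := mem6 v hv
      obtain ⟨w, hw, e⟩ := Ap.GamMulti_eq α
      rw [e, List.length_eq_zero_iff.1 (by omega : w.length = 0)]
      exact (est t ht).2.1 a b x y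
    · rw [hcm]
      calc _ = c 0 * (6 * C) * ε * jb (t + radius x y) ^ (-(1 : ℝ) / 2)
            * jb (t - radius x y) ^ (μ - 1) := by
            norm_num [dList]; ring
        _ ≤ _ := by gcongr; linarith
  · have p1 := jp (t + radius x y) (-(1 : ℝ) / 2 + ν)
    have p2 := jp (t - radius x y) (μ - 1)
    refine (Ap.ptwise_le (B := 2 ^ k * (C * ε * jb (t + radius x y) ^ (-(1 : ℝ) / 2 + ν)
      * jb (t - radius x y) ^ (μ - 1))) (by positivity) fun v hv α hα => ?_).trans ?_
    · obtain ⟨a, b, rfl⟩ := mem6 v hv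
      obtain ⟨w, hw, e⟩ := Ap.GamMulti_eq α
      rw [e]
      refine Ap.W_D k w (by omega) b (u a) t x y _ fun w' b' hw' => ?_
      have := (est t ht).2.2.1 w' (by change w'.length ≤ k + 1; omega) a b' x y
      rw [hδ] at this
      exact this
    · rw [hcm]
      calc _ = c k * (6 * (2 ^ k * C)) * ε * jb (t + radius x y) ^ (-(1 : ℝ) / 2 + ν)
            * jb (t - radius x y) ^ (μ - 1) := by
            norm_num [dList]; ring
        _ ≤ _ := by gcongr; linarith
  · have X1 : 1 ≤ 1 + t := by linarith
    have R0 : 0 ≤ R := by linarith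
    have cse : ∀ p ∈ Ap.words k ×ˢ (Finset.univ : Finset (Fin 2)),
        Ap.Cs R (Ap.e2 (Ap.W p.1 (u p.2))) := fun p _ => ((sol.cs p.2).W hR p.1).e2 hR
    have csM : Ap.Cs R (Ap.Maj k u) := (Ap.Cs.sum cse).smul _
    have IM : Ap.I (Ap.Maj k u) t ≤ (√(4 ^ k * A) * ε * (1 + t) ^ ν) ^ 2 := by
      rw [Ap.Maj, Ap.I_smul, Ap.I_sum cse R0 ht, mul_pow, mul_pow, Real.sq_sqrt (by positivity)]
      have : ∑ p ∈ Ap.words k ×ˢ (Finset.univ : Finset (Fin 2)), Ap.I (Ap.e2 (Ap.W p.1 (u p.2))) t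
          ≤ A * (ε ^ 2 * (1 + t) ^ (2 * ν)) := by
        rw [hA, Finset.sum_mul]
        refine Finset.sum_le_sum fun p hp => ?_
        have hw : p.1.length ≤ k := Ap.mem_words.1 (Finset.mem_product.1 hp).1
        have := (est t ht).2.2.2 p.1 (by change p.1.length ≤ k + 1; omega) p.2
        rw [hδ] at this
        exact this.trans_eq (by ring)
      have e : ((1 + t) ^ ν) ^ 2 = (1 + t) ^ (2 * ν) := by
        rw [← Real.rpow_natCast, ← Real.rpow_mul (by linarith)]; norm_num; ring_nf
      rw [e]
      calc _ ≤ 4 ^ k * (A * (ε ^ 2 * (1 + t) ^ (2 * ν))) := by gcongr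
        _ = _ := by ring
    refine (Ap.sob_le (B := √(4 ^ k * A) * ε * (1 + t) ^ ν) (by positivity)
      (csM.integrable R0 ht) IM fun v hv α hα x => ?_).trans ?_
    · obtain ⟨a, b, rfl⟩ := mem6 v hv
      obtain ⟨w, hw, e⟩ := Ap.GamMulti_eq α
      rw [e]
      exact Ap.le_Maj (by omega) a b t x.1 x.2
    · rw [hcm]
      calc _ = c k * (6 * √(4 ^ k * A)) * ε * (1 + t) ^ ν := by
            norm_num [dList]; ring
        _ ≤ _ := by
            gcongr
            · linarith
            · linarith

end
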